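/- Let N ≥ 20 and let C = {x_1,…,x_M} ⊂ SO(3) satisfy min_{x_i ≠ x_j} ω(x_j⁻¹x_i) ≥ 36/(N+1). Take s = 8 in the construction of σ_N, let u ∈ {−1,1}^M, and let q(x) = Σ_{j=1}^M (α_{j,0}σ_N(x,x_j) + Σ_{k=1}^3 α_{j,k} X_k^y σ_N(x,x_j)) where α = (α_0,α_1,α_2,α_3) solves Kα = (u,0,0,0)ᵀ. Then |q(x)| < 1 for every x ∈ SO(3) such that ω(x_m⁻¹x) ≥ π/(2(N+1)) for all x_m ∈ C. -/

import Mathlib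

noncomputable section

abbrev Mat3 := Matrix (Fin 3) (Fin 3) ℝ

/-- membership in SO(3) -/
def IsSO3 (x : Mat3) : Prop := x.transpose * x = 1 ∧ x.det = 1

/-- rotation angle -/
def rotAngle (x : Mat3) : ℝ := Real.arccos ((Matrix.trace x - 1) / 2)

/-- generators of so(3) -/
def Lgen : Fin 3 → Mat3 :=
  ![!![0, 0, 0; 0, 0, -1; 0, 1, 0],
    !![0, 0, 1; 0, 0, 0; -1, 0, 0],
    !![0, -1, 0; 1, 0, 0; 0, 0, 0]]

/-- derivative in the first variable along generator `i` -/
def Xx (i : Fin 3) (f : Mat3 → Mat3 → ℝ) : Mat3 → Mat3 → ℝ :=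
  fun x y => deriv (fun t : ℝ => f (x * NormedSpace.exp (t • Lgen i)) y) 0

/-- derivative in the second variable along generator `i` -/
def Xy (i : Fin 3) (f : Mat3 → Mat3 → ℝ) : Mat3 → Mat3 → ℝ :=
  fun x y => deriv (fun t : ℝ => f x (y * NormedSpace.exp (t • Lgen i))) 0

/-- iterated integrals of the sign of the Chebyshev polynomial: the perfect B-spline chain -/
def fspline (s : ℕ) : ℕ → ℝ → ℝ
  | 0 => fun x => (-1 : ℝ) ^ (s - 1) * Real.sign ((Polynomial.Chebyshev.U ℝ ((s : ℤ) - 1)).eval x)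
  | (k + 1) => fun x => ∫ t in (-1 : ℝ)..x, fspline s k t

/-- the scaled perfect B-spline g̃_{s-1} -/
def gtilde (s : ℕ) (x : ℝ) : ℝ := fspline s (s - 1) (2 * x)

/-- discrete norm ‖g̃‖_{1,N} -/
def gnorm (s N : ℕ) : ℝ :=
  ∑ k ∈ Finset.Icc (-(N : ℤ)) (N : ℤ), gtilde s ((k : ℝ) / (2 * ((N : ℝ) + 1)))

/-- the trigonometric kernel σ̃_N (real-valued) -/
def sigmaT (s N : ℕ) (t : ℝ) : ℝ :=
  ((1 / (gnorm s N : ℂ)) *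
      ∑ k ∈ Finset.Icc (-(N : ℤ)) (N : ℤ),
        (gtilde s ((k : ℝ) / (2 * ((N : ℝ) + 1))) : ℂ) * Complex.exp ((k : ℂ) * t * Complex.I)).re

/-- the zonal kernel σ_N on SO(3) -/
def sigmaK (s N : ℕ) (x y : Mat3) : ℝ := sigmaT s N (rotAngle (y⁻¹ * x))

/-- rotation axis components -/
def axisComp : Fin 3 → Mat3 → ℝ :=
  ![fun x => (x 2 1 - x 1 2) / (2 * Real.sin (rotAngle x)),
    fun x => (x 0 2 - x 2 0) / (2 * Real.sin (rotAngle x)),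
    fun x => (x 1 0 - x 0 1) / (2 * Real.sin (rotAngle x))]

/-- Levi-Civita symbol on `Fin 3` -/
def eps3 (a b c : Fin 3) : ℝ :=
  if (a, b, c) = (0, 1, 2) ∨ (a, b, c) = (1, 2, 0) ∨ (a, b, c) = (2, 0, 1) then 1
  else if (a, b, c) = (2, 1, 0) ∨ (a, b, c) = (1, 0, 2) ∨ (a, b, c) = (0, 2, 1) then -1
  else 0

/-- constants c_{l,s} -/
def cConst : ℕ → ℕ → ℝ
  | 0, s => 1.02 * (Nat.factorial (s - 1)) * 2 ^ s * s
  | 1, s => 1.02 * (Nat.factorial (s - 1)) * 2 ^ s * (2 * s)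
  | 2, s => 1.02 * (Nat.factorial (s - 1)) * 2 ^ s * (4 * s + 1)
  | _, s => 1.02 * (Nat.factorial (s - 1)) * 2 ^ s * (9 * s - 2)

/-- ζ(m) for natural m -/
def zetaNat (m : ℕ) : ℝ := ∑' n : ℕ, (1 : ℝ) / ((n : ℝ) + 1) ^ m

/-- constants C_{i,s} = 124 c_{i,s} ζ(s-2) -/
def CConst (i s : ℕ) : ℝ := 124 * cConst i s * zetaNat (s - 2)

end

open scoped Real

/-- block selector: 0 ↦ kernel, p ↦ derivative along generator p−1 -/
def toOp : Fin 4 → Option (Fin 3) := ![none, some 0, some 1, some 2]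

/-- the (p,q) block kernel of the interpolation matrix -/
noncomputable def Kblock (s N : ℕ) (p q : Fin 4) : Mat3 → Mat3 → ℝ :=
  match toOp p, toOp q with
  | none, none => sigmaK s N
  | none, some j => Xx j (sigmaK s N)
  | some i, none => Xy i (sigmaK s N)
  | some i, some j => Xx j (Xy i (sigmaK s N))

/-- the 4M × 4M interpolation matrix K -/
noncomputable def Kmat (s N : ℕ) {M : ℕ} (x : Fin M → Mat3) :
    Matrix (Fin 4 × Fin M) (Fin 4 × Fin M) ℝ :=
  Matrix.of fun pa qb => Kblock s N pa.1 qb.1 (x pa.2) (x qb.2)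

/-- right-hand side (u,0,0,0)ᵀ -/
def rhsVec {M : ℕ} (u : Fin M → ℝ) : Fin 4 × Fin M → ℝ :=
  fun pa => if pa.1 = 0 then u pa.2 else 0

/-!
The Fourier coefficients of the kernel sample a perfect B-spline of degree 7, whose seventh
derivative is piecewise constant. The eighth forward differences of the samples, also after
multiplication by `x` or `x ^ 2`, are therefore absolutely small in total, and summation by parts
shows that the kernel and its first two derivatives decay like `(2 (N + 1) |sin (t / 2)|) ^ (-8)`.
Near `0` the kernel is governed by its second and fourth moments, which are integrals of the spline
up to a quadrature error.

The two unit quaternions of a rotation are points of the sphere in `ℝ⁴`, where separated points have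
disjoint balls around them. Comparing volumes bounds the number of nodes within any given distance,
and hence the sum of the decaying kernel over all nodes but the nearest. It follows that `K` is,
after scaling, diagonally dominant, so that the coefficients are close to `(u, 0, 0, 0)`. Up to a
small remainder the certificate is then the term of the nearest node, whose absolute value is
bounded away from `1` by the moment expansion or by the decay.
-/

namespace DualCertificate

/-! ### Truncated power splines -/

/-- The normalised truncated power `u₊ᵏ / k!`, right-continuous for `k = 0`; with this
normalisation `truncPow k` is the derivative of `truncPow (k + 1)`. -/
noncomputable def truncPow (k : ℕ) (u : ℝ) : ℝ := if 0 ≤ u then u ^ k / k.factorial else 0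

section TruncPow

variable {u : ℝ}

lemma truncPow_of_nonneg (k : ℕ) (hu : 0 ≤ u) : truncPow k u = u ^ k / k.factorial := if_pos hu

lemma truncPow_of_neg (k : ℕ) (hu : u < 0) : truncPow k u = 0 := if_neg hu.not_ge

lemma truncPow_succ_of_nonpos (k : ℕ) (hu : u ≤ 0) : truncPow (k + 1) u = 0 := by
  rcases hu.lt_or_eq with h | rfl
  · exact truncPow_of_neg _ h
  · simp [truncPow]

lemma mul_truncPow (k : ℕ) (u : ℝ) : u * truncPow k u = (k + 1) * truncPow (k + 1) u := by
  rcases lt_or_ge u 0 with h | h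
  · simp only [truncPow_of_neg _ h, mul_zero]
  · rw [truncPow_of_nonneg _ h, truncPow_of_nonneg _ h, Nat.factorial_succ]
    push_cast
    field_simp
    ring

lemma monotone_truncPow_zero : Monotone (truncPow 0) := by
  intro u v huv
  unfold truncPow
  split_ifs <;> first | positivity | linarith

lemma continuous_truncPow_succ (k : ℕ) : Continuous (truncPow (k + 1)) := by
  have hmax : truncPow (k + 1) = fun u : ℝ => max u 0 ^ (k + 1) / (k + 1).factorial := by
    ext u
    rcases le_total 0 u with h | h
    · rw [truncPow_of_nonneg _ h, max_eq_left h]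
    · simp [truncPow_succ_of_nonpos _ h, max_eq_right h]
  rw [hmax]
  fun_prop

lemma hasDerivAt_truncPow_of_ne_zero (k : ℕ) (hu : u ≠ 0) :
    HasDerivAt (truncPow (k + 1)) (truncPow k u) u := by
  rcases hu.lt_or_gt with h | h
  · rw [truncPow_of_neg _ h]
    refine (hasDerivAt_const u (0 : ℝ)).congr_of_eventuallyEq ?_
    filter_upwards [Iio_mem_nhds h] with v hv using truncPow_of_neg _ hv
  · have hpow : HasDerivAt (fun v : ℝ => v ^ (k + 1) / (k + 1).factorial) (truncPow k u) u := by
      refine ((hasDerivAt_pow (k + 1) u).div_const _).congr_deriv ?_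
      rw [truncPow_of_nonneg _ h.le, Nat.factorial_succ]
      push_cast
      field_simp
    refine hpow.congr_of_eventuallyEq ?_
    filter_upwards [Ioi_mem_nhds h] with v hv using truncPow_of_nonneg _ (le_of_lt hv)

lemma intervalIntegrable_truncPow (k : ℕ) (a b : ℝ) :
    IntervalIntegrable (truncPow k) MeasureTheory.volume a b := by
  cases k with
  | zero => exact monotone_truncPow_zero.intervalIntegrable
  | succ k => exact (continuous_truncPow_succ k).intervalIntegrable a b

lemma intervalIntegrable_truncPow_sub (k : ℕ) (y a b : ℝ) :
    IntervalIntegrable (fun x => truncPow k (x - y)) MeasureTheory.volume a b := by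
  simpa using (intervalIntegrable_truncPow k (a - y) (b - y)).comp_sub_right y

lemma integral_truncPow (k : ℕ) (a b : ℝ) :
    ∫ u in a..b, truncPow k u = truncPow (k + 1) b - truncPow (k + 1) a :=
  MeasureTheory.integral_eq_of_hasDerivAt_off_countable _ _ (Set.countable_singleton (0 : ℝ))
    (continuous_truncPow_succ k).continuousOn
    (fun _ hu => hasDerivAt_truncPow_of_ne_zero k hu.2) (intervalIntegrable_truncPow k a b)

lemma hasDerivAt_truncPow_succ (k : ℕ) (u : ℝ) :
    HasDerivAt (truncPow (k + 2)) (truncPow (k + 1) u) u := by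
  have hint : truncPow (k + 2) =
      fun x => truncPow (k + 2) 0 + ∫ v in (0 : ℝ)..x, truncPow (k + 1) v := by
    ext x
    rw [integral_truncPow]
    ring
  rw [hint]
  have hc := continuous_truncPow_succ k
  exact (intervalIntegral.integral_hasDerivAt_right (hc.intervalIntegrable 0 u)
    (hc.stronglyMeasurableAtFilter _ _) hc.continuousAt).const_add _

end TruncPow

/-- The spline `∑ⱼ cⱼ (x - tⱼ)₊ᵏ / k!` of degree `k` with knots `tⱼ`, whose `k`-th derivative jumps
by `cⱼ` at `tⱼ`. The knots may coincide for different indices. -/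
noncomputable def splineSum {ι : Type*} (J : Finset ι) (c t : ι → ℝ) (k : ℕ) (x : ℝ) : ℝ :=
  ∑ j ∈ J, c j * truncPow k (x - t j)

section SplineSum

variable {ι : Type*} {J : Finset ι} {c t : ι → ℝ} {x : ℝ}

lemma intervalIntegrable_splineSum (J : Finset ι) (c t : ι → ℝ) (k : ℕ) (a b : ℝ) :
    IntervalIntegrable (splineSum J c t k) MeasureTheory.volume a b := by
  have hsum : splineSum J c t k = ∑ j ∈ J, fun x => c j * truncPow k (x - t j) := by
    ext x
    simp only [splineSum, Finset.sum_apply]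
  rw [hsum]
  exact IntervalIntegrable.sum _ fun j _ =>
    (intervalIntegrable_truncPow_sub k (t j) a b).const_mul (c j)

lemma integral_splineSum (J : Finset ι) (c t : ι → ℝ) (k : ℕ) (a b : ℝ) :
    ∫ x in a..b, splineSum J c t k x = splineSum J c t (k + 1) b - splineSum J c t (k + 1) a := by
  unfold splineSum
  rw [intervalIntegral.integral_finsetSum, ← Finset.sum_sub_distrib]
  · refine Finset.sum_congr rfl fun j _ => ?_
    rw [intervalIntegral.integral_const_mul,
      intervalIntegral.integral_comp_sub_right (truncPow k) (t j), integral_truncPow, mul_sub]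
  · exact fun j _ => (intervalIntegrable_truncPow_sub k (t j) a b).const_mul (c j)

lemma hasDerivAt_splineSum (J : Finset ι) (c t : ι → ℝ) (k : ℕ) (x : ℝ) :
    HasDerivAt (splineSum J c t (k + 2)) (splineSum J c t (k + 1) x) x :=
  HasDerivAt.fun_sum fun j _ =>
    ((hasDerivAt_truncPow_succ k (x - t j)).comp_sub_const x (t j)).const_mul (c j)

lemma splineSum_eq_zero_of_lt (k : ℕ) (hx : ∀ j ∈ J, x < t j) : splineSum J c t k x = 0 :=
  Finset.sum_eq_zero fun j hj => by rw [truncPow_of_neg _ (sub_neg.2 (hx j hj)), mul_zero]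

lemma splineSum_succ_eq_zero_of_le (k : ℕ) (hx : ∀ j ∈ J, x ≤ t j) :
    splineSum J c t (k + 1) x = 0 :=
  Finset.sum_eq_zero fun j hj => by
    rw [truncPow_succ_of_nonpos _ (sub_nonpos.2 (hx j hj)), mul_zero]

lemma splineSum_of_ge (k : ℕ) (hx : ∀ j ∈ J, t j ≤ x) :
    splineSum J c t k x = (∑ j ∈ J, c j * (x - t j) ^ k) / k.factorial := by
  rw [splineSum, Finset.sum_div]
  refine Finset.sum_congr rfl fun j hj => ?_
  rw [truncPow_of_nonneg _ (sub_nonneg.2 (hx j hj)), mul_div_assoc]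

lemma splineSum_zero_eq_sum_filter (J : Finset ι) (c t : ι → ℝ) (x : ℝ) :
    splineSum J c t 0 x = ∑ j ∈ J with t j ≤ x, c j := by
  simp only [splineSum, truncPow, sub_nonneg, pow_zero, Nat.factorial_zero, Nat.cast_one, div_one,
    mul_ite, mul_one, mul_zero, Finset.sum_filter]

lemma sum_mul_sub_pow (J : Finset ι) (c t : ι → ℝ) (x : ℝ) (k : ℕ) :
    ∑ j ∈ J, c j * (x - t j) ^ k =
      ∑ i ∈ Finset.range (k + 1), (-1) ^ i * k.choose i * x ^ (k - i) * ∑ j ∈ J, c j * t j ^ i := by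
  simp_rw [Finset.mul_sum]
  rw [Finset.sum_comm]
  refine Finset.sum_congr rfl fun j _ => ?_
  rw [sub_eq_neg_add, add_pow, Finset.mul_sum]
  refine Finset.sum_congr rfl fun i _ => ?_
  rw [neg_pow]
  ring

lemma splineSum_eq_zero_of_ge {k : ℕ} (hx : ∀ j ∈ J, t j ≤ x)
    (hc : ∀ i ≤ k, ∑ j ∈ J, c j * t j ^ i = 0) : splineSum J c t k x = 0 := by
  rw [splineSum_of_ge k hx, sum_mul_sub_pow, Finset.sum_eq_zero, zero_div]
  intro i hi
  rw [hc i (Finset.mem_range_succ_iff.1 hi), mul_zero]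

lemma mul_splineSum (J : Finset ι) (c t : ι → ℝ) (k : ℕ) (x : ℝ) :
    x * splineSum J c t k x =
      (k + 1) * splineSum J c t (k + 1) x + splineSum J (fun j => c j * t j) t k x := by
  simp only [splineSum, Finset.mul_sum, ← Finset.sum_add_distrib]
  refine Finset.sum_congr rfl fun j _ => ?_
  linear_combination c j * mul_truncPow k (x - t j)

lemma splineSum_smul (J : Finset ι) (a : ℝ) (c t : ι → ℝ) (k : ℕ) (x : ℝ) :
    splineSum J (fun j => a * c j) t k x = a * splineSum J c t k x := by
  simp only [splineSum, Finset.mul_sum, mul_assoc]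

lemma splineSum_eq_splineSum_image (J : Finset ι) (c t : ι → ℝ) (k : ℕ) (x : ℝ) :
    splineSum J c t k x =
      splineSum (J.image t) (fun y => ∑ j ∈ J with t j = y, c j) id k x := by
  unfold splineSum
  rw [← Finset.sum_fiberwise_of_maps_to fun j hj => Finset.mem_image_of_mem t hj]
  refine Finset.sum_congr rfl fun y _ => ?_
  rw [Finset.sum_mul]
  refine Finset.sum_congr rfl fun j hj => ?_
  rw [(Finset.mem_filter.1 hj).2, id]

end SplineSum

section NodalWeight

open Lagrange Polynomial

variable {S : Finset ℝ} {n : ℕ} {a b x : ℝ}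

lemma sum_nodalWeight_mul_pow_of_lt (hn : n + 1 < S.card) :
    ∑ y ∈ S, nodalWeight S id y * y ^ n = 0 := by
  have hdeg : (X ^ n : ℝ[X]).degree < S.card := by
    rw [degree_X_pow]
    exact_mod_cast (Nat.lt_succ_self n).trans hn
  have h := coeff_eq_sum (Function.injective_id.injOn (s := (S : Set ℝ))) hdeg
  rw [coeff_X_pow, if_neg (by omega)] at h
  rw [h]
  refine Finset.sum_congr rfl fun y _ => ?_
  rw [nodalWeight, Finset.prod_inv_distrib, eval_pow, eval_X, id, div_eq_inv_mul]

/-- Up to a factor, the only functional on the points of `S` annihilating all polynomials of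
degree less than `n` is the divided difference; evaluate it at the Lagrange basis. -/
lemma eq_sum_mul_nodalWeight {c : ℝ → ℝ} (hS : S.card = n + 1)
    (hc : ∀ i < n, ∑ z ∈ S, c z * z ^ i = 0) {y : ℝ} (hy : y ∈ S) :
    c y = (∑ z ∈ S, c z * z ^ n) * nodalWeight S id y := by
  have hinj := Function.injective_id.injOn (s := (S : Set ℝ))
  have hdeg : (Lagrange.basis S id y).natDegree = n := by
    rw [natDegree_basis hinj hy, hS, Nat.add_sub_cancel]
  have hlead : (Lagrange.basis S id y).coeff n = nodalWeight S id y := by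
    rw [nodalWeight, Finset.prod_inv_distrib, ← leadingCoeff_basis hinj hy, leadingCoeff, hdeg]
  calc c y = ∑ z ∈ S, c z * (Lagrange.basis S id y).eval z := by
        rw [Finset.sum_eq_single_of_mem y hy fun z hz hzy => by
          rw [← id_eq z, eval_basis_of_ne hzy.symm hz, mul_zero]]
        rw [show (Lagrange.basis S id y).eval y = 1 from eval_basis_self hinj hy, mul_one]
    _ = ∑ i ∈ Finset.range (n + 1), (Lagrange.basis S id y).coeff i * ∑ z ∈ S, c z * z ^ i := by
        simp_rw [Finset.mul_sum]
        rw [Finset.sum_comm]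
        refine Finset.sum_congr rfl fun z _ => ?_
        rw [eval_eq_sum_range, hdeg, Finset.mul_sum]
        exact Finset.sum_congr rfl fun i _ => by ring
    _ = (∑ z ∈ S, c z * z ^ n) * nodalWeight S id y := by
        rw [Finset.sum_range_succ, Finset.sum_eq_zero, zero_add, hlead, mul_comm]
        exact fun i hi => by rw [hc i (Finset.mem_range.1 hi), mul_zero]

lemma splineSum_erase_nodalWeight (hb : b ∈ S) (n : ℕ) (x : ℝ) :
    splineSum (S.erase b) (nodalWeight (S.erase b) id) id n x =
      ∑ y ∈ S, nodalWeight S id y * (y - b) * truncPow n (x - y) := by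
  rw [splineSum, ← Finset.add_sum_erase S _ hb, sub_self, mul_zero, zero_mul, zero_add]
  refine Finset.sum_congr rfl fun y hy => ?_
  have hyb : y ≠ b := Finset.ne_of_mem_erase hy
  have hb' : b ∈ S.erase y := Finset.mem_erase.2 ⟨hyb.symm, hb⟩
  have hw : nodalWeight S id y * (y - b) = nodalWeight (S.erase b) id y := by
    rw [nodalWeight, nodalWeight, ← Finset.mul_prod_erase _ _ hb', Finset.erase_right_comm, id, id,
      mul_right_comm, inv_mul_cancel₀ (sub_ne_zero.2 hyb), one_mul]
  rw [hw, id]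

lemma splineSum_nodalWeight_recurrence (ha : a ∈ S) (hb : b ∈ S) (n : ℕ) (x : ℝ) :
    (b - a) * ((n + 1) * splineSum S (nodalWeight S id) id (n + 1) x) =
      -((x - a) * splineSum (S.erase b) (nodalWeight (S.erase b) id) id n x +
        (b - x) * splineSum (S.erase a) (nodalWeight (S.erase a) id) id n x) := by
  rw [splineSum_erase_nodalWeight ha, splineSum_erase_nodalWeight hb, splineSum]
  simp only [id, Finset.mul_sum, ← Finset.sum_add_distrib, ← Finset.sum_neg_distrib]
  refine Finset.sum_congr rfl fun y _ => ?_
  linear_combination -(b - a) * nodalWeight S id y * mul_truncPow n (x - y)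

lemma splineSum_nodalWeight_eq_zero_of_ge (hS : S.card = n + 2) (hx : ∀ y ∈ S, y ≤ x) :
    splineSum S (nodalWeight S id) id n x = 0 :=
  splineSum_eq_zero_of_ge hx fun _ hi => sum_nodalWeight_mul_pow_of_lt (by omega)

lemma nodalWeight_pair_left (hab : a < b) : nodalWeight {a, b} id a = (a - b)⁻¹ := by
  have herase : ({a, b} : Finset ℝ).erase a = {b} :=
    Finset.erase_insert (Finset.notMem_singleton.2 hab.ne)
  rw [nodalWeight, herase, Finset.prod_singleton, id, id]

lemma splineSum_nodalWeight_zero_nonpos (hS : S.card = 2) (x : ℝ) :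
    splineSum S (nodalWeight S id) id 0 x ≤ 0 := by
  obtain ⟨a, b, hab, rfl⟩ := Finset.card_eq_two.1 hS
  wlog hlt : a < b generalizing a b
  · rw [Finset.pair_comm] at hS ⊢
    exact this b a hab.symm hS (lt_of_le_of_ne (not_lt.1 hlt) hab.symm)
  have hw := sum_nodalWeight_mul_pow_of_lt (n := 0) (S := {a, b}) (by omega)
  rw [Finset.sum_pair hab, pow_zero, pow_zero, nodalWeight_pair_left hlt] at hw
  rw [splineSum, Finset.sum_pair hab, nodalWeight_pair_left hlt]
  have hmono : truncPow 0 (x - b) ≤ truncPow 0 (x - a) := monotone_truncPow_zero (by linarith)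
  have hneg : (a - b)⁻¹ ≤ 0 := inv_nonpos.2 (by linarith)
  calc (a - b)⁻¹ * truncPow 0 (x - a) + nodalWeight {a, b} id b * truncPow 0 (x - b)
      = (a - b)⁻¹ * (truncPow 0 (x - a) - truncPow 0 (x - b)) := by
        linear_combination truncPow 0 (x - b) * hw
    _ ≤ 0 := mul_nonpos_of_nonpos_of_nonneg hneg (sub_nonneg.2 hmono)

/-- The B-spline on the knots `S` has a sign: by the recurrence it is, between the extreme knots, a
combination with nonnegative coefficients of the B-splines omitting one of them. -/
lemma neg_one_pow_mul_splineSum_nodalWeight_nonneg (hS : S.card = n + 2) (x : ℝ) :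
    0 ≤ (-1) ^ (n + 1) * splineSum S (nodalWeight S id) id n x := by
  induction n generalizing S with
  | zero =>
    rw [zero_add, pow_one, neg_one_mul]
    exact neg_nonneg.2 (splineSum_nodalWeight_zero_nonpos hS x)
  | succ n ih =>
    have hne : S.Nonempty := Finset.card_pos.1 (by omega)
    set a := S.min' hne
    set b := S.max' hne
    have haS : a ∈ S := S.min'_mem hne
    have hbS : b ∈ S := S.max'_mem hne
    have hab : a < b := S.min'_lt_max'_of_card (by omega)
    rcases lt_or_ge x a with hxa | hxa
    · rw [splineSum_eq_zero_of_lt (t := id) _ fun y hy => hxa.trans_le (S.min'_le y hy), mul_zero]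
    rcases lt_or_ge b x with hxb | hxb
    · rw [splineSum_nodalWeight_eq_zero_of_ge hS fun y hy => (S.le_max' y hy).trans hxb.le,
        mul_zero]
    have hEa := ih (S := S.erase a) (by rw [Finset.card_erase_of_mem haS]; omega)
    have hEb := ih (S := S.erase b) (by rw [Finset.card_erase_of_mem hbS]; omega)
    have hrec : (b - a) * (n + 1) *
        ((-1) ^ (n + 1 + 1) * splineSum S (nodalWeight S id) id (n + 1) x) =
        (x - a) * ((-1) ^ (n + 1) *
          splineSum (S.erase b) (nodalWeight (S.erase b) id) id n x) +
        (b - x) * ((-1) ^ (n + 1) *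
          splineSum (S.erase a) (nodalWeight (S.erase a) id) id n x) := by
      linear_combination (-1) ^ (n + 1 + 1) * splineSum_nodalWeight_recurrence haS hbS n x
    have hpos : 0 < (b - a) * ((n : ℝ) + 1) := mul_pos (sub_pos.2 hab) (by positivity)
    refine nonneg_of_mul_nonneg_right ?_ hpos
    rw [hrec]
    exact add_nonneg (mul_nonneg (sub_nonneg.2 hxa) hEb) (mul_nonneg (sub_nonneg.2 hxb) hEa)

lemma splineSum_id_eq_mul_nodalWeight {c : ℝ → ℝ} (hS : S.card = n + 2)
    (hc : ∀ i ≤ n, ∑ z ∈ S, c z * z ^ i = 0) (x : ℝ) :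
    splineSum S c id n x =
      (∑ z ∈ S, c z * z ^ (n + 1)) * splineSum S (nodalWeight S id) id n x := by
  rw [← splineSum_smul]
  refine Finset.sum_congr rfl fun y hy => ?_
  rw [eq_sum_mul_nodalWeight hS (fun i hi => hc i (Nat.lt_succ_iff.1 hi)) hy]

end NodalWeight

lemma sum_image_sum_filter_mul_pow {ι : Type*} (J : Finset ι) (c t : ι → ℝ) (i : ℕ) :
    ∑ y ∈ J.image t, (∑ j ∈ J with t j = y, c j) * y ^ i = ∑ j ∈ J, c j * t j ^ i := by
  rw [← Finset.sum_fiberwise_of_maps_to fun j hj => Finset.mem_image_of_mem t hj]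
  refine Finset.sum_congr rfl fun y _ => ?_
  rw [Finset.sum_mul]
  exact Finset.sum_congr rfl fun j hj => by rw [(Finset.mem_filter.1 hj).2]

lemma neg_one_pow_mul_splineSum_nonneg {ι : Type*} {J : Finset ι} {c t : ι → ℝ} {n : ℕ}
    (hJ : (J.image t).card = n + 2) (hc : ∀ i ≤ n, ∑ j ∈ J, c j * t j ^ i = 0)
    (hpos : 0 ≤ (-1) ^ (n + 1) * ∑ j ∈ J, c j * t j ^ (n + 1)) (x : ℝ) :
    0 ≤ splineSum J c t n x := by
  rw [splineSum_eq_splineSum_image, splineSum_id_eq_mul_nodalWeight hJ,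
    sum_image_sum_filter_mul_pow]
  · have hsign := mul_nonneg hpos (neg_one_pow_mul_splineSum_nodalWeight_nonneg hJ x)
    rwa [mul_mul_mul_comm, ← mul_pow, neg_one_mul, neg_neg, one_pow, one_mul] at hsign
  · exact fun i hi => by rw [sum_image_sum_filter_mul_pow, hc i hi]

/-! ### Perfect splines -/

section Moments

lemma sum_Ico_zpow_eq_ite {K : Type*} [Field K] [DecidableEq K] {s : ℕ} (hs : s ≠ 0) {z : K}
    (hz : z ^ (2 * s) = 1) :
    ∑ j ∈ Finset.Ico (-(s : ℤ)) s, z ^ j = if z = 1 then 2 * (s : K) else 0 := by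
  split_ifs with h1
  · have hcard : ((s : ℤ) - -(s : ℤ)).toNat = 2 * s := by omega
    simp only [h1, one_zpow, Finset.sum_const, Int.card_Ico, hcard, nsmul_eq_mul, mul_one]
    push_cast
    rfl
  · have hz0 : z ≠ 0 := by
      rintro rfl
      simp [hs] at hz
    have htel := Finset.sum_Ico_int_sub s fun j : ℤ => z ^ j
    have hper : z ^ (s : ℤ) = z ^ (-(s : ℤ)) := by
      rw [zpow_neg, ← mul_eq_one_iff_eq_inv₀ (zpow_ne_zero _ hz0), zpow_natCast, ← pow_add,
        ← two_mul, hz]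
    simp only [zpow_add_one₀ hz0, ← mul_one_sub, ← Finset.sum_mul, hper, sub_self] at htel
    exact (mul_eq_zero.1 htel).resolve_right (sub_ne_zero.2 (Ne.symm h1))

lemma neg_one_zpow_mul_add_zpow_pow {K : Type*} [Field K] {ζ : K} (hζ : ζ ≠ 0) {s : ℕ}
    (hs : ζ ^ s = -1) (m : ℕ) (j : ℤ) :
    (-1) ^ j * (ζ ^ j + ζ ^ (-j)) ^ m =
      ∑ i ∈ Finset.range (m + 1), m.choose i * (ζ ^ ((s : ℤ) + 2 * i - m)) ^ j := by
  rw [add_pow, Finset.mul_sum]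
  refine Finset.sum_congr rfl fun i hi => ?_
  rw [← hs, ← zpow_natCast ζ s, ← zpow_natCast, ← zpow_natCast, ← zpow_mul, ← zpow_mul,
    ← zpow_mul, ← zpow_mul, ← mul_assoc, ← zpow_add₀ hζ, ← zpow_add₀ hζ, mul_comm,
    Nat.cast_sub (Finset.mem_range_succ_iff.1 hi)]
  congr 2
  ring

lemma sum_neg_one_zpow_mul_add_zpow_pow {K : Type*} [Field K] {s : ℕ} (hs : s ≠ 0) {ζ : K}
    (hζ : IsPrimitiveRoot ζ (2 * s)) (m : ℕ) :
    ∑ j ∈ Finset.Ico (-(s : ℤ)) s, (-1) ^ j * (ζ ^ j + ζ ^ (-j)) ^ m =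
      ∑ i ∈ Finset.range (m + 1),
        (m.choose i : K) * if 2 * (s : ℤ) ∣ s + 2 * i - m then 2 * (s : K) else 0 := by
  classical
  have hζs : ζ ^ s = -1 := by
    have hprim : IsPrimitiveRoot (ζ ^ s) 2 := hζ.pow (by omega) (mul_comm 2 s)
    exact hprim.eq_neg_one_of_two_right
  simp_rw [neg_one_zpow_mul_add_zpow_pow (hζ.ne_zero (by omega)) hζs]
  rw [Finset.sum_comm]
  refine Finset.sum_congr rfl fun i _ => ?_
  have hper : (ζ ^ ((s : ℤ) + 2 * i - m)) ^ (2 * s) = 1 := by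
    rw [← zpow_natCast, zpow_comm, zpow_natCast, hζ.pow_eq_one, one_zpow]
  simp only [← Finset.mul_sum, sum_Ico_zpow_eq_ite hs hper, hζ.zpow_eq_one_iff_dvd, Nat.cast_mul,
    Nat.cast_ofNat]

end Moments

/-- The knots `-cos (j π / s)`. Over the full period `-s ≤ j < s` each interior knot occurs twice
and the end points `±1` once, which produces the jumps `±1, ±2, …, ±2, ±1` of the perfect
spline. -/
noncomputable def perfectKnot (s : ℕ) (j : ℤ) : ℝ := -Real.cos (j * π / s)

/-- The spline of degree `k` whose `k`-th derivative jumps by `(-1) ^ j * tⱼ ^ l` at the knots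
`tⱼ = perfectKnot s j`. For `l = 0` and `k < s` these are the derivatives of the perfect B-spline;
the weights `tⱼ ^ l` arise when the latter is multiplied by the variable. -/
noncomputable def perfectSpline (s l k : ℕ) : ℝ → ℝ :=
  splineSum (Finset.Ico (-(s : ℤ)) s) (fun j => (-1) ^ j * perfectKnot s j ^ l) (perfectKnot s) k

/-- The moments `∑ⱼ (-1) ^ j * tⱼ ^ m` of the jumps of the perfect spline. -/
noncomputable def knotMoment (s m : ℕ) : ℝ :=
  ∑ j ∈ Finset.Ico (-(s : ℤ)) s, (-1) ^ j * perfectKnot s j ^ m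

section KnotMoment

open Real

variable {s m : ℕ}

lemma abs_perfectKnot_le_one (s : ℕ) (j : ℤ) : |perfectKnot s j| ≤ 1 := by
  rw [perfectKnot, abs_neg]
  exact abs_cos_le_one _

lemma knotMoment_eq (hs : s ≠ 0) (m : ℕ) :
    knotMoment s m = (-1 / 2) ^ m *
      ∑ i ∈ Finset.range (m + 1),
        (m.choose i : ℝ) * if 2 * (s : ℤ) ∣ s + 2 * i - m then 2 * (s : ℝ) else 0 := by
  set ζ : ℂ := Complex.exp (2 * π * Complex.I / (2 * s : ℕ)) with hζ
  have hprim : IsPrimitiveRoot ζ (2 * s) := Complex.isPrimitiveRoot_exp _ (by omega)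
  have hknot (j : ℤ) : (perfectKnot s j : ℂ) = -1 / 2 * (ζ ^ j + ζ ^ (-j)) := by
    rw [perfectKnot, hζ, ← Complex.exp_int_mul, ← Complex.exp_int_mul]
    push_cast [Complex.cos]
    rw [show (j : ℂ) * π / s * Complex.I = j * (2 * π * Complex.I / (2 * s)) by field_simp,
      show -((j : ℂ) * π / s) * Complex.I = -j * (2 * π * Complex.I / (2 * s)) by field_simp]
    ring
  rw [← Complex.ofReal_inj, knotMoment]
  push_cast [apply_ite Complex.ofReal]
  have hterm (j : ℤ) : (-1) ^ j * (perfectKnot s j : ℂ) ^ m =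
      (-1 / 2) ^ m * ((-1) ^ j * (ζ ^ j + ζ ^ (-j)) ^ m) := by
    rw [hknot, mul_pow, mul_left_comm]
  simp_rw [hterm, ← Finset.mul_sum]
  rw [sum_neg_one_zpow_mul_add_zpow_pow hs hprim]

lemma knotMoment_eq_zero (hm : m < s) : knotMoment s m = 0 := by
  rw [knotMoment_eq (by omega), Finset.sum_eq_zero, mul_zero]
  intro i hi
  rw [if_neg, mul_zero]
  rw [Finset.mem_range] at hi
  exact fun hdvd => by have := Int.le_of_dvd (by omega) hdvd; omega

lemma neg_one_pow_mul_knotMoment_self_nonneg (s : ℕ) : 0 ≤ (-1) ^ s * knotMoment s s := by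
  rcases eq_or_ne s 0 with rfl | hs
  · simp [knotMoment]
  · rw [knotMoment_eq hs, ← mul_assoc, ← mul_pow]
    refine mul_nonneg (by norm_num) (Finset.sum_nonneg fun i _ => ?_)
    split_ifs <;> positivity

lemma mul_pi_div_mem_Icc {r t : ℝ} (hr : 0 ≤ r) (hrt : r ≤ t) : r * π / t ∈ Set.Icc 0 π := by
  have ht : 0 ≤ t := hr.trans hrt
  refine ⟨by positivity, ?_⟩
  rw [mul_div_right_comm]
  exact mul_le_of_le_one_left pi_pos.le (div_le_one_of_le₀ hrt ht)

lemma perfectKnot_image_card (hs : s ≠ 0) :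
    ((Finset.Ico (-(s : ℤ)) s).image (perfectKnot s)).card = s + 1 := by
  have himage : (Finset.Ico (-(s : ℤ)) s).image (perfectKnot s) =
      (Finset.range (s + 1)).image fun j : ℕ => perfectKnot s j := by
    have habs (j : ℤ) : perfectKnot s j = perfectKnot s (j.natAbs : ℕ) := by
      rw [perfectKnot, perfectKnot, ← cos_abs, Int.cast_natCast, Nat.cast_natAbs, abs_div, abs_mul,
        abs_of_pos pi_pos, Nat.abs_cast, Int.cast_abs]
    ext y
    simp only [Finset.mem_image, Finset.mem_Ico, Finset.mem_range]
    constructor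
    · rintro ⟨j, hj, rfl⟩
      exact ⟨j.natAbs, by omega, (habs j).symm⟩
    · rintro ⟨j, hj, rfl⟩
      exact ⟨-j, by omega, by rw [habs, Int.natAbs_neg, Int.natAbs_natCast]⟩
  have hangle {j : ℕ} (hj : j ∈ Finset.range (s + 1)) : (j : ℝ) * π / s ∈ Set.Icc 0 π :=
    mul_pi_div_mem_Icc j.cast_nonneg (by exact_mod_cast Finset.mem_range_succ_iff.1 hj)
  rw [himage, Finset.card_image_of_injOn, Finset.card_range]
  intro i hi j hj hij
  have hcos : (i : ℝ) * π / s = j * π / s :=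
    injOn_cos (hangle hi) (hangle hj) (neg_injective (by simpa [perfectKnot] using hij))
  have hs' : (s : ℝ) ≠ 0 := by exact_mod_cast hs
  field_simp at hcos
  exact_mod_cast hcos

end KnotMoment

section PerfectSpline

open Real

variable {s l k i : ℕ} {x φ : ℝ}

lemma perfectSpline_eq_zero_of_lt (s l k : ℕ) (hx : x < -1) : perfectSpline s l k x = 0 :=
  splineSum_eq_zero_of_lt k fun j _ => hx.trans_le (abs_le.1 (abs_perfectKnot_le_one s j)).1

lemma perfectSpline_succ_eq_zero_of_le (s l k : ℕ) (hx : x ≤ -1) :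
    perfectSpline s l (k + 1) x = 0 :=
  splineSum_succ_eq_zero_of_le k fun j _ => hx.trans (abs_le.1 (abs_perfectKnot_le_one s j)).1

lemma perfectSpline_eq_zero_of_one_le (hlk : l + k < s) (hx : 1 ≤ x) :
    perfectSpline s l k x = 0 := by
  refine splineSum_eq_zero_of_ge
    (fun j _ => (abs_le.1 (abs_perfectKnot_le_one s j)).2.trans hx) fun i hi => ?_
  simp only [mul_assoc, ← pow_add]
  exact knotMoment_eq_zero (m := l + i) (by omega)

lemma integral_perfectSpline (s l k : ℕ) (a b : ℝ) :
    ∫ y in a..b, perfectSpline s l k y =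
      perfectSpline s l (k + 1) b - perfectSpline s l (k + 1) a :=
  integral_splineSum _ _ _ k a b

lemma hasDerivAt_perfectSpline (s l k : ℕ) (x : ℝ) :
    HasDerivAt (perfectSpline s l (k + 2)) (perfectSpline s l (k + 1) x) x :=
  hasDerivAt_splineSum _ _ _ k x

lemma mul_perfectSpline (s l k : ℕ) (x : ℝ) :
    x * perfectSpline s l k x =
      (k + 1) * perfectSpline s l (k + 1) x + perfectSpline s (l + 1) k x := by
  simp only [perfectSpline, mul_splineSum, pow_succ, mul_assoc]

lemma perfectSpline_zero_nonneg (hs : s ≠ 0) (x : ℝ) : 0 ≤ perfectSpline s 0 (s - 1) x := by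
  have hs1 : s - 1 + 1 = s := Nat.sub_add_cancel (Nat.one_le_iff_ne_zero.2 hs)
  have hmoment (m : ℕ) : ∑ j ∈ Finset.Ico (-(s : ℤ)) s,
      (-1) ^ j * perfectKnot s j ^ 0 * perfectKnot s j ^ m = knotMoment s m := by
    simp only [pow_zero, mul_one, knotMoment]
  refine neg_one_pow_mul_splineSum_nonneg (by rw [perfectKnot_image_card hs]; omega)
    (fun i hi => ?_) ?_ x
  · rw [hmoment, knotMoment_eq_zero (by omega)]
  · rw [hmoment, hs1]
    exact neg_one_pow_mul_knotMoment_self_nonneg s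

lemma filter_perfectKnot_le_neg_cos (hi : i < s) (hl : i * π / s ≤ φ) (hr : φ < (i + 1) * π / s) :
    {j ∈ Finset.Ico (-(s : ℤ)) s | perfectKnot s j ≤ -cos φ} = Finset.Icc (-(i : ℤ)) i := by
  have hs : (0 : ℝ) < s := by exact_mod_cast (Nat.zero_le i).trans_lt hi
  have hφ : φ ∈ Set.Icc 0 π :=
    ⟨le_trans (by positivity) hl,
      hr.le.trans (mul_pi_div_mem_Icc (by positivity) (by exact_mod_cast hi)).2⟩
  have hiff {j : ℤ} (hj : |j| ≤ s) : perfectKnot s j ≤ -cos φ ↔ |j| ≤ i := by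
    have hangle : |(j : ℝ)| * π / s ∈ Set.Icc 0 π :=
      mul_pi_div_mem_Icc (abs_nonneg _) (by exact_mod_cast hj)
    rw [perfectKnot, neg_le_neg_iff, ← cos_abs (_ / _), abs_div, abs_mul, abs_of_pos pi_pos,
      Nat.abs_cast, strictAntiOn_cos.le_iff_ge hφ hangle]
    rw [div_le_iff₀ hs] at hl
    rw [lt_div_iff₀ hs] at hr
    rw [div_le_iff₀ hs]
    constructor
    · intro h
      have hlt : |(j : ℝ)| < i + 1 := lt_of_mul_lt_mul_right (h.trans_lt hr) pi_pos.le
      have hlt' : |j| < i + 1 := by exact_mod_cast hlt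
      omega
    · intro h
      have hle : |(j : ℝ)| ≤ i := by exact_mod_cast h
      exact (mul_le_mul_of_nonneg_right hle pi_pos.le).trans hl
  ext j
  simp only [Finset.mem_filter, Finset.mem_Ico, Finset.mem_Icc]
  constructor
  · rintro ⟨hj, hle⟩
    exact abs_le.1 ((hiff (abs_le.2 (by omega))).1 hle)
  · exact fun hj => ⟨by omega, (hiff (abs_le.2 (by omega))).2 (abs_le.2 hj)⟩

lemma perfectSpline_zero_neg_cos (l : ℕ) (hi : i < s) (hl : i * π / s ≤ φ)
    (hr : φ < (i + 1) * π / s) :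
    perfectSpline s l 0 (-cos φ) =
      ∑ j ∈ Finset.Icc (-(i : ℤ)) i, (-1) ^ j * perfectKnot s j ^ l := by
  rw [perfectSpline, splineSum_zero_eq_sum_filter, filter_perfectKnot_le_neg_cos hi hl hr]

lemma sum_Icc_neg_one_zpow (i : ℕ) : ∑ j ∈ Finset.Icc (-(i : ℤ)) i, (-1 : ℝ) ^ j = (-1) ^ i := by
  induction i with
  | zero => simp
  | succ i ih =>
    rw [Nat.cast_succ, Finset.sum_Icc_succ_eq_add_endpoints, ih, ← Nat.cast_succ, zpow_neg,
      zpow_natCast, ← inv_pow, inv_neg_one, pow_succ]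
    ring

lemma sum_Icc_neg_one_zpow_mul_cos (i : ℕ) (α : ℝ) :
    (∑ j ∈ Finset.Icc (-(i : ℤ)) i, (-1) ^ j * cos (j * (2 * α))) * cos α =
      (-1) ^ i * cos ((2 * i + 1) * α) := by
  induction i with
  | zero => simp
  | succ i ih =>
    rw [Nat.cast_succ, Finset.sum_Icc_succ_eq_add_endpoints, add_mul, ih, ← Nat.cast_succ, zpow_neg,
      zpow_natCast, ← inv_pow, inv_neg_one, pow_succ]
    push_cast
    rw [neg_mul, cos_neg,
      show (2 * ((i : ℝ) + 1) + 1) * α = (i + 1) * (2 * α) + α by ring,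
      show (2 * (i : ℝ) + 1) * α = (i + 1) * (2 * α) - α by ring, cos_add, cos_sub]
    ring

lemma perfectSpline_zero_zero_neg_cos (hi : i < s) (hl : i * π / s ≤ φ)
    (hr : φ < (i + 1) * π / s) : perfectSpline s 0 0 (-cos φ) = (-1) ^ i := by
  simpa only [pow_zero, mul_one, sum_Icc_neg_one_zpow] using perfectSpline_zero_neg_cos 0 hi hl hr

lemma perfectSpline_one_zero_neg_cos_mul_cos (hi : i < s) (hl : i * π / s ≤ φ)
    (hr : φ < (i + 1) * π / s) :
    perfectSpline s 1 0 (-cos φ) * cos (π / (2 * s)) =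
      -((-1) ^ i * cos ((2 * i + 1) * (π / (2 * s)))) := by
  have hangle (j : ℤ) : (j : ℝ) * π / s = j * (2 * (π / (2 * s))) := by ring
  rw [← sum_Icc_neg_one_zpow_mul_cos, perfectSpline_zero_neg_cos 1 hi hl hr]
  simp only [pow_one, perfectKnot, mul_neg, Finset.sum_neg_distrib, neg_mul, hangle]

lemma exists_eq_neg_cos (hs : s ≠ 0) (hx : x ∈ Set.Ico (-1) 1) :
    ∃ i < s, ∃ φ : ℝ, i * π / s ≤ φ ∧ φ < (i + 1) * π / s ∧ x = -cos φ := by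
  have hs0 : (0 : ℝ) < s := by exact_mod_cast Nat.pos_of_ne_zero hs
  set φ := arccos (-x)
  have hφ0 : 0 ≤ φ := arccos_nonneg _
  have hφπ : φ < π := lt_of_le_of_ne (arccos_le_pi _) fun h => by
    linarith [arccos_eq_pi.1 h, hx.2]
  have hfloor : 0 ≤ φ * s / π := by positivity
  refine ⟨⌊φ * s / π⌋₊, ?_, φ, ?_, ?_, ?_⟩
  · rw [Nat.floor_lt hfloor, div_lt_iff₀ pi_pos, mul_comm]
    exact mul_lt_mul_of_pos_left hφπ hs0
  · rw [div_le_iff₀ hs0, ← le_div_iff₀ pi_pos]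
    exact Nat.floor_le hfloor
  · rw [lt_div_iff₀ hs0, ← div_lt_iff₀ pi_pos]
    exact Nat.lt_floor_add_one _
  · rw [cos_arccos (by linarith [hx.2]) (by linarith [hx.1]), neg_neg]

lemma abs_perfectSpline_zero_zero_le_one (hs : s ≠ 0) (x : ℝ) : |perfectSpline s 0 0 x| ≤ 1 := by
  rcases lt_or_ge x (-1) with hx | hx
  · rw [perfectSpline_eq_zero_of_lt _ _ _ hx, abs_zero]
    exact zero_le_one
  rcases le_or_gt 1 x with hx' | hx'
  · rw [perfectSpline_eq_zero_of_one_le (by omega) hx', abs_zero]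
    exact zero_le_one
  obtain ⟨i, hi, φ, hl, hr, rfl⟩ := exists_eq_neg_cos hs ⟨hx, hx'⟩
  rw [perfectSpline_zero_zero_neg_cos hi hl hr, abs_neg_one_pow]

lemma cos_pi_div_two_mul_pos (hs : 1 < s) : 0 < cos (π / (2 * s)) := by
  have hs' : (1 : ℝ) < s := by exact_mod_cast hs
  refine cos_pos_of_mem_Ioo ⟨by linarith [pi_pos, show 0 ≤ π / (2 * s) by positivity], ?_⟩
  exact div_lt_div_of_pos_left pi_pos two_pos (by linarith)

lemma tan_pi_div_two_mul_nonneg (hs : 1 < s) : 0 ≤ tan (π / (2 * s)) := by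
  have hs' : (1 : ℝ) < s := by exact_mod_cast hs
  refine tan_nonneg_of_nonneg_of_le_pi_div_two (by positivity) ?_
  exact div_le_div_of_nonneg_left pi_pos.le two_pos (by linarith)

lemma cell_midpoint_mem (hi : i < s) :
    π / (2 * s) ≤ (2 * i + 1) * (π / (2 * s)) ∧
      (2 * i + 1) * (π / (2 * s)) + π / (2 * s) ≤ π := by
  have hs : (0 : ℝ) < s := by exact_mod_cast (Nat.zero_le i).trans_lt hi
  have his : (i : ℝ) + 1 ≤ s := by exact_mod_cast hi
  have hπs : π / (2 * s) * (2 * s) = π := by field_simp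
  have hpos : 0 < π / (2 * s) := by positivity
  constructor
  · nlinarith [mul_nonneg (Nat.cast_nonneg (α := ℝ) i) hpos.le]
  · nlinarith

lemma abs_perfectSpline_one_zero_le_one (hs : 1 < s) (x : ℝ) : |perfectSpline s 1 0 x| ≤ 1 := by
  rcases lt_or_ge x (-1) with hx | hx
  · rw [perfectSpline_eq_zero_of_lt _ _ _ hx, abs_zero]
    exact zero_le_one
  rcases le_or_gt 1 x with hx' | hx'
  · rw [perfectSpline_eq_zero_of_one_le (by omega) hx', abs_zero]
    exact zero_le_one
  obtain ⟨i, hi, φ, hl, hr, rfl⟩ := exists_eq_neg_cos (s := s) (by omega) ⟨hx, hx'⟩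
  have hcos := cos_pi_div_two_mul_pos hs
  obtain ⟨hμl, hμr⟩ := cell_midpoint_mem hi
  have hα : 0 ≤ π / (2 * s) := by positivity
  refine le_of_mul_le_mul_right ?_ hcos
  rw [← abs_of_pos hcos, ← abs_mul, perfectSpline_one_zero_neg_cos_mul_cos hi hl hr, abs_neg,
    abs_mul, abs_neg_one_pow, one_mul, one_mul, abs_of_pos hcos, abs_le]
  constructor
  · rw [← cos_pi_sub]
    exact cos_le_cos_of_nonneg_of_le_pi (by linarith) (by linarith) (by linarith)
  · exact cos_le_cos_of_nonneg_of_le_pi hα (by linarith) hμl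

lemma abs_cos_sub_cos_mul_cos_le {μ α : ℝ} (hμl : α ≤ μ) (hμr : μ + α ≤ π)
    (hφl : μ - α ≤ φ) (hφr : φ ≤ μ + α) : |cos μ - cos φ * cos α| ≤ sin α := by
  have hα : 0 ≤ α := by linarith
  have hcos : 0 ≤ cos α := cos_nonneg_of_mem_Icc ⟨by linarith, by linarith⟩
  have hsin : 0 ≤ sin α := sin_nonneg_of_nonneg_of_le_pi hα (by linarith)
  have hlo : cos (μ + α) * cos α ≤ cos φ * cos α :=
    mul_le_mul_of_nonneg_right
      (cos_le_cos_of_nonneg_of_le_pi (by linarith) hμr hφr) hcos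
  have hhi : cos φ * cos α ≤ cos (μ - α) * cos α :=
    mul_le_mul_of_nonneg_right
      (cos_le_cos_of_nonneg_of_le_pi (by linarith) (by linarith) hφl) hcos
  have hadd : cos μ - cos (μ + α) * cos α = sin α * sin (μ + α) := by
    rw [cos_add, sin_add]
    linear_combination -cos μ * sin_sq_add_cos_sq α
  have hsub : cos μ - cos (μ - α) * cos α = -(sin α * sin (μ - α)) := by
    rw [cos_sub, sin_sub]
    linear_combination -cos μ * sin_sq_add_cos_sq α
  rw [abs_le]
  constructor
  · linarith [mul_le_of_le_one_right hsin (sin_le_one (μ - α))]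
  · linarith [mul_le_of_le_one_right hsin (sin_le_one (μ + α))]

lemma abs_perfectSpline_zero_one_le (hs : 1 < s) (x : ℝ) :
    |perfectSpline s 0 1 x| ≤ tan (π / (2 * s)) := by
  have htan := tan_pi_div_two_mul_nonneg hs
  rcases lt_or_ge x (-1) with hx | hx
  · rwa [perfectSpline_eq_zero_of_lt _ _ _ hx, abs_zero]
  rcases le_or_gt 1 x with hx' | hx'
  · rwa [perfectSpline_eq_zero_of_one_le (by omega) hx', abs_zero]
  obtain ⟨i, hi, φ, hl, hr, rfl⟩ := exists_eq_neg_cos (s := s) (by omega) ⟨hx, hx'⟩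
  obtain ⟨hμl, hμr⟩ := cell_midpoint_mem hi
  have hcos := cos_pi_div_two_mul_pos hs
  have hφl : (2 * i + 1) * (π / (2 * s)) - π / (2 * s) = i * π / s := by ring
  have hφr : (2 * i + 1) * (π / (2 * s)) + π / (2 * s) = (i + 1) * π / s := by ring
  have hmul := mul_perfectSpline s 0 0 (-cos φ)
  have hone := perfectSpline_one_zero_neg_cos_mul_cos hi hl hr
  rw [perfectSpline_zero_zero_neg_cos hi hl hr] at hmul
  have hvalue : perfectSpline s 0 1 (-cos φ) * cos (π / (2 * s)) = (-1) ^ i *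
      (cos ((2 * i + 1) * (π / (2 * s))) - cos φ * cos (π / (2 * s))) := by
    norm_num at hmul
    linear_combination -cos (π / (2 * s)) * hmul - hone
  rw [tan_eq_sin_div_cos, le_div_iff₀ hcos, ← abs_of_pos hcos, ← abs_mul, hvalue, abs_mul,
    abs_neg_one_pow, one_mul]
  exact abs_cos_sub_cos_mul_cos_le hμl hμr (hφl.trans_le hl) (hr.le.trans_eq hφr.symm)

/-- Each antiderivative vanishes at both end points, so its size is controlled by integrating from
the nearer one, over a length of at most one. -/
lemma abs_perfectSpline_zero_succ_le (hk : k + 1 < s) (x : ℝ) :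
    |perfectSpline s 0 (k + 1) x| ≤ tan (π / (2 * s)) := by
  induction k generalizing x with
  | zero => exact abs_perfectSpline_zero_one_le hk x
  | succ k ih =>
    have htan := tan_pi_div_two_mul_nonneg (s := s) (by omega)
    have hint (a b : ℝ) :
        |perfectSpline s 0 (k + 2) b - perfectSpline s 0 (k + 2) a| ≤
          tan (π / (2 * s)) * |b - a| := by
      rw [← integral_perfectSpline]
      exact intervalIntegral.norm_integral_le_of_norm_le_const (f := perfectSpline s 0 (k + 1))
        fun y _ => ih (by omega) y
    have hnear {a : ℝ} (ha : perfectSpline s 0 (k + 2) a = 0) (hxa : |x - a| ≤ 1) :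
        |perfectSpline s 0 (k + 2) x| ≤ tan (π / (2 * s)) := by
      simpa only [ha, sub_zero] using (hint a x).trans (mul_le_of_le_one_right htan hxa)
    rcases le_or_gt x (-1) with hx | hx
    · rwa [perfectSpline_succ_eq_zero_of_le _ _ _ hx, abs_zero]
    rcases le_or_gt 1 x with hx' | hx'
    · rwa [perfectSpline_eq_zero_of_one_le (by omega) hx', abs_zero]
    rcases le_total x 0 with hx0 | hx0
    · exact hnear (perfectSpline_succ_eq_zero_of_le s 0 _ le_rfl)
        (by rw [abs_le]; constructor <;> linarith)
    · exact hnear (perfectSpline_eq_zero_of_one_le (by omega) le_rfl)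
        (by rw [abs_le]; constructor <;> linarith)

lemma sin_natCast_mul_eq (hi : i < s) (hl : i * π / s < φ) (hr : φ < (i + 1) * π / s) :
    ∃ p : ℝ, 0 < p ∧ sin (s * φ) = (-1) ^ i * p := by
  have hs : (0 : ℝ) < s := by exact_mod_cast (Nat.zero_le i).trans_lt hi
  rw [div_lt_iff₀ hs] at hl
  rw [lt_div_iff₀ hs] at hr
  refine ⟨sin (s * φ - i * π), sin_pos_of_pos_of_lt_pi (by linarith) (by linarith), ?_⟩
  rw [sin_sub_nat_mul_pi, ← mul_assoc, ← pow_add, ← two_mul, pow_mul, neg_one_sq, one_pow, one_mul]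

lemma sign_neg_one_pow_mul (n : ℕ) {p : ℝ} (hp : 0 < p) : sign ((-1) ^ n * p) = (-1) ^ n := by
  rcases neg_one_pow_eq_or ℝ n with h | h
  · rw [h, one_mul, sign_of_pos hp]
  · rw [h, neg_one_mul, sign_of_neg (neg_lt_zero.2 hp)]

lemma fspline_zero_neg_cos (hi : i < s) (hl : i * π / s < φ) (hr : φ < (i + 1) * π / s) :
    fspline s 0 (-cos φ) = (-1) ^ i := by
  have hs : (0 : ℝ) < s := by exact_mod_cast (Nat.zero_le i).trans_lt hi
  have hsin : 0 < sin φ :=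
    sin_pos_of_pos_of_lt_pi (lt_of_le_of_lt (by positivity) hl)
      (hr.trans_le (mul_pi_div_mem_Icc (by positivity) (by exact_mod_cast hi)).2)
  obtain ⟨p, hp, hsinp⟩ := sin_natCast_mul_eq hi hl hr
  have hU := Polynomial.Chebyshev.U_real_cos (π - φ) ((s : ℤ) - 1)
  rw [cos_pi_sub, sin_pi_sub] at hU
  push_cast at hU
  obtain ⟨n, rfl⟩ : ∃ n, s = n + 1 := ⟨s - 1, by omega⟩
  rw [sub_add_cancel, mul_sub, sin_nat_mul_pi_sub, hsinp] at hU
  have hvalue : (Polynomial.Chebyshev.U ℝ (((n + 1 : ℕ) : ℤ) - 1)).eval (-cos φ) =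
      (-1) ^ (n + i) * (p / sin φ) := by
    rw [← mul_div_assoc, eq_div_iff hsin.ne', hU, pow_add, pow_succ]
    ring
  simp only [fspline]
  rw [hvalue, sign_neg_one_pow_mul _ (div_pos hp hsin), Nat.add_sub_cancel, pow_add,
    ← mul_assoc, ← mul_pow, neg_one_mul, neg_neg, one_pow, one_mul]

lemma fspline_zero_eq_perfectSpline (hs : s ≠ 0) (hx : x ∈ Set.Ico (-1) 1)
    (hknot : x ∉ (Finset.Ico (-(s : ℤ)) s).image (perfectKnot s)) :
    fspline s 0 x = perfectSpline s 0 0 x := by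
  obtain ⟨i, hi, φ, hl, hr, rfl⟩ := exists_eq_neg_cos hs hx
  have hne : i * π / s ≠ φ := by
    rintro rfl
    exact hknot (Finset.mem_image.2
      ⟨i, Finset.mem_Ico.2 (by omega), by rw [perfectKnot, Int.cast_natCast]⟩)
  rw [fspline_zero_neg_cos hi (hl.lt_of_ne hne) hr, perfectSpline_zero_zero_neg_cos hi hl hr]

lemma fspline_succ_eq_perfectSpline (hs : s ≠ 0) (k : ℕ) (hx : x ∈ Set.Icc (-1) 1) :
    fspline s (k + 1) x = perfectSpline s 0 (k + 1) x := by
  have hint (k : ℕ) (x : ℝ) :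
      ∫ y in (-1)..x, perfectSpline s 0 k y = perfectSpline s 0 (k + 1) x := by
    rw [integral_perfectSpline, perfectSpline_succ_eq_zero_of_le s 0 k le_rfl, sub_zero]
  induction k generalizing x with
  | zero =>
    rw [fspline, ← hint]
    refine intervalIntegral.integral_congr_ae ?_
    have hknots := ((Finset.Ico (-(s : ℤ)) s).image (perfectKnot s)).finite_toSet.countable
    filter_upwards [hknots.ae_notMem MeasureTheory.volume,
      (Set.countable_singleton (1 : ℝ)).ae_notMem _] with y hknot hy1 hy
    rw [Set.uIoc_of_le hx.1] at hy
    exact fspline_zero_eq_perfectSpline hs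
      ⟨hy.1.le, lt_of_le_of_ne (hy.2.trans hx.2) hy1⟩ hknot
  | succ k ih =>
    rw [fspline, ← hint]
    refine intervalIntegral.integral_congr fun y hy => ?_
    rw [Set.uIcc_of_le hx.1] at hy
    exact ih ⟨hy.1, hy.2.trans hx.2⟩

end PerfectSpline

section SplineMoment

variable {ι : Type*} {J : Finset ι} {c t : ι → ℝ} {a b : ℝ}

lemma continuous_splineSum_succ (J : Finset ι) (c t : ι → ℝ) (k : ℕ) :
    Continuous (splineSum J c t (k + 1)) :=
  continuous_finsetSum _ fun _ _ => continuous_const.mul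
    ((continuous_truncPow_succ k).comp (continuous_id.sub continuous_const))

lemma hasDerivAt_splineSum_of_notMem (J : Finset ι) (c t : ι → ℝ) (k : ℕ) {x : ℝ}
    (hx : x ∉ t '' J) : HasDerivAt (splineSum J c t (k + 1)) (splineSum J c t k x) x :=
  HasDerivAt.fun_sum fun j hj => ((hasDerivAt_truncPow_of_ne_zero k (u := x - t j)
    fun h => hx ⟨j, hj, (sub_eq_zero.1 h).symm⟩).comp_sub_const x (t j)).const_mul (c j)

lemma integral_pow_mul_truncPow_zero (m : ℕ) {y : ℝ} (hy : y ∈ Set.Icc a b) :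
    ∫ x in a..b, x ^ m * truncPow 0 (x - y) = (b ^ (m + 1) - y ^ (m + 1)) / (m + 1) := by
  have hinterval (u v : ℝ) :
      IntervalIntegrable (fun x => x ^ m * truncPow 0 (x - y)) MeasureTheory.volume u v :=
    (intervalIntegrable_truncPow_sub 0 y u v).continuousOn_mul (by fun_prop)
  have hleft : ∫ x in a..y, x ^ m * truncPow 0 (x - y) = 0 := by
    rw [intervalIntegral.integral_congr_Ioo_of_le (g := 0) hy.1 fun x hx => ?_]
    · exact intervalIntegral.integral_zero
    · simp only [truncPow_of_neg 0 (sub_neg.2 hx.2), mul_zero, Pi.zero_apply]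
  have hright : ∫ x in y..b, x ^ m * truncPow 0 (x - y) = ∫ x in y..b, x ^ m := by
    refine intervalIntegral.integral_congr_Ioo_of_le hy.2 fun x hx => ?_
    simp only [truncPow_of_nonneg 0 (sub_nonneg.2 hx.1.le), pow_zero, Nat.factorial_zero,
      Nat.cast_one, div_one, mul_one]
  rw [← intervalIntegral.integral_add_adjacent_intervals (hinterval a y) (hinterval y b), hleft,
    hright, zero_add, integral_pow]

lemma integral_pow_mul_splineSum_zero (ht : ∀ j ∈ J, t j ∈ Set.Icc a b) (m : ℕ) :
    ∫ x in a..b, x ^ m * splineSum J c t 0 x =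
      ∑ j ∈ J, c j * ((b ^ (m + 1) - t j ^ (m + 1)) / (m + 1)) := by
  simp only [splineSum, Finset.mul_sum, mul_left_comm _ (c _)]
  rw [intervalIntegral.integral_finsetSum fun j _ =>
    ((intervalIntegrable_truncPow_sub 0 (t j) a b).continuousOn_mul (by fun_prop)).const_mul _]
  refine Finset.sum_congr rfl fun j hj => ?_
  rw [intervalIntegral.integral_const_mul, integral_pow_mul_truncPow_zero m (ht j hj)]

lemma integral_pow_succ_mul_splineSum (ha : ∀ j ∈ J, a ≤ t j) (k m : ℕ)
    (hb : splineSum J c t (k + 1) b = 0) :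
    ∫ x in a..b, x ^ (m + 1) * splineSum J c t k x =
      -((m + 1) * ∫ x in a..b, x ^ m * splineSum J c t (k + 1) x) := by
  have hcont := continuous_splineSum_succ J c t k
  have hint : IntervalIntegrable (fun x => x ^ (m + 1) * splineSum J c t k x)
      MeasureTheory.volume a b :=
    (intervalIntegrable_splineSum J c t k a b).continuousOn_mul (by fun_prop)
  have hint' : IntervalIntegrable (fun x => (m + 1) * (x ^ m * splineSum J c t (k + 1) x))
      MeasureTheory.volume a b := Continuous.intervalIntegrable (by fun_prop) _ _
  have hftc := MeasureTheory.integral_eq_of_hasDerivAt_off_countable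
    (fun x => x ^ (m + 1) * splineSum J c t (k + 1) x)
    (fun x => (m + 1) * (x ^ m * splineSum J c t (k + 1) x) + x ^ (m + 1) * splineSum J c t k x)
    (a := a) (b := b) (J.finite_toSet.image t).countable (by fun_prop)
    (fun x hx => ((hasDerivAt_pow (m + 1) x).mul
      (hasDerivAt_splineSum_of_notMem J c t k hx.2)).congr_deriv (by simp [mul_assoc]))
    (hint'.add hint)
  rw [intervalIntegral.integral_add hint' hint, intervalIntegral.integral_const_mul, hb,
    splineSum_succ_eq_zero_of_le k ha, mul_zero, mul_zero, sub_zero] at hftc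
  linear_combination hftc

/-- Repeated integration by parts moves all the integrations from the spline to the monomial. -/
lemma integral_pow_mul_splineSum (ht : ∀ j ∈ J, t j ∈ Set.Icc a b) {k : ℕ}
    (hc : ∀ i ≤ k, ∑ j ∈ J, c j * t j ^ i = 0) (m : ℕ) :
    ∫ x in a..b, x ^ m * splineSum J c t k x =
      (-1) ^ (k + 1) * (m.factorial / (m + k + 1).factorial) *
        ∑ j ∈ J, c j * t j ^ (m + k + 1) := by
  induction k generalizing m with
  | zero =>
    have hsum : ∑ j ∈ J, c j = 0 := by simpa only [pow_zero, mul_one] using hc 0 le_rfl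
    have hm : (m.factorial : ℝ) ≠ 0 := by positivity
    simp only [integral_pow_mul_splineSum_zero ht, mul_div_assoc', ← Finset.sum_div, mul_sub,
      Finset.sum_sub_distrib, ← Finset.sum_mul, hsum, zero_mul, zero_sub, add_zero,
      Nat.factorial_succ]
    push_cast
    field_simp
  | succ k ih =>
    have hparts := integral_pow_succ_mul_splineSum (fun j hj => (ht j hj).1) k m
      (splineSum_eq_zero_of_ge (fun j hj => (ht j hj).2) hc)
    rw [ih (fun i hi => hc i (by omega)), Nat.factorial_succ,
      show m + 1 + k + 1 = m + (k + 1) + 1 by omega] at hparts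
    have hm : (m : ℝ) + 1 ≠ 0 := by positivity
    rw [← mul_right_inj' hm, ← neg_inj, ← hparts]
    push_cast
    ring

end SplineMoment

lemma integral_pow_mul_perfectSpline {s : ℕ} (hs : s ≠ 0) (m : ℕ) :
    ∫ x in (-1)..1, x ^ m * perfectSpline s 0 (s - 1) x =
      (-1) ^ s * (m.factorial / (m + s).factorial) * knotMoment s (m + s) := by
  obtain ⟨n, rfl⟩ := Nat.exists_eq_succ_of_ne_zero hs
  have hmoment (i : ℕ) : ∑ j ∈ Finset.Ico (-((n + 1 : ℕ) : ℤ)) (n + 1 : ℕ),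
      (-1) ^ j * perfectKnot (n + 1) j ^ 0 * perfectKnot (n + 1) j ^ i = knotMoment (n + 1) i := by
    simp only [pow_zero, mul_one, knotMoment]
  refine (integral_pow_mul_splineSum (fun j _ => abs_le.1 (abs_perfectKnot_le_one (n + 1) j))
    (fun i hi => ?_) m).trans ?_
  · exact (hmoment i).trans (knotMoment_eq_zero (by omega))
  · exact congrArg _ (hmoment _)

section Quadrature

lemma sum_Icc_int_sub {G : Type*} [AddCommGroup G] (f : ℤ → G) (K : ℕ) :
    ∑ k ∈ Finset.Icc (-(K : ℤ)) K, (f (k + 1) - f k) = f (K + 1) - f (-K) := by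
  rw [Finset.sum_Icc_eq_sum_Ico_add _ (by omega), ← neg_inj, neg_add, ← Finset.sum_neg_distrib]
  simp only [neg_sub, Finset.sum_Ico_int_sub]
  abel

lemma abs_sub_sub_le_of_hasDerivAt {Φ P : ℝ → ℝ} {θ B : ℝ} (hΦ : ∀ x, HasDerivAt Φ (P x) x)
    (hP : ∀ x, |x| ≤ 1 / 2 → |P (θ + x) - P θ| ≤ B * |x|) :
    |Φ (θ + 1 / 2) - Φ (θ - 1 / 2) - P θ| ≤ B / 4 := by
  have hdiff (x : ℝ) : HasDerivAt (fun x => Φ (θ + x) - Φ (θ - x) - 2 * x * P θ)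
      (P (θ + x) - P θ + (P (θ + -x) - P θ)) x := by
    have h1 := (hΦ (θ + x)).comp_const_add θ x
    have h2 := (hΦ (θ - x)).comp_const_sub θ x
    have h3 := ((hasDerivAt_id x).const_mul 2).mul_const (P θ)
    refine ((h1.sub h2).sub h3).congr_deriv ?_
    rw [sub_eq_add_neg θ]
    ring
  have hsq (x : ℝ) : HasDerivAt (fun x => B * x ^ 2) (2 * B * x) x := by
    refine ((hasDerivAt_pow 2 x).const_mul B).congr_deriv ?_
    push_cast
    ring
  have hderiv (x : ℝ) (hx : x ∈ Set.Ico 0 (1 / 2)) :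
      ‖P (θ + x) - P θ + (P (θ + -x) - P θ)‖ ≤ 2 * B * x := by
    have hx' : |x| ≤ 1 / 2 := (abs_of_nonneg hx.1).trans_le hx.2.le
    have h1 := hP x hx'
    have h2 := hP (-x) (by rwa [abs_neg])
    rw [abs_neg] at h2
    rw [abs_of_nonneg hx.1] at h1 h2
    exact (norm_add_le _ _).trans ((add_le_add h1 h2).trans_eq (by ring))
  have hmain := image_norm_le_of_norm_deriv_right_le_deriv_boundary
    (fun x _ => (hdiff x).continuousAt.continuousWithinAt)
    (fun x _ => (hdiff x).hasDerivWithinAt) (by simp) hsq hderiv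
    (Set.right_mem_Icc.2 (by norm_num : (0 : ℝ) ≤ 1 / 2))
  rw [Real.norm_eq_abs] at hmain
  convert hmain using 1
  · ring_nf
  · ring

/-- The sum of `F` over the points of the shifted lattice `(ℤ + θ) / E` with index at most `K` in
absolute value. -/
noncomputable def shiftedSum (F : ℝ → ℝ) (E K : ℕ) (θ : ℝ) : ℝ :=
  ∑ k ∈ Finset.Icc (-(K : ℤ)) K, F ((k + θ) / E)

variable {E K : ℕ} {F F' G : ℝ → ℝ} {I B T θ : ℝ}

lemma hasDerivAt_shiftedSum (hF : ∀ x, HasDerivAt F (F' x) x) (θ : ℝ) :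
    HasDerivAt (shiftedSum F E K) (shiftedSum F' E K θ / E) θ := by
  rw [shiftedSum, Finset.sum_div]
  refine HasDerivAt.fun_sum fun k _ => ?_
  have hinner : HasDerivAt (fun θ : ℝ => ((k : ℝ) + θ) / E) (1 / E) θ :=
    ((hasDerivAt_id θ).const_add (k : ℝ)).div_const _
  exact ((hF _).comp θ hinner).congr_deriv (mul_one_div _ _)

lemma abs_shiftedSum_le (hF : ∀ x, |F x| ≤ B) (θ : ℝ) :
    |shiftedSum F E K θ| ≤ (2 * K + 1) * B := by
  refine (Finset.abs_sum_le_sum_abs _ _).trans ?_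
  refine (Finset.sum_le_card_nsmul _ _ B fun k _ => hF _).trans_eq ?_
  rw [Int.card_Icc, show ((K : ℤ) + 1 - -(K : ℤ)).toNat = 2 * K + 1 by omega, nsmul_eq_mul]
  push_cast
  rfl

lemma shiftedSum_add_half_sub (hE : 0 < E) (hl : ∀ x ≤ -1, G x = 0) (hr : ∀ x, 1 ≤ x → G x = I)
    (hK : E + |θ| ≤ K) :
    shiftedSum G E K (θ + 1 / 2) - shiftedSum G E K (θ - 1 / 2) = I := by
  have hE' : (0 : ℝ) < E := by exact_mod_cast hE
  obtain ⟨hθl, hθr⟩ := abs_le.1 (le_refl |θ|)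
  have htel := sum_Icc_int_sub (fun k => G ((k + (θ - 1 / 2)) / E)) K
  push_cast at htel
  rw [hr _ (by rw [le_div_iff₀ hE']; linarith), hl _ (by rw [div_le_iff₀ hE']; linarith),
    sub_zero] at htel
  rw [shiftedSum, shiftedSum, ← Finset.sum_sub_distrib, ← htel]
  refine Finset.sum_congr rfl fun k _ => ?_
  ring_nf

/-- The difference of two half-step shifts of the lattice sum of an antiderivative telescopes to
the integral, and by symmetry its distance to the midpoint value is of second order. -/
lemma abs_shiftedSum_sub_le (hE : 0 < E) (hG : ∀ x, HasDerivAt G (F x) x)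
    (hF : ∀ x, HasDerivAt F (F' x) x) (hl : ∀ x ≤ -1, G x = 0) (hr : ∀ x, 1 ≤ x → G x = I)
    (hB : ∀ θ : ℝ, |θ| ≤ T + 1 / 2 → |shiftedSum F' E K θ| ≤ B) (hK : E + T ≤ K)
    (hθ : |θ| ≤ T) : |shiftedSum F E K θ - E * I| ≤ B / (4 * E) := by
  have hE' : (0 : ℝ) < E := by exact_mod_cast hE
  have hΦ (x : ℝ) : HasDerivAt (fun θ => E * shiftedSum G E K θ) (shiftedSum F E K x) x :=
    ((hasDerivAt_shiftedSum hG x).const_mul (E : ℝ)).congr_deriv (mul_div_cancel₀ _ hE'.ne')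
  have hP (x : ℝ) (hx : |x| ≤ 1 / 2) :
      |shiftedSum F E K (θ + x) - shiftedSum F E K θ| ≤ B / E * |x| := by
    have hmean := (convex_Icc (θ - 1 / 2) (θ + 1 / 2)).norm_image_sub_le_of_norm_hasDerivWithin_le
      (x := θ) (y := θ + x) (C := B / E)
      (fun y _ => (hasDerivAt_shiftedSum (E := E) (K := K) hF y).hasDerivWithinAt) ?_ ?_ ?_
    · simpa only [add_sub_cancel_left, Real.norm_eq_abs] using hmean
    · intro y hy
      rw [Real.norm_eq_abs, abs_div, abs_of_pos hE']
      gcongr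
      refine hB y ?_
      rw [abs_le] at hθ ⊢
      constructor <;> linarith [hy.1, hy.2]
    · constructor <;> linarith
    · rw [abs_le] at hx
      constructor <;> linarith
  have hmain := abs_sub_sub_le_of_hasDerivAt hΦ hP
  rwa [← mul_sub, shiftedSum_add_half_sub hE hl hr (by linarith), abs_sub_comm, div_div,
    mul_comm (E : ℝ) 4] at hmain

/-- `c 0, …, c r` are successive derivatives, all supported in `[-1, 1]`. -/
structure IsDerivChain (r : ℕ) (c : ℕ → ℝ → ℝ) : Prop where
  hasDerivAt : ∀ j < r, ∀ x, HasDerivAt (c j) (c (j + 1) x) x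
  eq_zero : ∀ j ≤ r, ∀ x, 1 ≤ |x| → c j x = 0

namespace IsDerivChain

variable {r : ℕ} {c : ℕ → ℝ → ℝ}

lemma eq_zero_of_le (hc : IsDerivChain r c) {j : ℕ} (hj : j ≤ r) {x : ℝ} (hx : x ≤ -1) :
    c j x = 0 :=
  hc.eq_zero j hj x (le_abs.2 (Or.inr (by linarith)))

lemma abs_shiftedSum_le (hc : IsDerivChain r c) (hB : ∀ x, |c r x| ≤ B) (hE : 0 < E)
    (hK : E + (r : ℝ) / 2 ≤ K) {i j : ℕ} (hj : j ≠ 0) (hij : i + j = r) {θ : ℝ}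
    (hθ : |θ| ≤ j / 2) :
    |shiftedSum (c j) E K θ| ≤ (2 * K + 1) * B / (4 * E) ^ i := by
  induction i generalizing j θ with
  | zero =>
    rw [← hij, zero_add] at hB
    rw [pow_zero, div_one]
    exact DualCertificate.abs_shiftedSum_le hB θ
  | succ i ih =>
    obtain ⟨j, rfl⟩ := Nat.exists_eq_succ_of_ne_zero hj
    have hjr : ((j + 1 : ℕ) : ℝ) ≤ r := by exact_mod_cast (by omega : j + 1 ≤ r)
    have hstep := abs_shiftedSum_sub_le (I := 0) (T := (j + 1 : ℕ) / 2) hE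
      (hc.hasDerivAt j (by omega)) (hc.hasDerivAt (j + 1) (by omega))
      (fun x hx => hc.eq_zero_of_le (by omega) hx)
      (fun x hx => hc.eq_zero j (by omega) x (hx.trans (le_abs_self x)))
      (fun θ hθ => ih (j := j + 2) (by omega) (by omega) (hθ.trans_eq (by push_cast; ring)))
      (by linarith) hθ
    rwa [mul_zero, sub_zero, div_div, ← pow_succ] at hstep

lemma continuous_zero (hc : IsDerivChain r c) (hr : r ≠ 0) : Continuous (c 0) :=
  continuous_iff_continuousAt.2 fun x => (hc.hasDerivAt 0 (by omega) x).continuousAt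

lemma integral_eq_zero_of_one_le_abs (hc : IsDerivChain r c) {a b : ℝ}
    (hab : ∀ x ∈ Set.uIcc a b, 1 ≤ |x|) : ∫ x in a..b, c 0 x = 0 := by
  rw [intervalIntegral.integral_congr (g := fun _ => 0)
    fun x hx => hc.eq_zero 0 (Nat.zero_le r) x (hab x hx)]
  exact intervalIntegral.integral_zero

lemma abs_shiftedSum_zero_sub_le (hc : IsDerivChain r c) (hr : 2 ≤ r) (hB : ∀ x, |c r x| ≤ B)
    (hE : 0 < E) (hK : E + (r : ℝ) / 2 ≤ K) :
    |shiftedSum (c 0) E K 0 - E * ∫ x in (-1)..1, c 0 x| ≤ (2 * K + 1) * B / (4 * E) ^ r := by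
  have hcont := hc.continuous_zero (by omega)
  have hint (a b : ℝ) : IntervalIntegrable (c 0) MeasureTheory.volume a b :=
    hcont.intervalIntegrable a b
  obtain ⟨q, rfl⟩ : ∃ q, r = q + 1 := ⟨r - 1, by omega⟩
  have hmain := abs_shiftedSum_sub_le (G := fun x => ∫ y in (-1)..x, c 0 y) (T := 0) (θ := 0)
    (E := E) (K := K) (I := ∫ x in (-1)..1, c 0 x) hE
    (fun x => intervalIntegral.integral_hasDerivAt_right (hint _ _)
      hcont.aestronglyMeasurable.stronglyMeasurableAtFilter hcont.continuousAt)
    (hc.hasDerivAt 0 (by omega))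
    (fun x hx => hc.integral_eq_zero_of_one_le_abs fun y hy => ?_) (fun x hx => ?_)
    (fun θ hθ => hc.abs_shiftedSum_le hB hE hK (i := q) one_ne_zero rfl
      (hθ.trans_eq (by norm_num))) ?_ (by simp)
  · rwa [div_div, ← pow_succ] at hmain
  · rw [Set.uIcc_of_ge hx] at hy
    exact le_abs.2 (Or.inr (by linarith [hy.2]))
  · rw [← intervalIntegral.integral_add_adjacent_intervals (hint (-1) 1) (hint 1 x),
      hc.integral_eq_zero_of_one_le_abs (a := 1) (b := x) fun y hy => ?_, add_zero]
    rw [Set.uIcc_of_le hx] at hy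
    exact hy.1.trans (le_abs_self y)
  · linarith [show (0 : ℝ) ≤ ((q + 1 : ℕ) : ℝ) / 2 by positivity]

lemma abs_sum_sub_integral_le (hc : IsDerivChain r c) (hr : 2 ≤ r) (hB : ∀ x, |c r x| ≤ B)
    (N : ℕ) :
    |∑ k ∈ Finset.Icc (-(N : ℤ)) N, c 0 (k / (N + 1)) - (N + 1) * ∫ x in (-1)..1, c 0 x| ≤
      (2 * (N + 1 + r) + 1) * B / (4 * (N + 1)) ^ r := by
  have hsum : ∑ k ∈ Finset.Icc (-(N : ℤ)) N, c 0 (k / (N + 1)) =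
      shiftedSum (c 0) (N + 1) (N + 1 + r) 0 := by
    simp only [shiftedSum, add_zero, Nat.cast_add, Nat.cast_one]
    refine Finset.sum_subset (Finset.Icc_subset_Icc (by omega) (by omega)) fun k _ hk => ?_
    have hk' : (N : ℤ) + 1 ≤ |k| := by
      rw [Finset.mem_Icc, ← abs_le] at hk
      omega
    refine hc.eq_zero 0 (Nat.zero_le r) _ ?_
    rw [abs_div, abs_of_pos (by positivity : (0 : ℝ) < N + 1), one_le_div (by positivity)]
    exact_mod_cast hk'
  have hmain := hc.abs_shiftedSum_zero_sub_le hr hB (E := N + 1) (K := N + 1 + r) N.succ_pos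
    (by push_cast; linarith [(Nat.cast_nonneg r : (0 : ℝ) ≤ r)])
  rw [hsum]
  exact_mod_cast hmain

end IsDerivChain

/-- The successive derivatives of `x ↦ x * c 0 x`, given the successive derivatives `c` of
`c 0`. -/
def mulVar (c : ℕ → ℝ → ℝ) (j : ℕ) (x : ℝ) : ℝ := x * c j x + j * c (j - 1) x

lemma mulVar_iterate_zero (c : ℕ → ℝ → ℝ) (m : ℕ) (x : ℝ) :
    mulVar^[m] c 0 x = x ^ m * c 0 x := by
  induction m with
  | zero => rw [Function.iterate_zero, id_eq, pow_zero, one_mul]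
  | succ m ih =>
    rw [Function.iterate_succ_apply', mulVar, ih, Nat.cast_zero, zero_mul, add_zero, ← mul_assoc,
      pow_succ']

namespace IsDerivChain

variable {r : ℕ} {c : ℕ → ℝ → ℝ}

lemma mulVar (hc : IsDerivChain r c) : IsDerivChain r (mulVar c) where
  hasDerivAt j hj x := by
    have hmul := (hasDerivAt_id x).mul (hc.hasDerivAt j hj x)
    rcases j with _ | j
    · have hzero : DualCertificate.mulVar c 0 = fun x => x * c 0 x :=
        funext fun y => by simp [DualCertificate.mulVar]
      rw [hzero]
      refine hmul.congr_deriv ?_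
      simp [DualCertificate.mulVar, add_comm]
    · refine (hmul.add ((hc.hasDerivAt j (by omega) x).const_mul ((j + 1 : ℕ) : ℝ))).congr_deriv ?_
      simp only [id_eq, one_mul, DualCertificate.mulVar, Nat.add_sub_cancel]
      push_cast
      ring
  eq_zero j hj x hx := by
    rw [DualCertificate.mulVar, hc.eq_zero j hj x hx, hc.eq_zero (j - 1) (by omega) x hx,
      mul_zero, mul_zero, add_zero]

lemma mulVar_iterate (hc : IsDerivChain r c) (m : ℕ) :
    IsDerivChain r (DualCertificate.mulVar^[m] c) := by
  induction m with
  | zero => exact hc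
  | succ m ih => rw [Function.iterate_succ_apply']; exact ih.mulVar

lemma abs_mulVar_le (hc : IsDerivChain r c) {b : ℕ → ℝ} (hb : ∀ j ≤ r, ∀ x, |c j x| ≤ b j)
    {j : ℕ} (hj : j ≤ r) (x : ℝ) : |DualCertificate.mulVar c j x| ≤ b j + j * b (j - 1) := by
  have hbj := hb j hj x
  have hbj' := hb (j - 1) (by omega) x
  rcases le_or_gt 1 |x| with hx | hx
  · have hj0 := (abs_nonneg _).trans hbj
    have hj0' := (abs_nonneg _).trans hbj'
    rw [hc.mulVar.eq_zero j hj x hx, abs_zero]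
    positivity
  · refine (abs_add_le _ _).trans (add_le_add ?_ ?_)
    · rw [abs_mul]
      exact (mul_le_of_le_one_left (abs_nonneg _) hx.le).trans hbj
    · rw [abs_mul, Nat.abs_cast]
      gcongr

lemma abs_mulVar_iterate_le (hc : IsDerivChain r c) {b : ℕ → ℝ}
    (hb : ∀ j ≤ r, ∀ x, |c j x| ≤ b j) (m : ℕ) {j : ℕ} (hj : j ≤ r) (x : ℝ) :
    |DualCertificate.mulVar^[m] c j x| ≤ (fun (b : ℕ → ℝ) j => b j + j * b (j - 1))^[m] b j := by
  induction m generalizing j x with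
  | zero => exact hb j hj x
  | succ m ih =>
    rw [Function.iterate_succ_apply', Function.iterate_succ_apply']
    exact (hc.mulVar_iterate m).abs_mulVar_le (fun j hj x => ih hj x) hj x

end IsDerivChain

end Quadrature

section SplineSample

open Real

lemma tan_pi_div_sixteen_le : tan (π / 16) ≤ 1 / 4 := by
  have hx0 : 0 ≤ π / 16 := by positivity
  have hx : π / 16 ≤ 0.2 := by linarith [pi_lt_d2]
  have hcos := one_sub_sq_div_two_le_cos (x := π / 16)
  have hsin := sin_le hx0
  rw [tan_eq_sin_div_cos, div_le_iff₀ (by nlinarith)]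
  nlinarith

lemma isDerivChain_perfectSpline_eight :
    IsDerivChain 6 fun j => perfectSpline 8 0 (7 - j) where
  hasDerivAt j hj x := by
    have h := hasDerivAt_perfectSpline 8 0 (5 - j) x
    rwa [show 5 - j + 2 = 7 - j by omega, show 5 - j + 1 = 7 - (j + 1) by omega] at h
  eq_zero j hj x hx := by
    rcases le_abs'.1 hx with h | h
    · rw [show 7 - j = 6 - j + 1 by omega]
      exact perfectSpline_succ_eq_zero_of_le 8 0 _ h
    · exact perfectSpline_eq_zero_of_one_le (by omega) h

lemma abs_perfectSpline_eight_le {j : ℕ} (hj : j ≤ 6) (x : ℝ) :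
    |perfectSpline 8 0 (7 - j) x| ≤ 1 / 4 := by
  have h := abs_perfectSpline_zero_succ_le (s := 8) (k := 6 - j) (by omega) x
  rw [show 6 - j + 1 = 7 - j by omega, show π / (2 * (8 : ℕ)) = π / 16 by norm_num] at h
  exact h.trans tan_pi_div_sixteen_le

/-- The values of the perfect B-spline of order `7` at the multiples of `1 / (N + 1)`. -/
noncomputable def sample (N : ℕ) (k : ℤ) : ℝ := perfectSpline 8 0 7 (k / (N + 1))

lemma sample_nonneg (N : ℕ) (k : ℤ) : 0 ≤ sample N k :=
  perfectSpline_zero_nonneg (s := 8) (by norm_num) _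

lemma abs_sum_pow_mul_sample_sub_le {N : ℕ} (hN : 20 ≤ N) (m : ℕ) :
    |(∑ k ∈ Finset.Icc (-(N : ℤ)) N, ((k : ℝ) / (N + 1)) ^ m * sample N k : ℝ) -
      (N + 1) * (m.factorial / (m + 8).factorial * knotMoment 8 (m + 8))| ≤
      (N + 1) * (fun (b : ℕ → ℝ) j => b j + j * b (j - 1))^[m] (fun _ => 1 / 4) 6 *
        (3 / 84 ^ 6) := by
  set B := (fun (b : ℕ → ℝ) j => b j + j * b (j - 1))^[m] (fun _ => 1 / 4) 6
  have hB := isDerivChain_perfectSpline_eight.abs_mulVar_iterate_le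
    (fun j hj x => abs_perfectSpline_eight_le hj x) m le_rfl
  have hsum := (isDerivChain_perfectSpline_eight.mulVar_iterate m).abs_sum_sub_integral_le
    (by norm_num) hB N
  simp only [mulVar_iterate_zero, Nat.sub_zero] at hsum
  have hmoment := integral_pow_mul_perfectSpline (s := 8) (by norm_num) m
  norm_num only at hmoment
  rw [hmoment, one_mul] at hsum
  refine hsum.trans ?_
  have hB0 : 0 ≤ B := (abs_nonneg _).trans (hB 0)
  have hN' : (21 : ℝ) ≤ N + 1 := by
    have : (20 : ℝ) ≤ N := by exact_mod_cast hN
    linarith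
  calc (2 * ((N : ℝ) + 1 + (6 : ℕ)) + 1) * B / (4 * (N + 1)) ^ 6
      ≤ 3 * (N + 1) * B / (4 * 21) ^ 6 := by
        gcongr
        push_cast
        linarith
    _ = (N + 1) * B * (3 / 84 ^ 6) := by ring

end SplineSample

section ForwardDifference

open MeasureTheory

/-- The `m`-th forward differences of `f` with step `h`, taken along any translate of `hℤ`, have
absolute values summing to at most `C`. -/
def FwdDiffBound (h : ℝ) (f : ℝ → ℝ) (m : ℕ) (C : ℝ) : Prop :=
  ∀ (x : ℝ) (J : Finset ℤ), ∑ k ∈ J, |(fwdDiff h)^[m] f (x + k * h)| ≤ C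

variable {h C C' : ℝ} {f g F : ℝ → ℝ} {m : ℕ}

namespace FwdDiffBound

lemma add (hf : FwdDiffBound h f m C) (hg : FwdDiffBound h g m C') :
    FwdDiffBound h (f + g) m (C + C') := by
  intro x J
  rw [fwdDiff_iter_add]
  refine (Finset.sum_le_sum fun k _ => abs_add_le _ _).trans ?_
  rw [Finset.sum_add_distrib]
  exact add_le_add (hf x J) (hg x J)

lemma const_mul (hf : FwdDiffBound h f m C) (a : ℝ) :
    FwdDiffBound h (fun x => a * f x) m (|a| * C) := by
  intro x J
  rw [show (fun x => a * f x) = a • f from rfl, fwdDiff_iter_const_smul]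
  simp only [Pi.smul_apply, smul_eq_mul, abs_mul, ← Finset.mul_sum]
  exact mul_le_mul_of_nonneg_left (hf x J) (abs_nonneg a)

lemma sum {ι : Type*} {f : ι → ℝ → ℝ} {C : ι → ℝ} (I : Finset ι)
    (hf : ∀ i ∈ I, FwdDiffBound h (f i) m (C i)) :
    FwdDiffBound h (∑ i ∈ I, f i) m (∑ i ∈ I, C i) := by
  intro x J
  rw [fwdDiff_iter_finsetSum]
  simp only [Finset.sum_apply]
  refine (Finset.sum_le_sum fun k _ => Finset.abs_sum_le_sum_abs _ _).trans ?_
  rw [Finset.sum_comm]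
  exact Finset.sum_le_sum fun i hi => hf i hi x J

end FwdDiffBound

lemma intervalIntegrable_fwdDiff_iter (hf : ∀ a b, IntervalIntegrable f volume a b) (h : ℝ)
    (m : ℕ) (a b : ℝ) : IntervalIntegrable ((fwdDiff h)^[m] f) volume a b := by
  induction m generalizing a b with
  | zero => exact hf a b
  | succ m ih =>
    rw [Function.iterate_succ_apply']
    have hshift := (ih (a + h) (b + h)).comp_add_right h
    simp only [add_sub_cancel_right] at hshift
    exact hshift.sub (ih a b)

lemma intervalIntegrable_fwdDiff_iter_add (hf : ∀ a b, IntervalIntegrable f volume a b) (h : ℝ)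
    (m : ℕ) (y : ℝ) : IntervalIntegrable (fun u => (fwdDiff h)^[m] f (y + u)) volume 0 h := by
  simpa only [sub_self, add_sub_cancel_left] using
    (intervalIntegrable_fwdDiff_iter hf h m y (y + h)).comp_add_left y

lemma fwdDiff_iter_succ_eq_integral (hf : ∀ a b, IntervalIntegrable f volume a b)
    (hF : ∀ a b, ∫ u in a..b, f u = F b - F a) (m : ℕ) (y : ℝ) :
    (fwdDiff h)^[m + 1] F y = ∫ u in 0..h, (fwdDiff h)^[m] f (y + u) := by
  induction m generalizing y with
  | zero =>
    rw [zero_add, Function.iterate_one, fwdDiff, ← hF, Function.iterate_zero, id,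
      intervalIntegral.integral_comp_add_left, add_zero]
  | succ m ih =>
    rw [Function.iterate_succ_apply', fwdDiff, ih, ih, ← intervalIntegral.integral_sub
      (intervalIntegrable_fwdDiff_iter_add hf h m _)
      (intervalIntegrable_fwdDiff_iter_add hf h m _)]
    refine intervalIntegral.integral_congr fun u _ => ?_
    simp only [Function.iterate_succ_apply', fwdDiff, add_right_comm]

lemma FwdDiffBound.integral (hh : 0 ≤ h) (hfm : FwdDiffBound h f m C)
    (hf : ∀ a b, IntervalIntegrable f volume a b) (hF : ∀ a b, ∫ u in a..b, f u = F b - F a) :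
    FwdDiffBound h F (m + 1) (h * C) := by
  intro x J
  have hint (y : ℝ) := intervalIntegrable_fwdDiff_iter_add hf h m y
  have hsum : IntervalIntegrable (fun u => ∑ k ∈ J, |(fwdDiff h)^[m] f (x + k * h + u)|)
      volume 0 h := by
    have hsum' := IntervalIntegrable.sum J fun k _ => (hint (x + k * h)).abs
    rwa [Finset.sum_fn] at hsum'
  calc ∑ k ∈ J, |(fwdDiff h)^[m + 1] F (x + k * h)|
      ≤ ∑ k ∈ J, ∫ u in 0..h, |(fwdDiff h)^[m] f (x + k * h + u)| := by
        refine Finset.sum_le_sum fun k _ => ?_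
        rw [fwdDiff_iter_succ_eq_integral hf hF]
        exact intervalIntegral.abs_integral_le_integral_abs hh
    _ = ∫ u in 0..h, ∑ k ∈ J, |(fwdDiff h)^[m] f (x + k * h + u)| :=
        (intervalIntegral.integral_finsetSum fun k _ => (hint _).abs).symm
    _ ≤ ∫ _u in 0..h, C := by
        refine intervalIntegral.integral_mono_on hh hsum (by simp) fun u _ => ?_
        simpa only [add_right_comm] using hfm (x + u) J
    _ = h * C := by rw [intervalIntegral.integral_const, sub_zero, smul_eq_mul]

lemma fwdDiffBound_perfectSpline_add (hh : 0 ≤ h) {s l k : ℕ}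
    (hb : FwdDiffBound h (perfectSpline s l k) m C) (n : ℕ) :
    FwdDiffBound h (perfectSpline s l (k + n)) (m + n) (h ^ n * C) := by
  induction n with
  | zero => simpa only [pow_zero, one_mul, add_zero] using hb
  | succ n ih =>
    rw [pow_succ', mul_assoc]
    exact ih.integral hh (intervalIntegrable_splineSum _ _ _ _) (integral_perfectSpline s l (k + n))

lemma exists_subset_Icc_neg (J : Finset ℤ) : ∃ K : ℕ, J ⊆ Finset.Icc (-(K : ℤ)) K := by
  refine ⟨∑ k ∈ J, k.natAbs, fun k hk => ?_⟩
  have hle := Finset.single_le_sum (f := Int.natAbs) (fun _ _ => Nat.zero_le _) hk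
  rw [Finset.mem_Icc]
  omega

lemma FwdDiffBound.of_monotone (hh : 0 ≤ h) (hf : Monotone f) {a b : ℝ}
    (hab : ∀ x, f x ∈ Set.Icc a b) : FwdDiffBound h f 1 (b - a) := by
  intro x J
  obtain ⟨K, hK⟩ := exists_subset_Icc_neg J
  have htel := sum_Icc_int_sub (fun k => f (x + k * h)) K
  calc ∑ k ∈ J, |(fwdDiff h)^[1] f (x + k * h)|
      ≤ ∑ k ∈ Finset.Icc (-(K : ℤ)) K, |(fwdDiff h)^[1] f (x + k * h)| :=
        Finset.sum_le_sum_of_subset_of_nonneg hK fun _ _ _ => abs_nonneg _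
    _ = ∑ k ∈ Finset.Icc (-(K : ℤ)) K, (f (x + (k + 1 : ℤ) * h) - f (x + k * h)) := by
        refine Finset.sum_congr rfl fun k _ => ?_
        rw [Function.iterate_one, fwdDiff, abs_of_nonneg (sub_nonneg.2 (hf (by linarith)))]
        push_cast
        ring_nf
    _ ≤ b - a := htel.trans_le (sub_le_sub (hab _).2 (hab _).1)

lemma fwdDiffBound_truncPow_zero_sub (hh : 0 ≤ h) (t : ℝ) :
    FwdDiffBound h (fun x => truncPow 0 (x - t)) 1 1 := by
  have hmono : Monotone fun x => truncPow 0 (x - t) :=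
    fun u v huv => monotone_truncPow_zero (sub_le_sub_right huv t)
  have hmem (x : ℝ) : truncPow 0 (x - t) ∈ Set.Icc 0 1 := by
    unfold truncPow
    split_ifs <;> simp
  simpa only [sub_zero] using FwdDiffBound.of_monotone hh hmono hmem

lemma fwdDiffBound_perfectSpline_zero (hh : 0 ≤ h) (s l : ℕ) :
    FwdDiffBound h (perfectSpline s l 0) 1 (2 * s) := by
  have hsum := FwdDiffBound.sum (Finset.Ico (-(s : ℤ)) s) fun j _ =>
    (fwdDiffBound_truncPow_zero_sub hh (perfectKnot s j)).const_mul
      ((-1) ^ j * perfectKnot s j ^ l)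
  rw [Finset.sum_fn] at hsum
  intro x J
  refine (hsum x J).trans ((Finset.sum_le_card_nsmul _ _ 1 fun j _ => ?_).trans_eq ?_)
  · rw [mul_one, abs_mul, abs_zpow, abs_neg, abs_one, one_zpow, one_mul, abs_pow]
    exact pow_le_one₀ (abs_nonneg _) (abs_perfectKnot_le_one s j)
  · rw [Int.card_Ico, show ((s : ℤ) - -(s : ℤ)).toNat = 2 * s by omega, nsmul_one]
    push_cast
    rfl

lemma FwdDiffBound.of_support {E : ℕ} (hE : 0 < E) (hC : ∀ x, |f x| ≤ C)
    (hl : ∀ x < -1, f x = 0) (hr : ∀ x, 1 ≤ x → f x = 0) :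
    FwdDiffBound (1 / E) f 0 (2 * E * C) := by
  have hE' : (0 : ℝ) < E := by exact_mod_cast hE
  intro x J
  simp only [Function.iterate_zero, id]
  set a : ℤ := ⌈-(E : ℝ) - x * E⌉
  have hzero (k : ℤ) (hk : k ∉ Finset.Ico a (a + 2 * E)) : f (x + k * (1 / E)) = 0 := by
    have hpoint : x + k * (1 / E) = (x * E + k) / E := by field_simp
    rw [Finset.mem_Ico, not_and_or, not_le, not_lt] at hk
    rcases hk with hk | hk
    · rw [Int.lt_ceil] at hk
      exact hl _ (by rw [hpoint, div_lt_iff₀ hE']; linarith)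
    · have hk' : (a : ℝ) + 2 * E ≤ k := by exact_mod_cast hk
      exact hr _ (by rw [hpoint, le_div_iff₀ hE']; linarith [Int.le_ceil (-(E : ℝ) - x * E)])
  calc ∑ k ∈ J, |f (x + k * (1 / E))|
      = ∑ k ∈ J with k ∈ Finset.Ico a (a + 2 * E), |f (x + k * (1 / E))| := by
        refine (Finset.sum_filter_of_ne fun k _ hk => ?_).symm
        by_contra hmem
        exact hk (by rw [hzero k hmem, abs_zero])
    _ ≤ ∑ k ∈ Finset.Ico a (a + 2 * E), |f (x + k * (1 / E))| :=
        Finset.sum_le_sum_of_subset_of_nonneg (fun k hk => (Finset.mem_filter.1 hk).2)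
          fun _ _ _ => abs_nonneg _
    _ ≤ (Finset.Ico a (a + 2 * E)).card • C := Finset.sum_le_card_nsmul _ _ _ fun k _ => hC _
    _ = 2 * E * C := by
        rw [Int.card_Ico, show (a + 2 * (E : ℤ) - a).toNat = 2 * E by omega, nsmul_eq_mul]
        push_cast
        rfl

lemma fwdDiffBound_perfectSpline_of_abs_le {E s l k n : ℕ} (hE : 0 < E) (hlk : l + k < s)
    (hC : ∀ x, |perfectSpline s l k x| ≤ C) :
    FwdDiffBound (1 / E) (perfectSpline s l (k + n)) n ((1 / E) ^ n * (2 * E * C)) := by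
  simpa only [zero_add] using fwdDiffBound_perfectSpline_add (by positivity)
    (FwdDiffBound.of_support hE hC (fun _ hx => perfectSpline_eq_zero_of_lt s l k hx)
      fun _ hx => perfectSpline_eq_zero_of_one_le hlk hx) n

variable {E : ℕ}

lemma fwdDiffBound_perfectSpline_seven (l : ℕ) :
    FwdDiffBound (1 / E) (perfectSpline 8 l 7) 8 (16 * (1 / E) ^ 7) := by
  have hb := fwdDiffBound_perfectSpline_add (by positivity)
    (fwdDiffBound_perfectSpline_zero (h := 1 / (E : ℝ)) (by positivity) 8 l) 7
  convert hb using 1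
  push_cast
  ring

lemma fwdDiffBound_mul_perfectSpline_seven (hE : 0 < E) :
    FwdDiffBound (1 / E) (fun x => x * perfectSpline 8 0 7 x) 8 (32 * (1 / E) ^ 7) := by
  have hdecomp : (fun x => x * perfectSpline 8 0 7 x) =
      (fun x => 8 * perfectSpline 8 0 8 x) + perfectSpline 8 1 7 := by
    ext x
    rw [Pi.add_apply, mul_perfectSpline]
    norm_num
  have hb := fwdDiffBound_perfectSpline_of_abs_le (n := 8) hE (by norm_num)
    (abs_perfectSpline_zero_zero_le_one (s := 8) (by norm_num))
  rw [hdecomp]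
  convert (hb.const_mul 8).add (fwdDiffBound_perfectSpline_seven 1) using 1
  rw [abs_of_pos (by norm_num)]
  field_simp
  norm_num

lemma fwdDiffBound_sq_mul_perfectSpline_seven (hE : 0 < E) :
    FwdDiffBound (1 / E) (fun x => x ^ 2 * perfectSpline 8 0 7 x) 8 (84 * (1 / E) ^ 7) := by
  have hdecomp : (fun x => x ^ 2 * perfectSpline 8 0 7 x) =
      (fun x => 72 * perfectSpline 8 0 9 x) + (fun x => 16 * perfectSpline 8 1 8 x) +
        perfectSpline 8 2 7 := by
    ext x
    simp only [Pi.add_apply]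
    rw [sq, mul_assoc, mul_perfectSpline, mul_add, mul_left_comm, mul_perfectSpline 8 0 8,
      mul_perfectSpline 8 1 7]
    norm_num
    ring
  have hb0 := fwdDiffBound_perfectSpline_of_abs_le (n := 8) hE (by norm_num)
    fun x => abs_perfectSpline_eight_le (j := 6) le_rfl x
  have hb1 := fwdDiffBound_perfectSpline_of_abs_le (n := 8) hE (by norm_num)
    (abs_perfectSpline_one_zero_le_one (s := 8) (by norm_num))
  rw [hdecomp]
  convert ((hb0.const_mul 72).add (hb1.const_mul 16)).add
    (fwdDiffBound_perfectSpline_seven 2) using 1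
  rw [abs_of_pos (by norm_num), abs_of_pos (by norm_num)]
  field_simp
  norm_num

end ForwardDifference

section SummationByParts

variable {a : ℤ → ℂ} {z : ℂ}

lemma tsum_fwdDiff_mul_zpow (ha : a.support.Finite) (hz : z ≠ 0) :
    ∑' k : ℤ, fwdDiff 1 a k * z ^ k = (z⁻¹ - 1) * ∑' k : ℤ, a k * z ^ k := by
  have hsum : Summable fun k : ℤ => a k * z ^ k :=
    summable_of_hasFiniteSupport (ha.subset fun k hk => left_ne_zero_of_mul hk)
  have hsum_shift : Summable fun k : ℤ => a (k + 1) * z ^ (k + 1) :=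
    ((Equiv.addRight (1 : ℤ)).summable_iff (f := fun k : ℤ => a k * z ^ k)).2 hsum
  have htsum_shift : ∑' k : ℤ, a (k + 1) * z ^ (k + 1) = ∑' k : ℤ, a k * z ^ k :=
    (Equiv.addRight (1 : ℤ)).tsum_eq (fun k : ℤ => a k * z ^ k)
  have hterm (k : ℤ) :
      fwdDiff 1 a k * z ^ k = z⁻¹ * (a (k + 1) * z ^ (k + 1)) - a k * z ^ k := by
    rw [fwdDiff, zpow_add_one₀ hz]
    field_simp
  simp_rw [hterm]
  rw [(hsum_shift.mul_left _).tsum_sub hsum, tsum_mul_left, htsum_shift]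
  ring

lemma finite_support_fwdDiff (ha : a.support.Finite) : (fwdDiff 1 a).support.Finite := by
  have hshift := ha.preimage (f := fun k : ℤ => k + 1) (add_left_injective 1).injOn
  refine (hshift.union ha).subset fun k hk => ?_
  by_contra hout
  simp only [Set.mem_union, Set.mem_preimage, Function.mem_support, not_or, not_not] at hout
  exact hk (by rw [fwdDiff, hout.1, hout.2, sub_zero])

lemma finite_support_fwdDiff_iter (ha : a.support.Finite) (m : ℕ) :
    ((fwdDiff 1)^[m] a).support.Finite := by
  induction m with
  | zero => exact ha
  | succ m ih =>
    rw [Function.iterate_succ_apply']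
    exact finite_support_fwdDiff ih

lemma tsum_fwdDiff_iter_mul_zpow (ha : a.support.Finite) (hz : z ≠ 0) (m : ℕ) :
    ∑' k : ℤ, (fwdDiff 1)^[m] a k * z ^ k = (z⁻¹ - 1) ^ m * ∑' k : ℤ, a k * z ^ k := by
  induction m with
  | zero => rw [pow_zero, one_mul, Function.iterate_zero, id]
  | succ m ih =>
    rw [Function.iterate_succ_apply', tsum_fwdDiff_mul_zpow (finite_support_fwdDiff_iter ha m) hz,
      ih, pow_succ', mul_assoc]

lemma norm_inv_sub_one_pow_mul_norm_tsum_le (ha : a.support.Finite) (hz : ‖z‖ = 1) {m : ℕ}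
    {C : ℝ} (hC : ∀ J : Finset ℤ, ∑ k ∈ J, ‖(fwdDiff 1)^[m] a k‖ ≤ C) :
    ‖z⁻¹ - 1‖ ^ m * ‖∑' k : ℤ, a k * z ^ k‖ ≤ C := by
  have hz0 : z ≠ 0 := norm_ne_zero_iff.1 (hz ▸ one_ne_zero)
  have hterm (k : ℤ) : ‖(fwdDiff 1)^[m] a k * z ^ k‖ = ‖(fwdDiff 1)^[m] a k‖ := by
    rw [norm_mul, norm_zpow, hz, one_zpow, mul_one]
  have hsum : Summable fun k : ℤ => ‖(fwdDiff 1)^[m] a k * z ^ k‖ := by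
    refine summable_of_hasFiniteSupport ((finite_support_fwdDiff_iter ha m).subset fun k hk => ?_)
    exact left_ne_zero_of_mul (norm_ne_zero_iff.1 hk)
  rw [← norm_pow, ← norm_mul, ← tsum_fwdDiff_iter_mul_zpow ha hz0]
  refine (norm_tsum_le_tsum_norm hsum).trans (hsum.tsum_le_of_sum_le fun J => ?_)
  simpa only [hterm] using hC J

lemma norm_exp_mul_I_inv_sub_one (t : ℝ) :
    ‖(Complex.exp (t * Complex.I))⁻¹ - 1‖ = 2 * |Real.sin (t / 2)| := by
  have harg : -((t : ℂ) * Complex.I) = Complex.I * ((-t : ℝ) : ℂ) := by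
    push_cast
    ring
  rw [← Complex.exp_neg, harg, Complex.norm_exp_I_mul_ofReal_sub_one, Real.norm_eq_abs, abs_mul,
    neg_div, Real.sin_neg, abs_neg, abs_two]

lemma fwdDiff_iter_ofReal (F : ℝ → ℝ) (h : ℝ) (m : ℕ) (k : ℤ) :
    (fwdDiff 1)^[m] (fun k : ℤ => (F (k * h) : ℂ)) k = ((fwdDiff h)^[m] F (k * h) : ℝ) := by
  induction m generalizing k with
  | zero => rfl
  | succ m ih =>
    simp only [Function.iterate_succ_apply', fwdDiff, ih]
    push_cast
    rw [add_one_mul]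

lemma apply_int_mul_eq_zero {F : ℝ → ℝ} {N : ℕ} (hF : ∀ x, 1 ≤ |x| → F x = 0) {k : ℤ}
    (hk : k ∉ Finset.Icc (-(N : ℤ)) N) : F (k * (1 / ((N + 1 : ℕ) : ℝ))) = 0 := by
  have hN : (0 : ℝ) < (N + 1 : ℕ) := by positivity
  have hk' : ((N + 1 : ℕ) : ℤ) ≤ |k| := by
    rw [Finset.mem_Icc, not_and_or, not_le, not_le] at hk
    rw [le_abs]
    omega
  refine hF _ ?_
  rw [mul_one_div, abs_div, abs_of_pos hN, le_div_iff₀ hN, one_mul]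
  exact_mod_cast hk'

lemma FwdDiffBound.norm_sum_mul_exp_le {F : ℝ → ℝ} {C : ℝ} {N m : ℕ}
    (hC : FwdDiffBound (1 / ((N + 1 : ℕ) : ℝ)) F m C) (hF : ∀ x, 1 ≤ |x| → F x = 0) (t : ℝ) :
    (2 * |Real.sin (t / 2)|) ^ m * ‖∑ k ∈ Finset.Icc (-(N : ℤ)) N,
      (F (k / (N + 1)) : ℂ) * Complex.exp ((k * t : ℝ) * Complex.I)‖ ≤ C := by
  set a : ℤ → ℂ := fun k => (F (k * (1 / ((N + 1 : ℕ) : ℝ))) : ℂ) with ha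
  have ha_zero (k : ℤ) (hk : k ∉ Finset.Icc (-(N : ℤ)) N) : a k = 0 := by
    rw [ha, Complex.ofReal_eq_zero]
    exact apply_int_mul_eq_zero hF hk
  have ha_supp : a.support.Finite :=
    (Finset.Icc (-(N : ℤ)) N).finite_toSet.subset fun k hk => by
      by_contra hout
      exact hk (ha_zero k hout)
  have hsum : ∑ k ∈ Finset.Icc (-(N : ℤ)) N, (F (k / (N + 1)) : ℂ) *
      Complex.exp ((k * t : ℝ) * Complex.I) =
      ∑' k : ℤ, a k * Complex.exp (t * Complex.I) ^ k := by
    rw [tsum_eq_sum (s := Finset.Icc (-(N : ℤ)) N)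
      fun k hk => by rw [ha_zero k hk, zero_mul]]
    refine Finset.sum_congr rfl fun k _ => ?_
    rw [← Complex.exp_int_mul, ha]
    push_cast
    rw [mul_one_div, mul_assoc]
  rw [hsum, ← norm_exp_mul_I_inv_sub_one]
  refine norm_inv_sub_one_pow_mul_norm_tsum_le ha_supp (Complex.norm_exp_ofReal_mul_I t)
    fun J => ?_
  simpa only [ha, fwdDiff_iter_ofReal, Complex.norm_real, Real.norm_eq_abs, zero_add] using hC 0 J

end SummationByParts

section SampleMoments

variable {N : ℕ}

lemma knotMoment_eight_eight : knotMoment 8 8 = 1 / 8 := by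
  rw [knotMoment_eq (by norm_num)]
  norm_num [Finset.sum_range_succ, Nat.choose]

lemma knotMoment_eight_ten : knotMoment 8 10 = 5 / 16 := by
  rw [knotMoment_eq (by norm_num)]
  norm_num [Finset.sum_range_succ, Nat.choose]

lemma knotMoment_eight_twelve : knotMoment 8 12 = 33 / 64 := by
  rw [knotMoment_eq (by norm_num)]
  norm_num [Finset.sum_range_succ, Nat.choose]

lemma abs_sum_sample_sub_le (hN : 20 ≤ N) :
    |(∑ k ∈ Finset.Icc (-(N : ℤ)) N, sample N k) - (N + 1) * (1 / 322560)| ≤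
      (N + 1) * (1 / 4) * (3 / 84 ^ 6) := by
  have hm := abs_sum_pow_mul_sample_sub_le hN 0
  rw [knotMoment_eight_eight] at hm
  norm_num [Nat.factorial] at hm ⊢
  exact hm

lemma abs_sum_sq_mul_sample_sub_le (hN : 20 ≤ N) :
    |(∑ k ∈ Finset.Icc (-(N : ℤ)) N, ((k : ℝ) / (N + 1)) ^ 2 * sample N k : ℝ) -
      (N + 1) * (1 / 322560 / 18)| ≤ (N + 1) * (43 / 4) * (3 / 84 ^ 6) := by
  have hm := abs_sum_pow_mul_sample_sub_le hN 2
  rw [knotMoment_eight_ten] at hm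
  norm_num [Nat.factorial] at hm ⊢
  exact hm

lemma abs_sum_pow_four_mul_sample_sub_le (hN : 20 ≤ N) :
    |(∑ k ∈ Finset.Icc (-(N : ℤ)) N, ((k : ℝ) / (N + 1)) ^ 4 * sample N k : ℝ) -
      (N + 1) * (1 / 322560 / 120)| ≤ (N + 1) * (1045 / 4) * (3 / 84 ^ 6) := by
  have hm := abs_sum_pow_mul_sample_sub_le hN 4
  rw [knotMoment_eight_twelve] at hm
  norm_num [Nat.factorial] at hm ⊢
  exact hm

lemma sum_sample_mem_Icc (hN : 20 ≤ N) : ∑ k ∈ Finset.Icc (-(N : ℤ)) N, sample N k ∈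
    Set.Icc ((N + 1) * (0.999999 / 322560) : ℝ) ((N + 1) * (1.000001 / 322560)) := by
  have hsum := abs_le.1 (abs_sum_sample_sub_le hN)
  have : (0 : ℝ) < N + 1 := by positivity
  norm_num at hsum ⊢
  constructor <;> linarith

lemma sum_sample_pos (hN : 20 ≤ N) : 0 < ∑ k ∈ Finset.Icc (-(N : ℤ)) N, sample N k :=
  lt_of_lt_of_le (by positivity) (sum_sample_mem_Icc hN).1

end SampleMoments

section Kernel

/-- The Fourier coefficients of the kernel `σ̃_N` for `s = 8`. -/
noncomputable def kernelWeight (N : ℕ) (k : ℤ) : ℝ :=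
  sample N k / ∑ i ∈ Finset.Icc (-(N : ℤ)) N, sample N i

/-- The kernel `σ̃_N` for `s = 8` as a cosine sum; see `sigmaT_eq_kernel`. -/
noncomputable def kernel (N : ℕ) (t : ℝ) : ℝ :=
  ∑ k ∈ Finset.Icc (-(N : ℤ)) N, kernelWeight N k * Real.cos (k * t)

/-- The derivative of `kernel N`. -/
noncomputable def kernelDeriv (N : ℕ) (t : ℝ) : ℝ :=
  ∑ k ∈ Finset.Icc (-(N : ℤ)) N, kernelWeight N k * (-(k * Real.sin (k * t)))

/-- The second derivative of `kernel N`. -/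
noncomputable def kernelDeriv₂ (N : ℕ) (t : ℝ) : ℝ :=
  ∑ k ∈ Finset.Icc (-(N : ℤ)) N, kernelWeight N k * (-(k ^ 2 * Real.cos (k * t)))

/-- The polynomial `P` with `P (cos t) = kernel N t`. Composed with a trace it represents the
kernel on `SO(3)` as a smooth function of the matrix entries, which `arccos` is not. -/
noncomputable def kernelPoly (N : ℕ) : Polynomial ℝ :=
  ∑ k ∈ Finset.Icc (-(N : ℤ)) N, kernelWeight N k • Polynomial.Chebyshev.T ℝ k

lemma hasDerivAt_kernel (N : ℕ) (t : ℝ) : HasDerivAt (kernel N) (kernelDeriv N t) t := by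
  refine HasDerivAt.fun_sum fun k _ => HasDerivAt.const_mul _ ?_
  refine ((hasDerivAt_id t).const_mul (k : ℝ)).cos.congr_deriv ?_
  rw [id, mul_one, neg_mul, mul_comm]

lemma hasDerivAt_kernelDeriv (N : ℕ) (t : ℝ) :
    HasDerivAt (kernelDeriv N) (kernelDeriv₂ N t) t := by
  refine HasDerivAt.fun_sum fun k _ => HasDerivAt.const_mul _ ?_
  refine (((hasDerivAt_id t).const_mul (k : ℝ)).sin.const_mul (k : ℝ)).neg.congr_deriv ?_
  rw [id]
  ring

lemma eval_cos_kernelPoly (N : ℕ) (t : ℝ) : (kernelPoly N).eval (Real.cos t) = kernel N t := by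
  rw [kernelPoly, kernel, Polynomial.eval_finsetSum]
  refine Finset.sum_congr rfl fun k _ => ?_
  rw [Polynomial.eval_smul, Polynomial.Chebyshev.T_real_cos, smul_eq_mul]

lemma kernelDeriv_eq (N : ℕ) (t : ℝ) :
    kernelDeriv N t = -(Real.sin t * (kernelPoly N).derivative.eval (Real.cos t)) := by
  have hcomp : HasDerivAt (kernel N) _ t :=
    (((kernelPoly N).hasDerivAt (Real.cos t)).comp t (Real.hasDerivAt_cos t)).congr_of_eventuallyEq
      (Filter.Eventually.of_forall fun s => (eval_cos_kernelPoly N s).symm)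
  rw [(hasDerivAt_kernel N t).unique hcomp]
  ring

lemma kernelDeriv₂_eq (N : ℕ) (t : ℝ) :
    kernelDeriv₂ N t = Real.sin t ^ 2 * (kernelPoly N).derivative.derivative.eval (Real.cos t) -
      Real.cos t * (kernelPoly N).derivative.eval (Real.cos t) := by
  have hcomp := ((kernelPoly N).derivative.hasDerivAt (Real.cos t)).comp t (Real.hasDerivAt_cos t)
  have hmul : HasDerivAt (kernelDeriv N) _ t :=
    ((Real.hasDerivAt_sin t).mul hcomp).neg.congr_of_eventuallyEq
      (Filter.Eventually.of_forall fun s => kernelDeriv_eq N s)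
  rw [(hasDerivAt_kernelDeriv N t).unique hmul]
  simp only [Function.comp]
  ring

lemma gtilde_eq_sample {N : ℕ} {k : ℤ} (hk : k ∈ Finset.Icc (-(N : ℤ)) N) :
    gtilde 8 ((k : ℝ) / (2 * ((N : ℝ) + 1))) = sample N k := by
  have hpos : (0 : ℝ) < N + 1 := by positivity
  rw [Finset.mem_Icc] at hk
  have hlower : -(N : ℝ) ≤ k := by exact_mod_cast hk.1
  have hupper : (k : ℝ) ≤ N := by exact_mod_cast hk.2
  rw [gtilde, sample, show 2 * ((k : ℝ) / (2 * ((N : ℝ) + 1))) = k / (N + 1) by field_simp]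
  refine fspline_succ_eq_perfectSpline (by norm_num) 6 ⟨?_, ?_⟩
  · rw [le_div_iff₀ hpos]
    linarith
  · rw [div_le_iff₀ hpos]
    linarith

lemma sigmaT_eq_kernel (N : ℕ) (t : ℝ) : sigmaT 8 N t = kernel N t := by
  have hnorm : gnorm 8 N = ∑ i ∈ Finset.Icc (-(N : ℤ)) N, sample N i :=
    Finset.sum_congr rfl fun k hk => gtilde_eq_sample hk
  rw [sigmaT, hnorm, kernel, Finset.mul_sum, Complex.re_sum]
  refine Finset.sum_congr rfl fun k hk => ?_
  have hterm : 1 / ((∑ i ∈ Finset.Icc (-(N : ℤ)) N, sample N i : ℝ) : ℂ) *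
      ((sample N k : ℂ) * Complex.exp (k * t * Complex.I)) =
      (kernelWeight N k : ℂ) * Complex.exp (((k * t : ℝ) : ℂ) * Complex.I) := by
    rw [kernelWeight]
    push_cast
    ring
  rw [gtilde_eq_sample hk, hterm, Complex.re_ofReal_mul, Complex.exp_ofReal_mul_I_re]

end Kernel

section KernelBounds

variable {N : ℕ}

lemma kernelWeight_nonneg (hN : 20 ≤ N) (k : ℤ) : 0 ≤ kernelWeight N k :=
  div_nonneg (sample_nonneg N k) (sum_sample_pos hN).le

/-- The `m`-th moment of the kernel weights, as a discrete measure on the points `k / (N + 1)`. -/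
noncomputable def weightMoment (N m : ℕ) : ℝ :=
  ∑ k ∈ Finset.Icc (-(N : ℤ)) N, kernelWeight N k * ((k : ℝ) / (N + 1)) ^ m

lemma weightMoment_eq (N m : ℕ) : weightMoment N m =
    (∑ k ∈ Finset.Icc (-(N : ℤ)) N, ((k : ℝ) / (N + 1)) ^ m * sample N k) /
      ∑ k ∈ Finset.Icc (-(N : ℤ)) N, sample N k := by
  rw [weightMoment, Finset.sum_div]
  exact Finset.sum_congr rfl fun k _ => by rw [kernelWeight, mul_comm, mul_div_assoc]

lemma weightMoment_zero (hN : 20 ≤ N) : weightMoment N 0 = 1 := by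
  simp only [weightMoment_eq, pow_zero, one_mul, div_self (sum_sample_pos hN).ne']

lemma sum_kernelWeight (hN : 20 ≤ N) : ∑ k ∈ Finset.Icc (-(N : ℤ)) N, kernelWeight N k = 1 := by
  simpa only [weightMoment, pow_zero, mul_one] using weightMoment_zero hN

lemma weightMoment_two_mem_Icc (hN : 20 ≤ N) : weightMoment N 2 ∈ Set.Icc 0.0555 0.0556 := by
  have hsum_pos := sum_sample_pos hN
  obtain ⟨hlower, hupper⟩ := sum_sample_mem_Icc hN
  have hsq := abs_le.1 (abs_sum_sq_mul_sample_sub_le hN)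
  have : (0 : ℝ) < N + 1 := by positivity
  rw [weightMoment_eq, Set.mem_Icc, le_div_iff₀ hsum_pos, div_le_iff₀ hsum_pos]
  norm_num at hlower hupper hsq ⊢
  constructor <;> linarith

lemma weightMoment_four_le (hN : 20 ≤ N) : weightMoment N 4 ≤ 0.0091 := by
  have hlower := (sum_sample_mem_Icc hN).1
  have hfour := abs_le.1 (abs_sum_pow_four_mul_sample_sub_le hN)
  have : (0 : ℝ) < N + 1 := by positivity
  rw [weightMoment_eq, div_le_iff₀ (sum_sample_pos hN)]
  norm_num at hlower hfour ⊢
  linarith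

lemma cos_le_quartic (x : ℝ) : Real.cos x ≤ 1 - x ^ 2 / 2 + x ^ 4 / 24 := by
  wlog hx : 0 ≤ x generalizing x
  · simpa only [Real.cos_neg, even_two.neg_pow, Even.neg_pow (show Even 4 by decide)] using
      this (-x) (by linarith)
  have hderiv (y : ℝ) : HasDerivAt (fun y => 1 - y ^ 2 / 2 + y ^ 4 / 24 - Real.cos y)
      (Real.sin y - (y - y ^ 3 / 6)) y := by
    have hquad := ((hasDerivAt_pow 2 y).div_const 2).const_sub 1
    have hquart := (hasDerivAt_pow 4 y).div_const 24
    refine ((hquad.add hquart).sub (Real.hasDerivAt_cos y)).congr_deriv ?_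
    norm_num
    ring
  have hmono : MonotoneOn (fun y => 1 - y ^ 2 / 2 + y ^ 4 / 24 - Real.cos y) (Set.Ici 0) := by
    refine monotoneOn_of_deriv_nonneg (convex_Ici 0)
      (fun y _ => (hderiv y).continuousAt.continuousWithinAt)
      (fun y _ => (hderiv y).differentiableAt.differentiableWithinAt) fun y hy => ?_
    rw [interior_Ici] at hy
    rw [(hderiv y).deriv]
    linarith [Real.sin_ge_sub_cube (le_of_lt hy)]
  have hle := hmono (Set.self_mem_Ici) hx hx
  norm_num at hle
  linarith

lemma int_mul_eq_div_mul (N : ℕ) (k : ℤ) (t : ℝ) :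
    (k : ℝ) * t = k / (N + 1) * ((N + 1) * t) := by
  field_simp

lemma kernel_le (hN : 20 ≤ N) (t : ℝ) : kernel N t ≤
    1 - weightMoment N 2 * ((N + 1) * t) ^ 2 / 2 + 0.0091 * ((N + 1) * t) ^ 4 / 24 := by
  set τ : ℝ := (N + 1) * t
  calc kernel N t ≤ ∑ k ∈ Finset.Icc (-(N : ℤ)) N, kernelWeight N k *
        (1 - (k / (N + 1) * τ) ^ 2 / 2 + (k / (N + 1) * τ) ^ 4 / 24) := by
        refine Finset.sum_le_sum fun k _ => mul_le_mul_of_nonneg_left ?_ (kernelWeight_nonneg hN k)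
        rw [int_mul_eq_div_mul N]
        exact cos_le_quartic _
    _ = weightMoment N 0 - weightMoment N 2 * τ ^ 2 / 2 + weightMoment N 4 * τ ^ 4 / 24 := by
        simp only [weightMoment, Finset.sum_mul, Finset.sum_div, ← Finset.sum_sub_distrib,
          ← Finset.sum_add_distrib]
        exact Finset.sum_congr rfl fun k _ => by ring
    _ ≤ 1 - weightMoment N 2 * τ ^ 2 / 2 + 0.0091 * τ ^ 4 / 24 := by
        rw [weightMoment_zero hN]
        gcongr
        exact weightMoment_four_le hN

lemma le_kernel (hN : 20 ≤ N) (t : ℝ) :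
    1 - weightMoment N 2 * ((N + 1) * t) ^ 2 / 2 ≤ kernel N t := by
  set τ : ℝ := (N + 1) * t
  calc 1 - weightMoment N 2 * τ ^ 2 / 2
      = weightMoment N 0 - weightMoment N 2 * τ ^ 2 / 2 := by rw [weightMoment_zero hN]
    _ = ∑ k ∈ Finset.Icc (-(N : ℤ)) N, kernelWeight N k * (1 - (k / (N + 1) * τ) ^ 2 / 2) := by
        simp only [weightMoment, Finset.sum_mul, Finset.sum_div, ← Finset.sum_sub_distrib]
        exact Finset.sum_congr rfl fun k _ => by ring
    _ ≤ kernel N t := by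
        refine Finset.sum_le_sum fun k _ => mul_le_mul_of_nonneg_left ?_ (kernelWeight_nonneg hN k)
        rw [int_mul_eq_div_mul N]
        exact Real.one_sub_sq_div_two_le_cos

lemma abs_kernelDeriv_le (hN : 20 ≤ N) (t : ℝ) :
    |kernelDeriv N t| ≤ (N + 1) * (weightMoment N 2 * |(N + 1) * t|) := by
  have hpos : (0 : ℝ) < N + 1 := by positivity
  calc |kernelDeriv N t| ≤ ∑ k ∈ Finset.Icc (-(N : ℤ)) N, kernelWeight N k * (k ^ 2 * |t|) := by
        refine (Finset.abs_sum_le_sum_abs _ _).trans (Finset.sum_le_sum fun k _ => ?_)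
        rw [abs_mul, abs_of_nonneg (kernelWeight_nonneg hN k), abs_neg, abs_mul]
        refine mul_le_mul_of_nonneg_left ?_ (kernelWeight_nonneg hN k)
        calc |(k : ℝ)| * |Real.sin (k * t)| ≤ |(k : ℝ)| * |k * t| :=
              mul_le_mul_of_nonneg_left Real.abs_sin_le_abs (abs_nonneg _)
          _ = k ^ 2 * |t| := by rw [abs_mul, ← mul_assoc, abs_mul_abs_self, pow_two]
    _ = (N + 1) * (weightMoment N 2 * |(N + 1) * t|) := by
        rw [weightMoment, Finset.sum_mul, Finset.mul_sum]
        refine Finset.sum_congr rfl fun k _ => ?_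
        rw [abs_mul, abs_of_pos hpos]
        field_simp

lemma perfectSpline_eight_seven_eq_zero {x : ℝ} (hx : 1 ≤ |x|) : perfectSpline 8 0 7 x = 0 := by
  rcases le_abs.1 hx with hx | hx
  · exact perfectSpline_eq_zero_of_one_le (by norm_num) hx
  · rcases (le_neg_of_le_neg hx).lt_or_eq with hx | rfl
    · exact perfectSpline_eq_zero_of_lt 8 0 7 hx
    · exact perfectSpline_succ_eq_zero_of_le 8 0 6 le_rfl

lemma FwdDiffBound.norm_sum_kernelWeight_mul_exp_le (hN : 20 ≤ N) {C : ℝ} {j : ℕ}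
    (hC : FwdDiffBound (1 / ((N + 1 : ℕ) : ℝ)) (fun x => x ^ j * perfectSpline 8 0 7 x) 8
      (C * (1 / ((N + 1 : ℕ) : ℝ)) ^ 7)) (t : ℝ) :
    (2 * (N + 1) * |Real.sin (t / 2)|) ^ 8 * ‖∑ k ∈ Finset.Icc (-(N : ℤ)) N,
      ((((k : ℝ) / (N + 1)) ^ j * kernelWeight N k : ℝ) : ℂ) *
        Complex.exp ((k * t : ℝ) * Complex.I)‖ ≤ C * 323000 := by
  have : (0 : ℝ) < N + 1 := by positivity
  have hC_nonneg : 0 ≤ C :=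
    nonneg_of_mul_nonneg_left (by simpa only [Finset.sum_empty] using hC 0 ∅) (by positivity)
  set T := ∑ i ∈ Finset.Icc (-(N : ℤ)) N, sample N i with hT
  have hT_pos : 0 < T := sum_sample_pos hN
  have hT_lower : N + 1 ≤ 323000 * T := by
    have hlower := (sum_sample_mem_Icc hN).1
    norm_num at hlower ⊢
    linarith
  set S := ∑ k ∈ Finset.Icc (-(N : ℤ)) N, (((fun x : ℝ => x ^ j * perfectSpline 8 0 7 x)
    (k / (N + 1)) : ℝ) : ℂ) * Complex.exp ((k * t : ℝ) * Complex.I) with hS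
  have hsum : ∑ k ∈ Finset.Icc (-(N : ℤ)) N,
      ((((k : ℝ) / (N + 1)) ^ j * kernelWeight N k : ℝ) : ℂ) *
        Complex.exp ((k * t : ℝ) * Complex.I) = S / (T : ℂ) := by
    rw [hS, Finset.sum_div]
    refine Finset.sum_congr rfl fun k _ => ?_
    rw [kernelWeight, ← hT, sample]
    push_cast
    ring
  have hbound := hC.norm_sum_mul_exp_le
    (fun x hx => by rw [perfectSpline_eight_seven_eq_zero hx, mul_zero]) t
  rw [hsum, norm_div, Complex.norm_real, Real.norm_of_nonneg hT_pos.le, ← mul_div_assoc,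
    div_le_iff₀ hT_pos]
  calc (2 * (N + 1) * |Real.sin (t / 2)|) ^ 8 * ‖S‖
      = ((N : ℝ) + 1) ^ 8 * ((2 * |Real.sin (t / 2)|) ^ 8 * ‖S‖) := by ring
    _ ≤ ((N : ℝ) + 1) ^ 8 * (C * (1 / ((N + 1 : ℕ) : ℝ)) ^ 7) := by gcongr
    _ = C * (N + 1) := by
        push_cast
        field_simp
    _ ≤ C * (323000 * T) := by gcongr
    _ = C * 323000 * T := by ring

lemma kernel_decay (hN : 20 ≤ N) (t : ℝ) :
    (2 * (N + 1) * |Real.sin (t / 2)|) ^ 8 * |kernel N t| ≤ 5168000 := by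
  have hexp := FwdDiffBound.norm_sum_kernelWeight_mul_exp_le hN (j := 0)
    (by simpa only [pow_zero, one_mul] using fwdDiffBound_perfectSpline_seven 0) t
  set S := ∑ k ∈ Finset.Icc (-(N : ℤ)) N, ((((k : ℝ) / (N + 1)) ^ 0 * kernelWeight N k : ℝ) : ℂ) *
    Complex.exp ((k * t : ℝ) * Complex.I) with hS
  have hkernel : kernel N t = S.re := by
    rw [kernel, hS, Complex.re_sum]
    refine Finset.sum_congr rfl fun k _ => ?_
    rw [pow_zero, one_mul, Complex.re_ofReal_mul, Complex.exp_ofReal_mul_I_re]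
  rw [hkernel]
  exact (mul_le_mul_of_nonneg_left (Complex.abs_re_le_norm S) (by positivity)).trans
    (hexp.trans_eq (by norm_num))

lemma kernelDeriv_decay (hN : 20 ≤ N) (t : ℝ) :
    (2 * (N + 1) * |Real.sin (t / 2)|) ^ 8 * |kernelDeriv N t| ≤ 10336000 * (N + 1) := by
  have hpos : (0 : ℝ) < N + 1 := by positivity
  have hexp := FwdDiffBound.norm_sum_kernelWeight_mul_exp_le hN (j := 1)
    (by simpa only [pow_one] using fwdDiffBound_mul_perfectSpline_seven N.succ_pos) t
  set S := ∑ k ∈ Finset.Icc (-(N : ℤ)) N, ((((k : ℝ) / (N + 1)) ^ 1 * kernelWeight N k : ℝ) : ℂ) *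
    Complex.exp ((k * t : ℝ) * Complex.I) with hS
  have hderiv : kernelDeriv N t = -((N + 1) * S.im) := by
    rw [kernelDeriv, hS, Complex.im_sum, Finset.mul_sum, ← Finset.sum_neg_distrib]
    refine Finset.sum_congr rfl fun k _ => ?_
    rw [Complex.im_ofReal_mul, Complex.exp_ofReal_mul_I_im]
    field_simp
  rw [hderiv, abs_neg, abs_mul, abs_of_pos hpos, mul_left_comm, mul_comm 10336000]
  gcongr
  exact (mul_le_mul_of_nonneg_left (Complex.abs_im_le_norm S) (by positivity)).trans
    (hexp.trans_eq (by norm_num))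

lemma kernelDeriv₂_decay (hN : 20 ≤ N) (t : ℝ) :
    (2 * (N + 1) * |Real.sin (t / 2)|) ^ 8 * |kernelDeriv₂ N t| ≤ 27132000 * (N + 1) ^ 2 := by
  have hpos : (0 : ℝ) < N + 1 := by positivity
  have hexp := FwdDiffBound.norm_sum_kernelWeight_mul_exp_le hN
    (fwdDiffBound_sq_mul_perfectSpline_seven N.succ_pos) t
  set S := ∑ k ∈ Finset.Icc (-(N : ℤ)) N, ((((k : ℝ) / (N + 1)) ^ 2 * kernelWeight N k : ℝ) : ℂ) *
    Complex.exp ((k * t : ℝ) * Complex.I) with hS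
  have hderiv : kernelDeriv₂ N t = -((N + 1) ^ 2 * S.re) := by
    rw [kernelDeriv₂, hS, Complex.re_sum, Finset.mul_sum, ← Finset.sum_neg_distrib]
    refine Finset.sum_congr rfl fun k _ => ?_
    rw [Complex.re_ofReal_mul, Complex.exp_ofReal_mul_I_re]
    field_simp
  rw [hderiv, abs_neg, abs_mul, abs_of_pos (pow_pos hpos 2), mul_left_comm, mul_comm 27132000]
  gcongr
  exact (mul_le_mul_of_nonneg_left (Complex.abs_re_le_norm S) (by positivity)).trans
    (hexp.trans_eq (by norm_num))

lemma kernel_zero (hN : 20 ≤ N) : kernel N 0 = 1 := by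
  simp only [kernel, mul_zero, Real.cos_zero, mul_one, sum_kernelWeight hN]

lemma eval_one_derivative_kernelPoly (N : ℕ) :
    (kernelPoly N).derivative.eval 1 = (N + 1) ^ 2 * weightMoment N 2 := by
  have hpoly : kernelDeriv₂ N 0 = -(kernelPoly N).derivative.eval 1 := by
    rw [kernelDeriv₂_eq, Real.sin_zero, Real.cos_zero, sq, zero_mul, zero_mul, zero_sub, one_mul]
  have hmoment : kernelDeriv₂ N 0 = -((N + 1) ^ 2 * weightMoment N 2) := by
    rw [kernelDeriv₂, weightMoment, Finset.mul_sum, ← Finset.sum_neg_distrib]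
    refine Finset.sum_congr rfl fun k _ => ?_
    simp only [mul_zero, Real.cos_zero]
    field_simp
  exact neg_injective (hpoly.symm.trans hmoment)

end KernelBounds

end DualCertificate

namespace IsSO3

variable {x y R : Mat3}

lemma iff_mem_specialOrthogonalGroup :
    IsSO3 R ↔ R ∈ Matrix.specialOrthogonalGroup (Fin 3) ℝ :=
  and_congr_left fun _ => Matrix.mem_unitaryGroup_iff'.symm

lemma inv_eq (h : IsSO3 R) : R⁻¹ = R.transpose :=
  Matrix.inv_eq_left_inv h.1

lemma mul (hx : IsSO3 x) (hy : IsSO3 y) : IsSO3 (x * y) := by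
  rw [iff_mem_specialOrthogonalGroup] at *
  exact mul_mem hx hy

lemma transpose (h : IsSO3 R) : IsSO3 R.transpose :=
  ⟨by rw [Matrix.transpose_transpose]; exact mul_eq_one_comm.1 h.1,
    R.det_transpose.trans h.2⟩

lemma adjugate_eq (h : IsSO3 R) : R.adjugate = R.transpose := by
  have hmul := congrArg (R.transpose * ·) (Matrix.mul_adjugate R)
  simpa only [← mul_assoc, h.1, h.2, one_mul, one_smul, mul_one] using hmul

end IsSO3

namespace DualCertificate

open scoped Matrix

section Quaternion

variable {x y R : Mat3} {p q : Fin 4 → ℝ}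

/-- The rank-one matrix `q qᵀ` of the unit quaternions `±q` of the rotation `R`, which unlike `q`
itself is linear in the entries of `R`. -/
noncomputable def quatGram (R : Mat3) : Matrix (Fin 4) (Fin 4) ℝ :=
  !![(1 + R 0 0 + R 1 1 + R 2 2) / 4, (R 2 1 - R 1 2) / 4, (R 0 2 - R 2 0) / 4, (R 1 0 - R 0 1) / 4;
    (R 2 1 - R 1 2) / 4, (1 + R 0 0 - R 1 1 - R 2 2) / 4, (R 0 1 + R 1 0) / 4, (R 0 2 + R 2 0) / 4;
    (R 0 2 - R 2 0) / 4, (R 0 1 + R 1 0) / 4, (1 - R 0 0 + R 1 1 - R 2 2) / 4, (R 1 2 + R 2 1) / 4;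
    (R 1 0 - R 0 1) / 4, (R 0 2 + R 2 0) / 4, (R 1 2 + R 2 1) / 4, (1 - R 0 0 - R 1 1 + R 2 2) / 4]

/-- `q` is one of the two unit quaternions of the rotation `R`, with scalar part `q 0`. -/
def IsQuatOf (q : Fin 4 → ℝ) (R : Mat3) : Prop := ∀ j k, q j * q k = quatGram R j k

lemma quatGram_mul_quatGram (h : IsSO3 R) (i j k : Fin 4) :
    quatGram R i j * quatGram R i k = quatGram R i i * quatGram R j k := by
  -- All these `2 × 2` minors vanish by orthogonality and by `adj R = Rᵀ`.
  have hcol := fun i j => congrFun (congrFun h.1 i) j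
  have hrow := fun i j => congrFun (congrFun h.transpose.1 i) j
  have hadj := fun i j => congrFun (congrFun h.adjugate_eq i) j
  simp only [Matrix.adjugate_fin_three, Matrix.mul_apply, Fin.sum_univ_three,
    Matrix.transpose_apply, Matrix.one_apply] at hcol hrow hadj
  have a := hcol 0 0
  have b := hcol 1 1
  have c := hcol 2 2
  have d := hcol 0 1
  have e := hcol 0 2
  have f := hcol 1 2
  have a' := hrow 0 0
  have b' := hrow 1 1
  have c' := hrow 2 2
  have d' := hrow 0 1
  have e' := hrow 0 2
  have f' := hrow 1 2
  have g0 := hadj 0 0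
  have g1 := hadj 0 1
  have g2 := hadj 0 2
  have g3 := hadj 1 0
  have g4 := hadj 1 1
  have g5 := hadj 1 2
  have g6 := hadj 2 0
  have g7 := hadj 2 1
  have g8 := hadj 2 2
  clear hcol hrow hadj
  simp only [Fin.isValue, ↓reduceIte, zero_ne_one, Fin.reduceEq, Matrix.of_apply, Matrix.cons_val',
    Matrix.cons_val_zero, Matrix.cons_val_fin_one, Matrix.cons_val_one, Matrix.cons_val] at *
  fin_cases i <;> fin_cases j <;> fin_cases k <;> simp [quatGram] <;> linarith

lemma trace_quatGram (R : Mat3) : (quatGram R).trace = 1 := by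
  simp [Matrix.trace, quatGram, Fin.sum_univ_four]
  ring

lemma exists_isQuatOf (h : IsSO3 R) : ∃ q, IsQuatOf q R := by
  obtain ⟨i, -, hi⟩ : ∃ i ∈ Finset.univ, 0 < quatGram R i i :=
    Finset.exists_lt_of_sum_lt (by
      rw [Finset.sum_const_zero]
      exact one_pos.trans_eq (trace_quatGram R).symm)
  refine ⟨fun j => quatGram R i j / √(quatGram R i i), fun j k => ?_⟩
  rw [div_mul_div_comm, Real.mul_self_sqrt hi.le, quatGram_mul_quatGram h]
  exact mul_div_cancel_left₀ _ hi.ne'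

namespace IsQuatOf

lemma sum_sq (hq : IsQuatOf q R) : q 0 ^ 2 + q 1 ^ 2 + q 2 ^ 2 + q 3 ^ 2 = 1 := by
  simpa only [pow_two, hq _ _, Matrix.trace, Matrix.diag_apply, Fin.sum_univ_four] using
    trace_quatGram R

lemma trace_eq (hq : IsQuatOf q R) : R.trace = 4 * q 0 ^ 2 - 1 := by
  rw [pow_two, hq 0 0, Matrix.trace_fin_three]
  simp only [quatGram, Matrix.of_apply, Matrix.cons_val_zero]
  ring

lemma trace_transpose_mul_eq (hp : IsQuatOf p x) (hq : IsQuatOf q y) :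
    (yᵀ * x).trace = 4 * (∑ i, p i * q i) ^ 2 - 1 := by
  have hsq : (∑ i, p i * q i) ^ 2 = ∑ i, ∑ j, (p i * p j) * (q i * q j) := by
    rw [pow_two, Finset.sum_mul_sum]
    exact Finset.sum_congr rfl fun i _ => Finset.sum_congr rfl fun j _ => by ring
  rw [hsq]
  simp only [hp _ _, hq _ _]
  simp [quatGram, Matrix.trace, Matrix.mul_apply, Fin.sum_univ_three, Fin.sum_univ_four]
  ring

lemma trace_Lgen_mul (hq : IsQuatOf q R) (i : Fin 3) :
    (Lgen i * R).trace = -4 * (q 0 * q i.succ) := by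
  rw [hq]
  simp only [Matrix.trace_fin_three, Matrix.mul_apply, Fin.sum_univ_three]
  fin_cases i <;> simp [Lgen, quatGram] <;> ring

end IsQuatOf

lemma trace_mem_Icc (h : IsSO3 R) : (R.trace - 1) / 2 ∈ Set.Icc (-1) 1 := by
  obtain ⟨q, hq⟩ := exists_isQuatOf h
  rw [hq.trace_eq]
  constructor
  · nlinarith [sq_nonneg (q 0)]
  · nlinarith [hq.sum_sq, sq_nonneg (q 1), sq_nonneg (q 2), sq_nonneg (q 3)]

end Quaternion

section RotationAngle

variable {R : Mat3} {q : Fin 4 → ℝ}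

lemma rotAngle_nonneg (R : Mat3) : 0 ≤ rotAngle R := Real.arccos_nonneg _

lemma rotAngle_le_pi (R : Mat3) : rotAngle R ≤ π := Real.arccos_le_pi _

lemma cos_rotAngle (h : IsSO3 R) : Real.cos (rotAngle R) = (R.trace - 1) / 2 :=
  Real.cos_arccos (trace_mem_Icc h).1 (trace_mem_Icc h).2

lemma sin_half_rotAngle_nonneg (R : Mat3) : 0 ≤ Real.sin (rotAngle R / 2) :=
  Real.sin_nonneg_of_nonneg_of_le_pi (by linarith [rotAngle_nonneg R])
    (by linarith [rotAngle_le_pi R, Real.pi_pos])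

namespace IsQuatOf

lemma cos_rotAngle (hq : IsQuatOf q R) (hR : IsSO3 R) :
    Real.cos (rotAngle R) = 2 * q 0 ^ 2 - 1 := by
  rw [DualCertificate.cos_rotAngle hR, hq.trace_eq]
  ring

lemma sum_sq_succ (hq : IsQuatOf q R) (hR : IsSO3 R) :
    q 1 ^ 2 + q 2 ^ 2 + q 3 ^ 2 = Real.sin (rotAngle R / 2) ^ 2 := by
  have hhalf := Real.cos_sq (rotAngle R / 2)
  rw [mul_div_cancel₀ _ (two_ne_zero' ℝ), hq.cos_rotAngle hR] at hhalf
  linarith [hq.sum_sq, Real.sin_sq_add_cos_sq (rotAngle R / 2)]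

lemma abs_succ_le (hq : IsQuatOf q R) (hR : IsSO3 R) (i : Fin 3) :
    |q i.succ| ≤ Real.sin (rotAngle R / 2) := by
  refine abs_le_of_sq_le_sq ?_ (sin_half_rotAngle_nonneg R)
  rw [← hq.sum_sq_succ hR]
  fin_cases i <;> simp <;> nlinarith [sq_nonneg (q 1), sq_nonneg (q 2), sq_nonneg (q 3)]

lemma abs_zero_le_one (hq : IsQuatOf q R) : |q 0| ≤ 1 :=
  abs_le_of_sq_le_sq (by nlinarith [hq.sum_sq, sq_nonneg (q 1), sq_nonneg (q 2), sq_nonneg (q 3)])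
    zero_le_one

lemma abs_trace_Lgen_mul_mul_Lgen_sub_le (hq : IsQuatOf q R) (hR : IsSO3 R) (i j : Fin 3) :
    |-(Lgen i * R * Lgen j).trace / 2 - ((if i = j then q 0 ^ 2 else 0) - q i.succ * q j.succ)| ≤
      |q 0| * Real.sin (rotAngle R / 2) := by
  have hmul (i : Fin 3) : |q 0 * q i.succ| ≤ |q 0| * Real.sin (rotAngle R / 2) := by
    rw [abs_mul]
    exact mul_le_mul_of_nonneg_left (hq.abs_succ_le hR i) (abs_nonneg _)
  have hnonneg := mul_nonneg (abs_nonneg (q 0)) (sin_half_rotAngle_nonneg R)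
  have h1 := abs_le.1 (hmul 0)
  have h2 := abs_le.1 (hmul 1)
  have h3 := abs_le.1 (hmul 2)
  simp only [pow_two, hq _ _] at h1 h2 h3 ⊢
  rw [abs_le]
  simp only [Matrix.trace_fin_three, Matrix.mul_apply, Fin.sum_univ_three]
  fin_cases i <;> fin_cases j <;> simp [Lgen, quatGram] at h1 h2 h3 ⊢ <;>
    constructor <;> linarith

end IsQuatOf

end RotationAngle

section OneParameterGroup

lemma Lgen_transpose (i : Fin 3) : (Lgen i)ᵀ = -Lgen i := by
  fin_cases i <;> ext a b <;> fin_cases a <;> fin_cases b <;> simp [Lgen]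

attribute [local instance] Matrix.linftyOpNormedRing Matrix.linftyOpNormedAlgebra

lemma exp_Lgen_transpose_mul_self (i : Fin 3) (t : ℝ) :
    (NormedSpace.exp (t • Lgen i))ᵀ * NormedSpace.exp (t • Lgen i) = 1 := by
  rw [← Matrix.exp_transpose, Matrix.transpose_smul, Lgen_transpose, smul_neg, Matrix.exp_neg]
  exact Matrix.nonsing_inv_mul _ ((Matrix.isUnit_iff_isUnit_det _).1 (Matrix.isUnit_exp _))

lemma isSO3_exp (i : Fin 3) (t : ℝ) : IsSO3 (NormedSpace.exp (t • Lgen i)) := by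
  refine ⟨exp_Lgen_transpose_mul_self i t, ?_⟩
  have hdet : (NormedSpace.exp ((t / 2) • Lgen i)).det ^ 2 = 1 := by
    rw [pow_two, ← Matrix.det_one (n := Fin 3), ← exp_Lgen_transpose_mul_self i (t / 2),
      Matrix.det_mul, Matrix.det_transpose]
  -- The exponential is a square, so its determinant is not `-1`.
  rw [← add_halves t, add_smul, Matrix.exp_add_of_commute _ _ (Commute.refl _), Matrix.det_mul,
    ← pow_two, hdet]

lemma hasDerivAt_trace_mul_exp (A : Mat3) (i : Fin 3) :
    HasDerivAt (fun t : ℝ => (A * NormedSpace.exp (t • Lgen i)).trace) (A * Lgen i).trace 0 := by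
  have hexp := hasDerivAt_exp_smul_const (𝕂 := ℝ) (Lgen i) (0 : ℝ)
  simp only [zero_smul, NormedSpace.exp_zero, one_mul] at hexp
  let T : Mat3 →L[ℝ] ℝ := LinearMap.toContinuousLinearMap
    ((Matrix.traceLinearMap (Fin 3) ℝ ℝ).comp (LinearMap.mulLeft ℝ A))
  exact T.hasFDerivAt.comp_hasDerivAt 0 hexp

end OneParameterGroup

section KernelOnSO3

variable {N : ℕ} {x y R : Mat3} {q : Fin 4 → ℝ}

lemma sigmaK_eq_kernel (N : ℕ) (x y : Mat3) :
    sigmaK 8 N x y = kernel N (rotAngle (y⁻¹ * x)) :=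
  sigmaT_eq_kernel _ _

lemma sigmaK_eq (hx : IsSO3 x) (hy : IsSO3 y) :
    sigmaK 8 N x y = (kernelPoly N).eval (((yᵀ * x).trace - 1) / 2) := by
  rw [sigmaK_eq_kernel, ← eval_cos_kernelPoly, hy.inv_eq, cos_rotAngle (hy.transpose.mul hx)]

lemma Xx_sigmaK_eq (hx : IsSO3 x) (hy : IsSO3 y) (i : Fin 3) :
    Xx i (sigmaK 8 N) x y = (kernelPoly N).derivative.eval (((yᵀ * x).trace - 1) / 2) *
      ((yᵀ * x * Lgen i).trace / 2) := by
  refine HasDerivAt.deriv ?_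
  have hcurve : (fun t : ℝ => sigmaK 8 N (x * NormedSpace.exp (t • Lgen i)) y) = fun t =>
      (kernelPoly N).eval (((yᵀ * x * NormedSpace.exp (t • Lgen i)).trace - 1) / 2) := by
    funext t
    rw [sigmaK_eq (hx.mul (isSO3_exp i t)) hy, mul_assoc]
  have htrace := ((hasDerivAt_trace_mul_exp (yᵀ * x) i).sub_const 1).div_const 2
  rw [hcurve]
  exact (((kernelPoly N).hasDerivAt _).comp (0 : ℝ) htrace).congr_deriv (by simp)

lemma Xy_sigmaK_eq (hx : IsSO3 x) (hy : IsSO3 y) (i : Fin 3) :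
    Xy i (sigmaK 8 N) x y = (kernelPoly N).derivative.eval (((yᵀ * x).trace - 1) / 2) *
      (-(Lgen i * (yᵀ * x)).trace / 2) := by
  refine HasDerivAt.deriv ?_
  have hcurve : (fun t : ℝ => sigmaK 8 N x (y * NormedSpace.exp (t • Lgen i))) = fun t =>
      (kernelPoly N).eval (((xᵀ * y * NormedSpace.exp (t • Lgen i)).trace - 1) / 2) := by
    funext t
    rw [sigmaK_eq hx (hy.mul (isSO3_exp i t)), ← Matrix.trace_transpose, Matrix.transpose_mul,
      Matrix.transpose_transpose, mul_assoc]
  have htrace := ((hasDerivAt_trace_mul_exp (xᵀ * y) i).sub_const 1).div_const 2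
  have hswap : (xᵀ * y).trace = (yᵀ * x).trace := by
    rw [← Matrix.trace_transpose, Matrix.transpose_mul, Matrix.transpose_transpose]
  have hswap_gen : (xᵀ * y * Lgen i).trace = -(Lgen i * (yᵀ * x)).trace := by
    rw [← Matrix.trace_transpose, Matrix.transpose_mul, Matrix.transpose_mul,
      Matrix.transpose_transpose, Lgen_transpose, neg_mul, Matrix.trace_neg]
  rw [hcurve]
  exact (((kernelPoly N).hasDerivAt _).comp (0 : ℝ) htrace).congr_deriv
    (by simp [hswap, hswap_gen])

lemma Xx_Xy_sigmaK_eq (hx : IsSO3 x) (hy : IsSO3 y) (i j : Fin 3) :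
    Xx j (Xy i (sigmaK 8 N)) x y =
      (kernelPoly N).derivative.derivative.eval (((yᵀ * x).trace - 1) / 2) *
        ((yᵀ * x * Lgen j).trace / 2) * (-(Lgen i * (yᵀ * x)).trace / 2) +
      (kernelPoly N).derivative.eval (((yᵀ * x).trace - 1) / 2) *
        (-(Lgen i * (yᵀ * x) * Lgen j).trace / 2) := by
  refine HasDerivAt.deriv ?_
  have hcurve : (fun t : ℝ => Xy i (sigmaK 8 N) (x * NormedSpace.exp (t • Lgen j)) y) = fun t =>
      (kernelPoly N).derivative.eval
        (((yᵀ * x * NormedSpace.exp (t • Lgen j)).trace - 1) / 2) *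
      (-(Lgen i * (yᵀ * x) * NormedSpace.exp (t • Lgen j)).trace / 2) := by
    funext t
    rw [Xy_sigmaK_eq (hx.mul (isSO3_exp j t)) hy]
    simp only [mul_assoc]
  have htrace := ((hasDerivAt_trace_mul_exp (yᵀ * x) j).sub_const 1).div_const 2
  have hprod := (((kernelPoly N).derivative.hasDerivAt _).comp (0 : ℝ) htrace).mul
    ((hasDerivAt_trace_mul_exp (Lgen i * (yᵀ * x)) j).neg.div_const 2)
  rw [hcurve]
  exact hprod.congr_deriv (by simp)

lemma sigmaK_self (hN : 20 ≤ N) (hx : IsSO3 x) : sigmaK 8 N x x = 1 := by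
  have hone := eval_cos_kernelPoly N 0
  rw [kernel_zero hN, Real.cos_zero] at hone
  rw [sigmaK_eq hx hx, hx.1, Matrix.trace_one]
  norm_num [hone]

lemma trace_Lgen (i : Fin 3) : (Lgen i).trace = 0 := by
  fin_cases i <;> simp [Lgen, Matrix.trace, Fin.sum_univ_three]

lemma trace_Lgen_mul_Lgen (i j : Fin 3) :
    (Lgen i * Lgen j).trace = if i = j then -2 else 0 := by
  simp only [Matrix.trace_fin_three, Matrix.mul_apply, Fin.sum_univ_three]
  fin_cases i <;> fin_cases j <;> simp [Lgen] <;> norm_num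

lemma Xx_sigmaK_self (hx : IsSO3 x) (i : Fin 3) : Xx i (sigmaK 8 N) x x = 0 := by
  rw [Xx_sigmaK_eq hx hx, hx.1, one_mul, trace_Lgen, zero_div, mul_zero]

lemma Xy_sigmaK_self (hx : IsSO3 x) (i : Fin 3) : Xy i (sigmaK 8 N) x x = 0 := by
  rw [Xy_sigmaK_eq hx hx, hx.1, mul_one, trace_Lgen, neg_zero, zero_div, mul_zero]

lemma Xx_Xy_sigmaK_self (hx : IsSO3 x) (i j : Fin 3) :
    Xx j (Xy i (sigmaK 8 N)) x x = if i = j then (N + 1) ^ 2 * weightMoment N 2 else 0 := by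
  rw [Xx_Xy_sigmaK_eq hx hx, hx.1, mul_one, one_mul, trace_Lgen, trace_Lgen, trace_Lgen_mul_Lgen,
    ← eval_one_derivative_kernelPoly, Matrix.trace_one]
  split_ifs <;> norm_num

namespace IsQuatOf

lemma kernelDeriv_sq (hq : IsQuatOf q R) (hR : IsSO3 R) :
    kernelDeriv N (rotAngle R) ^ 2 =
      ((kernelPoly N).derivative.eval (Real.cos (rotAngle R)) * (2 * q 0)) ^ 2 *
        Real.sin (rotAngle R / 2) ^ 2 := by
  have hsin : Real.sin (rotAngle R) ^ 2 = 4 * q 0 ^ 2 * Real.sin (rotAngle R / 2) ^ 2 := by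
    rw [Real.sin_sq, hq.cos_rotAngle hR, ← hq.sum_sq_succ hR]
    linear_combination (-4) * q 0 ^ 2 * hq.sum_sq
  rw [kernelDeriv_eq, neg_sq, mul_pow, hsin]
  ring

lemma abs_eval_derivative_mul (hq : IsQuatOf q R) (hR : IsSO3 R)
    (hpos : 0 < Real.sin (rotAngle R / 2)) :
    |(kernelPoly N).derivative.eval (Real.cos (rotAngle R)) * q 0| =
      |kernelDeriv N (rotAngle R)| / Real.sin (rotAngle R / 2) / 2 := by
  have hsq := hq.kernelDeriv_sq (N := N) hR
  rw [← mul_pow, sq_eq_sq_iff_abs_eq_abs] at hsq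
  rw [hsq, abs_mul _ (Real.sin _), abs_of_pos hpos, mul_div_cancel_right₀ _ hpos.ne',
    mul_left_comm, abs_mul 2, abs_two, mul_div_cancel_left₀ _ (two_ne_zero' ℝ)]

lemma kernelDeriv₂_rotAngle (hq : IsQuatOf q R) (hR : IsSO3 R) :
    kernelDeriv₂ N (rotAngle R) =
      4 * q 0 ^ 2 * Real.sin (rotAngle R / 2) ^ 2 *
        (kernelPoly N).derivative.derivative.eval (Real.cos (rotAngle R)) -
      (q 0 ^ 2 - Real.sin (rotAngle R / 2) ^ 2) *
        (kernelPoly N).derivative.eval (Real.cos (rotAngle R)) := by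
  have hzero : q 0 ^ 2 = 1 - Real.sin (rotAngle R / 2) ^ 2 := by
    linarith [hq.sum_sq, hq.sum_sq_succ hR]
  have hcos := hq.cos_rotAngle hR
  rw [kernelDeriv₂_eq, Real.sin_sq]
  linear_combination
    (-(Real.cos (rotAngle R) + 2 * q 0 ^ 2 - 1) *
        (kernelPoly N).derivative.derivative.eval (Real.cos (rotAngle R)) -
      (kernelPoly N).derivative.eval (Real.cos (rotAngle R))) * hcos +
    (-(4 * q 0 ^ 2) * (kernelPoly N).derivative.derivative.eval (Real.cos (rotAngle R)) +
      -(kernelPoly N).derivative.eval (Real.cos (rotAngle R))) * hzero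

lemma Xx_sigmaK (hx : IsSO3 x) (hy : IsSO3 y) (hq : IsQuatOf q (yᵀ * x)) (i : Fin 3) :
    Xx i (sigmaK 8 N) x y = -((kernelPoly N).derivative.eval (Real.cos (rotAngle (yᵀ * x))) *
      (2 * (q 0 * q i.succ))) := by
  rw [Xx_sigmaK_eq hx hy, Matrix.trace_mul_comm (yᵀ * x), hq.trace_Lgen_mul,
    DualCertificate.cos_rotAngle (hy.transpose.mul hx)]
  ring

lemma Xy_sigmaK (hx : IsSO3 x) (hy : IsSO3 y) (hq : IsQuatOf q (yᵀ * x)) (i : Fin 3) :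
    Xy i (sigmaK 8 N) x y = (kernelPoly N).derivative.eval (Real.cos (rotAngle (yᵀ * x))) *
      (2 * (q 0 * q i.succ)) := by
  rw [Xy_sigmaK_eq hx hy, hq.trace_Lgen_mul, DualCertificate.cos_rotAngle (hy.transpose.mul hx)]
  ring

lemma abs_succ_div_sin_le_one (hq : IsQuatOf q R) (hR : IsSO3 R)
    (hpos : 0 < Real.sin (rotAngle R / 2)) (i : Fin 3) :
    |q i.succ / Real.sin (rotAngle R / 2)| ≤ 1 := by
  rw [abs_div, abs_of_pos hpos]
  exact (div_le_one hpos).2 (hq.abs_succ_le hR i)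

end IsQuatOf

/-- The gradient of a class function points along the rotation axis, so its length is `|σ̃'|`. -/
lemma sum_sq_Xy (hx : IsSO3 x) (hy : IsSO3 y) :
    Xy 0 (sigmaK 8 N) x y ^ 2 + Xy 1 (sigmaK 8 N) x y ^ 2 + Xy 2 (sigmaK 8 N) x y ^ 2 =
      |kernelDeriv N (rotAngle (y⁻¹ * x))| ^ 2 := by
  have hR := hy.transpose.mul hx
  obtain ⟨q, hq⟩ := exists_isQuatOf hR
  rw [sq_abs, hy.inv_eq, hq.kernelDeriv_sq hR, ← hq.sum_sq_succ hR]
  simp only [hq.Xy_sigmaK hx hy, Fin.succ_zero_eq_one, Fin.succ_one_eq_two, Fin.reduceSucc]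
  ring

lemma Xx_sigmaK_eq_neg_Xy (hx : IsSO3 x) (hy : IsSO3 y) (i : Fin 3) :
    Xx i (sigmaK 8 N) x y = -Xy i (sigmaK 8 N) x y := by
  obtain ⟨q, hq⟩ := exists_isQuatOf (hy.transpose.mul hx)
  rw [hq.Xx_sigmaK hx hy, hq.Xy_sigmaK hx hy]

lemma abs_Xy_le (hx : IsSO3 x) (hy : IsSO3 y) (i : Fin 3) :
    |Xy i (sigmaK 8 N) x y| ≤ |kernelDeriv N (rotAngle (y⁻¹ * x))| := by
  refine abs_le_of_sq_le_sq ?_ (abs_nonneg _)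
  rw [← sum_sq_Xy hx hy]
  have h0 := sq_nonneg (Xy 0 (sigmaK 8 N) x y)
  have h1 := sq_nonneg (Xy 1 (sigmaK 8 N) x y)
  have h2 := sq_nonneg (Xy 2 (sigmaK 8 N) x y)
  fin_cases i <;> simp only [Fin.zero_eta, Fin.mk_one, Fin.reduceFinMk] <;> linarith

lemma sum_abs_le_of_sum_sq_le (v : Fin 3 → ℝ) {s : ℝ} (hs : 0 ≤ s)
    (h : v 0 ^ 2 + v 1 ^ 2 + v 2 ^ 2 ≤ s ^ 2) : ∑ i, |v i| ≤ 7 / 4 * s := by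
  -- `7 / 4` stands in for the Cauchy–Schwarz constant `√3`.
  rw [Fin.sum_univ_three]
  refine (sq_le_sq₀ (by positivity) (by positivity)).1 ?_
  nlinarith [sq_abs (v 0), sq_abs (v 1), sq_abs (v 2), sq_nonneg (|v 0| - |v 1|),
    sq_nonneg (|v 0| - |v 2|), sq_nonneg (|v 1| - |v 2|)]

lemma sum_abs_Xy_le (hx : IsSO3 x) (hy : IsSO3 y) :
    ∑ i, |Xy i (sigmaK 8 N) x y| ≤ 7 / 4 * |kernelDeriv N (rotAngle (y⁻¹ * x))| :=
  sum_abs_le_of_sum_sq_le _ (abs_nonneg _) (sum_sq_Xy hx hy).le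

lemma sum_abs_Xx_le (hx : IsSO3 x) (hy : IsSO3 y) :
    ∑ i, |Xx i (sigmaK 8 N) x y| ≤ 7 / 4 * |kernelDeriv N (rotAngle (y⁻¹ * x))| := by
  simp only [Xx_sigmaK_eq_neg_Xy hx hy, abs_neg]
  exact sum_abs_Xy_le hx hy

lemma abs_ite_sub_mul_le_one {ι : Type*} [DecidableEq ι] {v : ι → ℝ} (hv : ∀ i, |v i| ≤ 1)
    (i j : ι) : |(if i = j then 1 else 0) - v i * v j| ≤ 1 := by
  split_ifs with hij
  · subst hij
    rw [← pow_two, abs_le]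
    have hsq := (sq_le_one_iff_abs_le_one _).2 (hv i)
    constructor <;> nlinarith [sq_nonneg (v i)]
  · rw [zero_sub, abs_neg, abs_mul]
    exact mul_le_one₀ (hv i) (abs_nonneg _) (hv j)

/-- The mixed derivative, split into its part along the axis `n = q.succ / sin (ω / 2)`, its part
orthogonal to the axis, and a remainder which `abs_trace_Lgen_mul_mul_Lgen_sub_le` controls. -/
lemma IsQuatOf.Xx_Xy_sigmaK (hx : IsSO3 x) (hy : IsSO3 y) (hR : R = yᵀ * x) (hq : IsQuatOf q R)
    (hpos : 0 < Real.sin (rotAngle R / 2)) (i j : Fin 3) :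
    Xx j (Xy i (sigmaK 8 N)) x y =
      -((q i.succ / Real.sin (rotAngle R / 2)) * (q j.succ / Real.sin (rotAngle R / 2)) *
        kernelDeriv₂ N (rotAngle R)) +
      (kernelPoly N).derivative.eval (Real.cos (rotAngle R)) * q 0 *
        (q 0 * ((if i = j then 1 else 0) -
          (q i.succ / Real.sin (rotAngle R / 2)) * (q j.succ / Real.sin (rotAngle R / 2)))) +
      (kernelPoly N).derivative.eval (Real.cos (rotAngle R)) *
        (-(Lgen i * R * Lgen j).trace / 2 -
          ((if i = j then q 0 ^ 2 else 0) - q i.succ * q j.succ)) := by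
  have hSO : IsSO3 R := hR ▸ hy.transpose.mul hx
  rw [Xx_Xy_sigmaK_eq hx hy, ← hR, ← DualCertificate.cos_rotAngle hSO, Matrix.trace_mul_comm R,
    hq.trace_Lgen_mul, hq.trace_Lgen_mul, hq.kernelDeriv₂_rotAngle hSO,
    ← mul_boole (i = j) (q 0 ^ 2)]
  field_simp
  ring

lemma IsQuatOf.abs_Xx_Xy_le (hx : IsSO3 x) (hy : IsSO3 y) (hR : R = yᵀ * x) (hq : IsQuatOf q R)
    (hpos : 0 < Real.sin (rotAngle R / 2)) (i j : Fin 3) :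
    |Xx j (Xy i (sigmaK 8 N)) x y| ≤
      |q j.succ / Real.sin (rotAngle R / 2)| * |kernelDeriv₂ N (rotAngle R)| +
        |kernelDeriv N (rotAngle R)| / Real.sin (rotAngle R / 2) := by
  have hSO : IsSO3 R := hR ▸ hy.transpose.mul hx
  have hn := hq.abs_succ_div_sin_le_one hSO hpos
  have hδn := abs_ite_sub_mul_le_one hn i j
  have herr := hq.abs_trace_Lgen_mul_mul_Lgen_sub_le hSO i j
  have hK := hq.abs_eval_derivative_mul (N := N) hSO hpos
  rw [hq.Xx_Xy_sigmaK hx hy hR hpos]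
  set P := (kernelPoly N).derivative.eval (Real.cos (rotAngle R))
  have haxis : |(q i.succ / Real.sin (rotAngle R / 2)) * (q j.succ / Real.sin (rotAngle R / 2)) *
      kernelDeriv₂ N (rotAngle R)| ≤
      |q j.succ / Real.sin (rotAngle R / 2)| * |kernelDeriv₂ N (rotAngle R)| := by
    rw [abs_mul, abs_mul]
    exact mul_le_mul_of_nonneg_right (mul_le_of_le_one_left (abs_nonneg _) (hn i)) (abs_nonneg _)
  have horth : |P * q 0 * (q 0 * ((if i = j then 1 else 0) -
      (q i.succ / Real.sin (rotAngle R / 2)) * (q j.succ / Real.sin (rotAngle R / 2))))| ≤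
      |P * q 0| := by
    rw [abs_mul, abs_mul (q 0)]
    exact mul_le_of_le_one_right (abs_nonneg _)
      (mul_le_one₀ hq.abs_zero_le_one (abs_nonneg _) hδn)
  have hrem : |P * (-(Lgen i * R * Lgen j).trace / 2 -
      ((if i = j then q 0 ^ 2 else 0) - q i.succ * q j.succ))| ≤ |P * q 0| := by
    rw [abs_mul, abs_mul P]
    exact mul_le_mul_of_nonneg_left
      (herr.trans (mul_le_of_le_one_right (abs_nonneg _) (Real.sin_le_one _))) (abs_nonneg _)
  refine (abs_add_three _ _ _).trans ?_
  rw [abs_neg]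
  linarith

lemma sum_abs_Xx_Xy_le (hx : IsSO3 x) (hy : IsSO3 y)
    (hpos : 0 < Real.sin (rotAngle (y⁻¹ * x) / 2)) (i : Fin 3) :
    ∑ j, |Xx j (Xy i (sigmaK 8 N)) x y| ≤ 7 / 4 * |kernelDeriv₂ N (rotAngle (y⁻¹ * x))| +
      3 * (|kernelDeriv N (rotAngle (y⁻¹ * x))| / Real.sin (rotAngle (y⁻¹ * x) / 2)) := by
  rw [hy.inv_eq] at *
  have hR := hy.transpose.mul hx
  obtain ⟨q, hq⟩ := exists_isQuatOf hR
  have haxis := sum_abs_le_of_sum_sq_le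
    (fun j : Fin 3 => q j.succ / Real.sin (rotAngle (yᵀ * x) / 2)) zero_le_one (by
      simp only [div_pow]
      rw [← add_div, ← add_div, one_pow, div_le_one (by positivity)]
      exact (hq.sum_sq_succ hR).le)
  calc _ ≤ ∑ j : Fin 3, (|q j.succ / Real.sin (rotAngle (yᵀ * x) / 2)| *
          |kernelDeriv₂ N (rotAngle (yᵀ * x))| +
          |kernelDeriv N (rotAngle (yᵀ * x))| / Real.sin (rotAngle (yᵀ * x) / 2)) :=
        Finset.sum_le_sum fun j _ => hq.abs_Xx_Xy_le hx hy rfl hpos i j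
    _ = (∑ j : Fin 3, |q j.succ / Real.sin (rotAngle (yᵀ * x) / 2)|) *
          |kernelDeriv₂ N (rotAngle (yᵀ * x))| +
          3 * (|kernelDeriv N (rotAngle (yᵀ * x))| / Real.sin (rotAngle (yᵀ * x) / 2)) := by
        rw [Finset.sum_add_distrib, Finset.sum_mul]
        simp
    _ ≤ _ := by
        linarith [mul_le_mul_of_nonneg_right haxis
          (abs_nonneg (kernelDeriv₂ N (rotAngle (yᵀ * x))))]

end KernelOnSO3

section Packing

open MeasureTheory Module

/-- The balls of radius `r` around the points are disjoint and lie in the ball of radius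
`(t + 1) * r` around `c`, so their number is bounded by the ratio of the volumes. -/
lemma card_le_of_separated_of_dist_lt {ι E : Type*} [NormedAddCommGroup E] [NormedSpace ℝ E]
    [FiniteDimensional ℝ E] (s : Finset ι) (p : ι → E) (c : E) {r t : ℝ} (hr : 0 < r) (ht : 0 < t)
    (hsep : ∀ i ∈ s, ∀ j ∈ s, i ≠ j → 2 * r ≤ dist (p i) (p j))
    (hc : ∀ i ∈ s, dist (p i) c < t * r) :
    (s.card : ℝ) ≤ (t + 1) ^ finrank ℝ E := by
  borelize E
  let μ : Measure E := Measure.addHaar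
  have hradius : 0 < (t + 1) * r := by positivity
  have hdisj : Set.Pairwise (s : Set ι) (Function.onFun Disjoint fun i => Metric.ball (p i) r) :=
    fun i hi j hj hij => Metric.ball_disjoint_ball (by linarith [hsep i hi j hj hij])
  have hsub : (⋃ i ∈ s, Metric.ball (p i) r) ⊆ Metric.ball c ((t + 1) * r) :=
    Set.iUnion₂_subset fun i hi => Metric.ball_subset_ball' (by linarith [hc i hi])
  have hvol : (s.card : ENNReal) * ENNReal.ofReal (r ^ finrank ℝ E) * μ (Metric.ball 0 1) ≤
      ENNReal.ofReal (((t + 1) * r) ^ finrank ℝ E) * μ (Metric.ball 0 1) :=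
    calc _ = μ (⋃ i ∈ s, Metric.ball (p i) r) := by
          rw [measure_biUnion_finset hdisj fun i _ => measurableSet_ball]
          simp only [μ.addHaar_ball_of_pos _ hr, Finset.sum_const, nsmul_eq_mul, mul_assoc]
      _ ≤ μ (Metric.ball c ((t + 1) * r)) := measure_mono hsub
      _ = _ := by simp only [μ.addHaar_ball_of_pos _ hradius]
  have hcard := ENNReal.toReal_le_of_le_ofReal (by positivity) <|
    (ENNReal.mul_le_mul_iff_left (Metric.measure_ball_pos _ _ zero_lt_one).ne'
      measure_ball_lt_top.ne).1 hvol
  rw [ENNReal.toReal_mul, ENNReal.toReal_natCast, ENNReal.toReal_ofReal (by positivity),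
    mul_pow] at hcard
  exact le_of_mul_le_mul_right hcard (by positivity)

lemma inv_pow_eqOn_rpow {c : ℝ} (hc : 0 < c) (n : ℕ) :
    Set.EqOn (fun t : ℝ => t ^ (-(n : ℝ))) (fun t : ℝ => (t ^ n)⁻¹) (Set.Ioi c) := fun t ht => by
  simp only [Real.rpow_neg (hc.trans ht).le, Real.rpow_natCast]

lemma integrableOn_Ioi_inv_pow {c : ℝ} (hc : 0 < c) {n : ℕ} (hn : 1 ≤ n) :
    IntegrableOn (fun t : ℝ => (t ^ (n + 1))⁻¹) (Set.Ioi c) := by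
  have hexp : -((n + 1 : ℕ) : ℝ) < -1 := by
    rw [neg_lt_neg_iff]
    exact_mod_cast Nat.lt_add_one_of_le hn
  exact (integrableOn_Ioi_rpow_of_lt hexp hc).congr_fun (inv_pow_eqOn_rpow hc _) measurableSet_Ioi

lemma integral_Ioi_inv_pow {c : ℝ} (hc : 0 < c) {n : ℕ} (hn : 1 ≤ n) :
    ∫ t in Set.Ioi c, (t ^ (n + 1))⁻¹ = (c ^ n)⁻¹ / n := by
  have hexp : -((n + 1 : ℕ) : ℝ) < -1 := by
    rw [neg_lt_neg_iff]
    exact_mod_cast Nat.lt_add_one_of_le hn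
  rw [← setIntegral_congr_fun measurableSet_Ioi (inv_pow_eqOn_rpow hc _),
    integral_Ioi_rpow_of_lt hexp hc, show -((n + 1 : ℕ) : ℝ) + 1 = -n by push_cast; ring,
    Real.rpow_neg hc.le, Real.rpow_natCast, neg_div_neg_eq]

lemma sum_inv_pow_eq_integral_card {ι : Type*} (s : Finset ι) (w : ι → ℝ) {v : ℝ} (hv : 0 < v)
    (hw : ∀ i ∈ s, v ≤ w i) {n : ℕ} (hn : 1 ≤ n) :
    ∑ i ∈ s, (w i ^ n)⁻¹ =
      n * ∫ t in Set.Ioi v, ({i ∈ s | w i < t}.card : ℝ) * (t ^ (n + 1))⁻¹ := by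
  have hcard (t : ℝ) : ({i ∈ s | w i < t}.card : ℝ) * (t ^ (n + 1))⁻¹ =
      ∑ i ∈ s, (Set.Ioi (w i)).indicator (fun t : ℝ => (t ^ (n + 1))⁻¹) t := by
    simp only [Set.indicator_apply, Set.mem_Ioi]
    rw [← Finset.sum_filter, Finset.sum_const, nsmul_eq_mul]
  have hn0 : (n : ℝ) ≠ 0 := by positivity
  simp only [hcard]
  rw [integral_finsetSum s fun i _ =>
    (integrableOn_Ioi_inv_pow hv hn).indicator measurableSet_Ioi, Finset.mul_sum]
  refine Finset.sum_congr rfl fun i hi => ?_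
  rw [setIntegral_indicator measurableSet_Ioi,
    Set.inter_eq_self_of_subset_right (Set.Ioi_subset_Ioi (hw i hi)),
    integral_Ioi_inv_pow (hv.trans_le (hw i hi)) hn, mul_div_cancel₀ _ hn0]

/-- The value of `(m + d) * ∫ t in Set.Ioi v, (t + 1) ^ d / t ^ (m + d + 1)`, which bounds the sum
of the powers `w ^ (-(m + d))` of weights `w ≥ v`, at most `(t + 1) ^ d` of which are below `t`. -/
noncomputable def layerBound (d m : ℕ) (v : ℝ) : ℝ :=
  (m + d) * ∑ k ∈ Finset.range (d + 1), d.choose k * ((v ^ (m + k))⁻¹ / (m + k))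

lemma add_one_pow_mul_inv_pow (d m : ℕ) {t : ℝ} (ht : t ≠ 0) :
    (t + 1) ^ d * (t ^ (m + d + 1))⁻¹ =
      ∑ k ∈ Finset.range (d + 1), d.choose k * (t ^ (m + k + 1))⁻¹ := by
  rw [add_comm t, add_pow, Finset.sum_mul]
  refine Finset.sum_congr rfl fun k hk => ?_
  have hpow : t ^ (m + d + 1) = t ^ (d - k) * t ^ (m + k + 1) := by
    rw [← pow_add]
    congr 1
    have := Finset.mem_range_succ_iff.1 hk
    lia
  rw [hpow, one_pow]
  field_simp

lemma sum_inv_pow_le_layerBound {ι : Type*} (s : Finset ι) (w : ι → ℝ) {v : ℝ} (hv : 0 < v)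
    (hw : ∀ i ∈ s, v ≤ w i) {d : ℕ}
    (hcard : ∀ t, v < t → ({i ∈ s | w i < t}.card : ℝ) ≤ (t + 1) ^ d) {m : ℕ} (hm : 1 ≤ m) :
    ∑ i ∈ s, (w i ^ (m + d))⁻¹ ≤ layerBound d m v := by
  have hint (k : ℕ) :
      IntegrableOn (fun t : ℝ => d.choose k * (t ^ (m + k + 1))⁻¹) (Set.Ioi v) :=
    (integrableOn_Ioi_inv_pow hv (Nat.le_add_right_of_le hm)).const_mul _
  rw [sum_inv_pow_eq_integral_card s w hv hw (Nat.le_add_right_of_le hm), layerBound, Nat.cast_add]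
  gcongr
  calc ∫ t in Set.Ioi v, ({i ∈ s | w i < t}.card : ℝ) * (t ^ (m + d + 1))⁻¹
      ≤ ∫ t in Set.Ioi v, ∑ k ∈ Finset.range (d + 1), d.choose k * (t ^ (m + k + 1))⁻¹ := by
        refine integral_mono_of_nonneg ?_ (integrable_finsetSum _ fun k _ => hint k) ?_ <;>
          refine (ae_restrict_iff' measurableSet_Ioi).2 (ae_of_all _ fun t ht => ?_)
        · have : 0 < t := hv.trans ht
          exact mul_nonneg (Nat.cast_nonneg _) (by positivity)
        · have : 0 < t := hv.trans ht
          simp only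
          rw [← add_one_pow_mul_inv_pow d m this.ne']
          exact mul_le_mul_of_nonneg_right (hcard t ht) (by positivity)
    _ = ∑ k ∈ Finset.range (d + 1), d.choose k * ((v ^ (m + k))⁻¹ / (m + k)) := by
        rw [integral_finsetSum _ fun k _ => hint k]
        refine Finset.sum_congr rfl fun k _ => ?_
        rw [integral_const_mul, integral_Ioi_inv_pow hv (Nat.le_add_right_of_le hm), Nat.cast_add]

end Packing

section Separation

variable {N : ℕ} {x y : Mat3}

/-- The chordal distance between two rotations: the distance in `ℝ⁴` of their unit quaternions,
with signs chosen to make it minimal. A rotation angle `ω` corresponds to an angle `ω / 2` between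
the quaternions, hence to a chord of length `2 sin (ω / 4)`. -/
noncomputable def quatDist (x y : Mat3) : ℝ := 2 * Real.sin (rotAngle (y⁻¹ * x) / 4)

/-- Distinct members of the family `x` differ by a rotation of angle at least `θ`. -/
def AngleSeparated {ι : Type*} (θ : ℝ) (x : ι → Mat3) : Prop :=
  ∀ a b, a ≠ b → θ ≤ rotAngle ((x b)⁻¹ * x a)

/-- Half the chordal distance of two rotations that differ by an angle `36 / (N + 1)`. -/
noncomputable def sepRadius (N : ℕ) : ℝ := Real.sin (9 / (N + 1))

lemma two_mul_sin_le_quatDist {t : ℝ} (ht : 0 ≤ t) (h : t ≤ rotAngle (y⁻¹ * x)) :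
    2 * Real.sin (t / 4) ≤ quatDist x y := by
  refine mul_le_mul_of_nonneg_left
    (Real.sin_le_sin_of_le_of_le_pi_div_two ?_ ?_ ?_) zero_le_two <;>
    linarith [Real.pi_pos, rotAngle_le_pi (y⁻¹ * x)]

lemma quatDist_nonneg (x y : Mat3) : 0 ≤ quatDist x y := by
  simpa using two_mul_sin_le_quatDist le_rfl (rotAngle_nonneg (y⁻¹ * x))

lemma cos_half_rotAngle_eq (x y : Mat3) :
    Real.cos (rotAngle (y⁻¹ * x) / 2) = 1 - quatDist x y ^ 2 / 2 := by
  rw [show rotAngle (y⁻¹ * x) / 2 = 2 * (rotAngle (y⁻¹ * x) / 4) by ring, Real.cos_two_mul,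
    Real.cos_sq', quatDist]
  ring

lemma cos_half_rotAngle_nonneg (R : Mat3) : 0 ≤ Real.cos (rotAngle R / 2) :=
  Real.cos_nonneg_of_neg_pi_div_two_le_of_le (by linarith [rotAngle_nonneg R, Real.pi_pos])
    (by linarith [rotAngle_le_pi R])

lemma quatDist_sq_le_two (x y : Mat3) : quatDist x y ^ 2 ≤ 2 := by
  linarith [cos_half_rotAngle_eq x y, cos_half_rotAngle_nonneg (y⁻¹ * x)]

lemma sin_half_rotAngle_eq (x y : Mat3) : Real.sin (rotAngle (y⁻¹ * x) / 2) =
    quatDist x y * Real.cos (rotAngle (y⁻¹ * x) / 4) := by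
  rw [quatDist, ← Real.sin_two_mul]
  ring_nf

lemma sin_sq_half_rotAngle_eq (x y : Mat3) : Real.sin (rotAngle (y⁻¹ * x) / 2) ^ 2 =
    quatDist x y ^ 2 * (1 - quatDist x y ^ 2 / 4) := by
  rw [Real.sin_sq, cos_half_rotAngle_eq]
  ring

lemma seven_tenths_le_cos_quarter (R : Mat3) : 0.7 ≤ Real.cos (rotAngle R / 4) := by
  have hcos := Real.cos_le_cos_of_nonneg_of_le_pi (x := rotAngle R / 4) (y := π / 4)
    (by linarith [rotAngle_nonneg R]) (by linarith [Real.pi_pos]) (by linarith [rotAngle_le_pi R])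
  rw [Real.cos_pi_div_four] at hcos
  have : (1.4 : ℝ) ≤ √2 := Real.le_sqrt_of_sq_le (by norm_num)
  linarith

lemma IsQuatOf.neg {q : Fin 4 → ℝ} (hq : IsQuatOf q x) : IsQuatOf (-q) x := fun j k => by
  simpa using hq j k

lemma IsQuatOf.abs_sum_mul_eq {p q : Fin 4 → ℝ} (hp : IsQuatOf p x) (hq : IsQuatOf q y)
    (hx : IsSO3 x) (hy : IsSO3 y) : |∑ i, p i * q i| = 1 - quatDist x y ^ 2 / 2 := by
  have hcos := DualCertificate.cos_rotAngle (hy.transpose.mul hx)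
  rw [hp.trace_transpose_mul_eq hq, ← hy.inv_eq,
    show rotAngle (y⁻¹ * x) = 2 * (rotAngle (y⁻¹ * x) / 2) by ring, Real.cos_two_mul] at hcos
  rw [← cos_half_rotAngle_eq, ← abs_of_nonneg (cos_half_rotAngle_nonneg (y⁻¹ * x)),
    ← sq_eq_sq_iff_abs_eq_abs]
  linarith

lemma IsQuatOf.dist_sq_eq {p q : EuclideanSpace ℝ (Fin 4)} (hp : IsQuatOf p x)
    (hq : IsQuatOf q y) : dist p q ^ 2 = 2 - 2 * ∑ i, p i * q i := by
  rw [EuclideanSpace.dist_eq, Real.sq_sqrt (Finset.sum_nonneg fun i _ => sq_nonneg _)]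
  simp only [Real.dist_eq, sq_abs, Fin.sum_univ_four]
  linear_combination hp.sum_sq + hq.sum_sq

lemma IsQuatOf.quatDist_le_dist {p q : EuclideanSpace ℝ (Fin 4)} (hp : IsQuatOf p x)
    (hq : IsQuatOf q y) (hx : IsSO3 x) (hy : IsSO3 y) : quatDist x y ≤ dist p q := by
  rw [← sq_le_sq₀ (quatDist_nonneg x y) dist_nonneg, hp.dist_sq_eq hq]
  linarith [hp.abs_sum_mul_eq hq hx hy, le_abs_self (∑ i, p i * q i)]

lemma IsQuatOf.dist_eq_quatDist {p q : EuclideanSpace ℝ (Fin 4)} (hp : IsQuatOf p x)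
    (hq : IsQuatOf q y) (hx : IsSO3 x) (hy : IsSO3 y) (hpq : 0 ≤ ∑ i, p i * q i) :
    dist p q = quatDist x y := by
  have habs := hp.abs_sum_mul_eq hq hx hy
  rw [abs_of_nonneg hpq] at habs
  rw [← sq_eq_sq₀ dist_nonneg (quatDist_nonneg x y), hp.dist_sq_eq hq, habs]
  ring

/-- Choose all quaternions in the half space of a quaternion `c` of `y`; then the distances to `c`
are the minimal ones. -/
lemma exists_quaternions {ι : Type*} (x : ι → Mat3) (hx : ∀ i, IsSO3 (x i)) (hy : IsSO3 y) :
    ∃ (c : EuclideanSpace ℝ (Fin 4)) (p : ι → EuclideanSpace ℝ (Fin 4)),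
      (∀ i, dist (p i) c = quatDist y (x i)) ∧ ∀ i j, quatDist (x i) (x j) ≤ dist (p i) (p j) := by
  obtain ⟨c, hc⟩ := exists_isQuatOf hy
  have hlift (i : ι) : ∃ p, IsQuatOf p (x i) ∧ 0 ≤ ∑ k, c k * p k := by
    obtain ⟨p, hp⟩ := exists_isQuatOf (hx i)
    rcases le_total 0 (∑ k, c k * p k) with h | h
    · exact ⟨p, hp, h⟩
    · exact ⟨-p, hp.neg, by simpa using h⟩
  choose p hp hpos using hlift
  refine ⟨WithLp.toLp 2 c, fun i => WithLp.toLp 2 (p i), fun i => ?_, fun i j => ?_⟩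
  · rw [dist_comm]
    exact IsQuatOf.dist_eq_quatDist (p := WithLp.toLp 2 c) hc (hp i) hy (hx i) (hpos i)
  · exact IsQuatOf.quatDist_le_dist (p := WithLp.toLp 2 (p i)) (hp i) (hp j) (hx i) (hx j)

lemma quatDist_triangle {x₁ x₂ : Mat3} (h₁ : IsSO3 x₁) (h₂ : IsSO3 x₂) (hy : IsSO3 y) :
    quatDist x₁ x₂ ≤ quatDist y x₁ + quatDist y x₂ := by
  obtain ⟨c, p, hc, hp⟩ := exists_quaternions ![x₁, x₂]
    (fun i => by fin_cases i; exacts [h₁, h₂]) hy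
  calc quatDist x₁ x₂ ≤ dist (p 0) (p 1) := hp 0 1
    _ ≤ dist (p 0) c + dist (p 1) c := dist_triangle_right _ _ _
    _ = quatDist y x₁ + quatDist y x₂ := by rw [hc, hc]; rfl

lemma two_mul_sepRadius_le_quatDist (h : 36 / ((N : ℝ) + 1) ≤ rotAngle (y⁻¹ * x)) :
    2 * sepRadius N ≤ quatDist x y := by
  rw [sepRadius, show 9 / ((N : ℝ) + 1) = 36 / (N + 1) / 4 by ring]
  exact two_mul_sin_le_quatDist (by positivity) h

lemma le_mul_sepRadius (hN : 20 ≤ N) : 8.7 ≤ (N + 1) * sepRadius N := by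
  have hN' : (21 : ℝ) ≤ N + 1 := by
    have : (20 : ℝ) ≤ N := by exact_mod_cast hN
    linarith
  calc (8.7 : ℝ) ≤ 9 - 121.5 / 21 ^ 2 := by norm_num
    _ ≤ 9 - 121.5 / (N + 1) ^ 2 := by gcongr
    _ = ((N : ℝ) + 1) * (9 / (N + 1) - (9 / (N + 1)) ^ 3 / 6) := by field_simp; norm_num; ring
    _ ≤ (N + 1) * sepRadius N :=
        mul_le_mul_of_nonneg_left (Real.sin_ge_sub_cube (by positivity)) (by positivity)

lemma sepRadius_pos (hN : 20 ≤ N) : 0 < sepRadius N :=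
  pos_of_mul_pos_right ((by norm_num : (0 : ℝ) < 8.7).trans_le (le_mul_sepRadius hN))
    (by positivity)

end Separation

section DecaySums

variable {N : ℕ} {ι : Type*} {x : ι → Mat3} {y : Mat3}

lemma inv_one_sub_pow_four_le {u : ℝ} (h0 : 0 ≤ u) (h1 : u ≤ 1 / 2) :
    ((1 - u) ^ 4)⁻¹ ≤ 1 + 30 * u := by
  have hpos : 0 < (1 - u) ^ 4 := pow_pos (by linarith) 4
  have hcubic : 0 ≤ 26 - 62 * u + 52 * u ^ 2 - 15 * u ^ 3 := by
    nlinarith [mul_nonneg (sq_nonneg u) (sub_nonneg.2 h1), sq_nonneg (u - 31 / 45)]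
  rw [inv_le_iff_one_le_mul₀' hpos]
  linarith [mul_nonneg h0 (mul_nonneg (by linarith : 0 ≤ 1 - 2 * u) hcubic)]

lemma inv_pow_eight_sin_half_le {E : ℝ} (hE : 0 < E) (x : Mat3) (hd : 0 < quatDist x y) :
    ((2 * E * Real.sin (rotAngle (y⁻¹ * x) / 2)) ^ 8)⁻¹ ≤
      ((2 * E * quatDist x y) ^ 8)⁻¹ + 30 / (16 * E ^ 2) * ((2 * E * quatDist x y) ^ 6)⁻¹ := by
  have hsin := sin_sq_half_rotAngle_eq x y
  have hd2 := quatDist_sq_le_two x y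
  set d := quatDist x y
  set S := Real.sin (rotAngle (y⁻¹ * x) / 2)
  calc ((2 * E * S) ^ 8)⁻¹ = (((2 * E) ^ 2 * S ^ 2) ^ 4)⁻¹ := by ring
    _ = ((2 * E * d) ^ 8)⁻¹ * ((1 - d ^ 2 / 4) ^ 4)⁻¹ := by
        rw [hsin, ← mul_inv]
        congr 1
        ring
    _ ≤ ((2 * E * d) ^ 8)⁻¹ * (1 + 30 * (d ^ 2 / 4)) := by
        gcongr
        exact inv_one_sub_pow_four_le (by positivity) (by linarith)
    _ = ((2 * E * d) ^ 8)⁻¹ + 30 / (16 * E ^ 2) * ((2 * E * d) ^ 6)⁻¹ := by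
        field_simp
        ring

lemma card_quatDist_lt_le (s : Finset ι) (hx : ∀ i, IsSO3 (x i)) (hy : IsSO3 y) {r t : ℝ}
    (hr : 0 < r) (ht : 0 < t) (hsep : ∀ i j, i ≠ j → 2 * r ≤ quatDist (x i) (x j)) :
    ({i ∈ s | quatDist y (x i) / r < t}.card : ℝ) ≤ (t + 1) ^ 4 := by
  obtain ⟨c, p, hc, hp⟩ := exists_quaternions x hx hy
  have hcard := card_le_of_separated_of_dist_lt {i ∈ s | quatDist y (x i) / r < t} p c hr ht
    (fun i _ j _ hij => (hsep i j hij).trans (hp i j)) fun i hi => by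
      rw [hc, ← div_lt_iff₀ hr]
      exact (Finset.mem_filter.1 hi).2
  rwa [finrank_euclideanSpace_fin] at hcard

/-- Bounds the sum of `(2 (N + 1) sin (ωᵢ / 2)) ^ (-8)` over separated rotations at chordal distance
at least `v * sepRadius N` from `y`. The base is about `2 * 8.7` times the relative distance `wᵢ`;
the second summand accounts for `sin (ωᵢ / 2)` being smaller than the chord. -/
noncomputable def decayConst (v : ℝ) : ℝ :=
  layerBound 4 4 v / 17.4 ^ 8 + 30 / (16 * 21 ^ 2) * (layerBound 4 2 v / 17.4 ^ 6)

lemma sum_inv_pow_eight_le (hN : 20 ≤ N) (s : Finset ι) (hx : ∀ i, IsSO3 (x i))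
    (hsep : AngleSeparated (36 / ((N : ℝ) + 1)) x) (hy : IsSO3 y) {v : ℝ} (hv : 0 < v)
    (hfar : ∀ i ∈ s, v * sepRadius N ≤ quatDist y (x i)) :
    ∑ i ∈ s, ((2 * (N + 1) * Real.sin (rotAngle ((x i)⁻¹ * y) / 2)) ^ 8)⁻¹ ≤ decayConst v := by
  have hN' : (21 : ℝ) ≤ N + 1 := by
    have : (20 : ℝ) ≤ N := by exact_mod_cast hN
    linarith
  have hr := sepRadius_pos hN
  set w : ι → ℝ := fun i => quatDist y (x i) / sepRadius N
  have hw (i : ι) (hi : i ∈ s) : v ≤ w i := (le_div_iff₀ hr).2 (hfar i hi)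
  have hcard (t : ℝ) (ht : v < t) : ({i ∈ s | w i < t}.card : ℝ) ≤ (t + 1) ^ 4 :=
    card_quatDist_lt_le s hx hy hr (hv.trans ht) fun i j hij =>
      two_mul_sepRadius_le_quatDist (hsep i j hij)
  have hterm (i : ι) (hi : i ∈ s) :
      ((2 * (N + 1) * Real.sin (rotAngle ((x i)⁻¹ * y) / 2)) ^ 8)⁻¹ ≤
        (w i ^ 8)⁻¹ / 17.4 ^ 8 + 30 / (16 * 21 ^ 2) * ((w i ^ 6)⁻¹ / 17.4 ^ 6) := by
    have hwi : 0 < w i := hv.trans_le (hw i hi)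
    have hdist : quatDist y (x i) = w i * sepRadius N := (div_mul_cancel₀ _ hr.ne').symm
    have hbase : 17.4 * w i ≤ 2 * (N + 1) * quatDist y (x i) := by
      rw [hdist]
      linarith [mul_le_mul_of_nonneg_right (le_mul_sepRadius hN) hwi.le]
    refine (inv_pow_eight_sin_half_le (by positivity) y (hdist ▸ mul_pos hwi hr)).trans ?_
    simp only [div_eq_mul_inv (_⁻¹), ← mul_inv, ← mul_pow, mul_comm (w i)]
    gcongr
  refine (Finset.sum_le_sum hterm).trans ?_
  rw [Finset.sum_add_distrib, ← Finset.mul_sum, ← Finset.sum_div, ← Finset.sum_div, decayConst]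
  gcongr
  · exact sum_inv_pow_le_layerBound s w hv hw hcard (by norm_num)
  · exact sum_inv_pow_le_layerBound s w hv hw hcard (by norm_num)

lemma decayConst_two_le : 5168000 * decayConst 2 ≤ 0.0023 := by
  norm_num [decayConst, layerBound, Finset.sum_range_succ, Nat.choose]

lemma decayConst_three_halves_le : 5168000 * decayConst (3 / 2) ≤ 0.0064 := by
  norm_num [decayConst, layerBound, Finset.sum_range_succ, Nat.choose]

lemma decayConst_one_le : 5168000 * decayConst 1 ≤ 0.0345 := by
  norm_num [decayConst, layerBound, Finset.sum_range_succ, Nat.choose]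

lemma sum_abs_le_mul_decayConst (hN : 20 ≤ N) (s : Finset ι) (hx : ∀ i, IsSO3 (x i))
    (hsep : AngleSeparated (36 / ((N : ℝ) + 1)) x) (hy : IsSO3 y) {v : ℝ} (hv : 0 < v)
    (hfar : ∀ i ∈ s, v * sepRadius N ≤ quatDist y (x i)) {f : ℝ → ℝ} {C : ℝ} (hC : 0 ≤ C)
    (hf : ∀ t, (2 * ((N : ℝ) + 1) * |Real.sin (t / 2)|) ^ 8 * |f t| ≤ C) :
    ∑ i ∈ s, |f (rotAngle ((x i)⁻¹ * y))| ≤ C * decayConst v := by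
  refine le_trans ?_ (mul_le_mul_of_nonneg_left (sum_inv_pow_eight_le hN s hx hsep hy hv hfar) hC)
  rw [Finset.mul_sum]
  refine Finset.sum_le_sum fun i hi => ?_
  have hdist : 0 < quatDist y (x i) := (mul_pos hv (sepRadius_pos hN)).trans_le (hfar i hi)
  have hcos : 0 < Real.cos (rotAngle ((x i)⁻¹ * y) / 4) :=
    (by norm_num : (0 : ℝ) < 0.7).trans_le (seven_tenths_le_cos_quarter _)
  have hsin : 0 < Real.sin (rotAngle ((x i)⁻¹ * y) / 2) := by
    rw [sin_half_rotAngle_eq]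
    positivity
  have hdecay := hf (rotAngle ((x i)⁻¹ * y))
  rw [abs_of_pos hsin] at hdecay
  rwa [← div_eq_mul_inv, le_div_iff₀' (by positivity)]

lemma sum_abs_kernel_le (hN : 20 ≤ N) (s : Finset ι) (hx : ∀ i, IsSO3 (x i))
    (hsep : AngleSeparated (36 / ((N : ℝ) + 1)) x) (hy : IsSO3 y) {v : ℝ} (hv : 0 < v)
    (hfar : ∀ i ∈ s, v * sepRadius N ≤ quatDist y (x i)) {D : ℝ}
    (hD : 5168000 * decayConst v ≤ D) :
    ∑ i ∈ s, |kernel N (rotAngle ((x i)⁻¹ * y))| ≤ D :=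
  (sum_abs_le_mul_decayConst hN s hx hsep hy hv hfar (by norm_num) (kernel_decay hN)).trans hD

lemma sum_abs_kernelDeriv_le (hN : 20 ≤ N) (s : Finset ι) (hx : ∀ i, IsSO3 (x i))
    (hsep : AngleSeparated (36 / ((N : ℝ) + 1)) x) (hy : IsSO3 y) {v : ℝ} (hv : 0 < v)
    (hfar : ∀ i ∈ s, v * sepRadius N ≤ quatDist y (x i)) {D : ℝ}
    (hD : 5168000 * decayConst v ≤ D) :
    ∑ i ∈ s, |kernelDeriv N (rotAngle ((x i)⁻¹ * y))| ≤ 2 * (N + 1) * D := by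
  refine (sum_abs_le_mul_decayConst hN s hx hsep hy hv hfar (by positivity)
    (kernelDeriv_decay hN)).trans ?_
  linarith [mul_le_mul_of_nonneg_left hD (by positivity : (0 : ℝ) ≤ 2 * (N + 1))]

lemma sum_abs_kernelDeriv₂_le (hN : 20 ≤ N) (s : Finset ι) (hx : ∀ i, IsSO3 (x i))
    (hsep : AngleSeparated (36 / ((N : ℝ) + 1)) x) (hy : IsSO3 y) {v : ℝ} (hv : 0 < v)
    (hfar : ∀ i ∈ s, v * sepRadius N ≤ quatDist y (x i)) {D : ℝ}
    (hD : 5168000 * decayConst v ≤ D) :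
    ∑ i ∈ s, |kernelDeriv₂ N (rotAngle ((x i)⁻¹ * y))| ≤ 5.25 * (N + 1) ^ 2 * D := by
  refine (sum_abs_le_mul_decayConst hN s hx hsep hy hv hfar (by positivity)
    (kernelDeriv₂_decay hN)).trans ?_
  linarith [mul_le_mul_of_nonneg_left hD (by positivity : (0 : ℝ) ≤ 5.25 * (N + 1) ^ 2)]

end DecaySums

section Coefficients

variable {N M : ℕ} {x : Fin M → Mat3} {α : Fin 4 × Fin M → ℝ} {A B : ℝ}

lemma mulVec_Kmat_zero (α : Fin 4 × Fin M → ℝ) (a : Fin M) :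
    (Kmat 8 N x).mulVec α (0, a) = ∑ b, (α (0, b) * sigmaK 8 N (x a) (x b) +
      ∑ k : Fin 3, α (k.succ, b) * Xx k (sigmaK 8 N) (x a) (x b)) := by
  simp only [Matrix.mulVec, dotProduct, Fintype.sum_prod_type_right, Fin.sum_univ_succ (n := 3),
    Fin.sum_univ_three]
  refine Finset.sum_congr rfl fun b _ => ?_
  simp [Kmat, Kblock, toOp, mul_comm]

lemma mulVec_Kmat_succ (α : Fin 4 × Fin M → ℝ) (i : Fin 3) (a : Fin M) :
    (Kmat 8 N x).mulVec α (i.succ, a) = ∑ b, (α (0, b) * Xy i (sigmaK 8 N) (x a) (x b) +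
      ∑ k : Fin 3, α (k.succ, b) * Xx k (Xy i (sigmaK 8 N)) (x a) (x b)) := by
  simp only [Matrix.mulVec, dotProduct, Fintype.sum_prod_type_right, Fin.sum_univ_succ (n := 3),
    Fin.sum_univ_three]
  refine Finset.sum_congr rfl fun b _ => ?_
  fin_cases i <;> simp [Kmat, Kblock, toOp, mul_comm]

lemma abs_mul_add_sum_mul_le {ι : Type*} [Fintype ι] {a₀ k₀ : ℝ} {a k : ι → ℝ} (ha₀ : |a₀| ≤ A)
    (ha : ∀ i, |a i| ≤ B) :
    |a₀ * k₀ + ∑ i, a i * k i| ≤ A * |k₀| + B * ∑ i, |k i| := by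
  refine (abs_add_le _ _).trans (add_le_add ?_ ?_)
  · rw [abs_mul]
    gcongr
  · rw [Finset.mul_sum]
    refine (Finset.abs_sum_le_sum_abs _ _).trans (Finset.sum_le_sum fun i _ => ?_)
    rw [abs_mul]
    exact mul_le_mul_of_nonneg_right (ha i) (abs_nonneg _)

lemma sum_mul_abs_kernel_add_le (hN : 20 ≤ N) (s : Finset (Fin M)) (hx : ∀ a, IsSO3 (x a))
    (hsep : AngleSeparated (36 / ((N : ℝ) + 1)) x) (hA : 0 ≤ A) (hB : 0 ≤ B) {z : Mat3}
    (hz : IsSO3 z) {v D : ℝ} (hv : 0 < v) (hfar : ∀ j ∈ s, v * sepRadius N ≤ quatDist z (x j))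
    (hD : 5168000 * decayConst v ≤ D) :
    ∑ j ∈ s, (A * |kernel N (rotAngle ((x j)⁻¹ * z))| +
      B * (7 / 4 * |kernelDeriv N (rotAngle ((x j)⁻¹ * z))|)) ≤ (A + 3.5 * ((N + 1) * B)) * D := by
  simp only [Finset.sum_add_distrib, ← Finset.mul_sum]
  have h0 := mul_le_mul_of_nonneg_left (sum_abs_kernel_le hN s hx hsep hz hv hfar hD) hA
  have h1 := mul_le_mul_of_nonneg_left (sum_abs_kernelDeriv_le hN s hx hsep hz hv hfar hD) hB
  linarith

lemma sum_offDiag_zero_le (hN : 20 ≤ N) (hx : ∀ a, IsSO3 (x a))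
    (hsep : AngleSeparated (36 / ((N : ℝ) + 1)) x) (hA : ∀ j, |α (0, j)| ≤ A)
    (hB : ∀ j (k : Fin 3), |α (k.succ, j)| ≤ B) (hA0 : 0 ≤ A) (hB0 : 0 ≤ B) (a : Fin M) :
    |∑ b ∈ Finset.univ.erase a, (α (0, b) * sigmaK 8 N (x a) (x b) +
      ∑ k : Fin 3, α (k.succ, b) * Xx k (sigmaK 8 N) (x a) (x b))| ≤
      0.0023 * (A + 3.5 * ((N + 1) * B)) := by
  have hsum := sum_mul_abs_kernel_add_le hN (Finset.univ.erase a) hx hsep hA0 hB0 (hx a) two_pos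
    (fun b hb => two_mul_sepRadius_le_quatDist (hsep a b (Finset.ne_of_mem_erase hb).symm))
    decayConst_two_le
  rw [mul_comm]
  refine (Finset.abs_sum_le_sum_abs _ _).trans ((Finset.sum_le_sum fun b _ => ?_).trans hsum)
  rw [← sigmaK_eq_kernel]
  exact (abs_mul_add_sum_mul_le (hA b) (hB b)).trans (add_le_add_right
    (mul_le_mul_of_nonneg_left (sum_abs_Xx_le (hx a) (hx b)) hB0) _)

lemma twelve_div_le_sin_half_rotAngle (hN : 20 ≤ N) {x y : Mat3}
    (h : 36 / ((N : ℝ) + 1) ≤ rotAngle (y⁻¹ * x)) :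
    12 / ((N : ℝ) + 1) ≤ Real.sin (rotAngle (y⁻¹ * x) / 2) := by
  rw [sin_half_rotAngle_eq, div_le_iff₀' (by positivity)]
  calc (12 : ℝ) ≤ 2 * 8.7 * 0.7 := by norm_num
    _ ≤ 2 * ((N + 1) * sepRadius N) * Real.cos (rotAngle (y⁻¹ * x) / 4) := by
        have := sepRadius_pos hN
        gcongr
        · exact le_mul_sepRadius hN
        · exact seven_tenths_le_cos_quarter _
    _ = (N + 1) * (2 * sepRadius N * Real.cos (rotAngle (y⁻¹ * x) / 4)) := by ring
    _ ≤ (N + 1) * (quatDist x y * Real.cos (rotAngle (y⁻¹ * x) / 4)) := by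
        have : (0 : ℝ) ≤ Real.cos (rotAngle (y⁻¹ * x) / 4) :=
          le_trans (by norm_num) (seven_tenths_le_cos_quarter _)
        gcongr
        exact two_mul_sepRadius_le_quatDist h

lemma sum_abs_Xx_Xy_le_of_separated (hN : 20 ≤ N) {x y : Mat3} (hx : IsSO3 x) (hy : IsSO3 y)
    (h : 36 / ((N : ℝ) + 1) ≤ rotAngle (y⁻¹ * x)) (i : Fin 3) :
    ∑ j, |Xx j (Xy i (sigmaK 8 N)) x y| ≤ 7 / 4 * |kernelDeriv₂ N (rotAngle (y⁻¹ * x))| +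
      (N + 1) / 4 * |kernelDeriv N (rotAngle (y⁻¹ * x))| := by
  have hsin := twelve_div_le_sin_half_rotAngle hN h
  have hpos : (0 : ℝ) < 12 / (N + 1) := by positivity
  have hdiv := div_le_div_of_nonneg_left
    (abs_nonneg (kernelDeriv N (rotAngle (y⁻¹ * x)))) hpos hsin
  rw [div_div_eq_mul_div] at hdiv
  linarith [sum_abs_Xx_Xy_le (N := N) hx hy (hpos.trans_le hsin) i]

lemma sum_offDiag_succ_le (hN : 20 ≤ N) (hx : ∀ a, IsSO3 (x a))
    (hsep : AngleSeparated (36 / ((N : ℝ) + 1)) x) (hA : ∀ j, |α (0, j)| ≤ A)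
    (hB : ∀ j (k : Fin 3), |α (k.succ, j)| ≤ B) (hA0 : 0 ≤ A) (hB0 : 0 ≤ B)
    (i : Fin 3) (a : Fin M) :
    |∑ b ∈ Finset.univ.erase a, (α (0, b) * Xy i (sigmaK 8 N) (x a) (x b) +
      ∑ k : Fin 3, α (k.succ, b) * Xx k (Xy i (sigmaK 8 N)) (x a) (x b))| ≤
      (N + 1) * (0.0046 * A + 0.0223 * ((N + 1) * B)) := by
  have hab (b) (hb : b ∈ Finset.univ.erase a) := hsep a b (Finset.ne_of_mem_erase hb).symm
  have hfar (b) (hb : b ∈ Finset.univ.erase a) := two_mul_sepRadius_le_quatDist (hab b hb)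
  have h1 := sum_abs_kernelDeriv_le hN _ hx hsep (hx a) two_pos hfar decayConst_two_le
  have h2 := sum_abs_kernelDeriv₂_le hN _ hx hsep (hx a) two_pos hfar decayConst_two_le
  calc _ ≤ ∑ b ∈ Finset.univ.erase a, (A * |kernelDeriv N (rotAngle ((x b)⁻¹ * x a))| +
          B * (7 / 4 * |kernelDeriv₂ N (rotAngle ((x b)⁻¹ * x a))| +
            (N + 1) / 4 * |kernelDeriv N (rotAngle ((x b)⁻¹ * x a))|)) :=
        (Finset.abs_sum_le_sum_abs _ _).trans <| Finset.sum_le_sum fun b hb =>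
          (abs_mul_add_sum_mul_le (hA b) (hB b)).trans <| add_le_add
            (mul_le_mul_of_nonneg_left (abs_Xy_le (hx a) (hx b) i) hA0)
            (mul_le_mul_of_nonneg_left
              (sum_abs_Xx_Xy_le_of_separated hN (hx a) (hx b) (hab b hb) i) hB0)
    _ ≤ A * (2 * (N + 1) * 0.0023) + B * (7 / 4 * (5.25 * (N + 1) ^ 2 * 0.0023) +
          (N + 1) / 4 * (2 * (N + 1) * 0.0023)) := by
        simp only [Finset.sum_add_distrib, ← Finset.mul_sum]
        gcongr
    _ ≤ _ := by linarith [(by positivity : 0 ≤ B * ((N : ℝ) + 1) ^ 2)]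

lemma abs_coeff_zero_le (hN : 20 ≤ N) (hx : ∀ a, IsSO3 (x a))
    (hsep : AngleSeparated (36 / ((N : ℝ) + 1)) x) {u : Fin M → ℝ} (hu : ∀ i, |u i| ≤ 1)
    (hα : (Kmat 8 N x).mulVec α = rhsVec u) (hA : ∀ j, |α (0, j)| ≤ A)
    (hB : ∀ j (k : Fin 3), |α (k.succ, j)| ≤ B) (hA0 : 0 ≤ A) (hB0 : 0 ≤ B) (a : Fin M) :
    |α (0, a)| ≤ 1 + 0.0023 * (A + 3.5 * ((N + 1) * B)) := by
  have hrow := congrFun hα (0, a)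
  rw [mulVec_Kmat_zero, ← Finset.add_sum_erase _ _ (Finset.mem_univ a)] at hrow
  simp only [sigmaK_self hN (hx _), Xx_sigmaK_self (hx _), mul_zero, Finset.sum_const_zero,
    add_zero, mul_one, rhsVec, if_true] at hrow
  rw [eq_sub_of_add_eq hrow]
  exact (abs_sub _ _).trans (add_le_add (hu a) (sum_offDiag_zero_le hN hx hsep hA hB hA0 hB0 a))

lemma mul_abs_coeff_succ_le (hN : 20 ≤ N) (hx : ∀ a, IsSO3 (x a))
    (hsep : AngleSeparated (36 / ((N : ℝ) + 1)) x) {u : Fin M → ℝ}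
    (hα : (Kmat 8 N x).mulVec α = rhsVec u) (hA : ∀ j, |α (0, j)| ≤ A)
    (hB : ∀ j (k : Fin 3), |α (k.succ, j)| ≤ B) (hA0 : 0 ≤ A) (hB0 : 0 ≤ B)
    (i : Fin 3) (a : Fin M) :
    0.0555 * ((N + 1) * |α (i.succ, a)|) ≤ 0.0046 * A + 0.0223 * ((N + 1) * B) := by
  have hrow := congrFun hα (i.succ, a)
  have hdiag : ∑ k : Fin 3, α (k.succ, a) * Xx k (Xy i (sigmaK 8 N)) (x a) (x a) =
      α (i.succ, a) * ((N + 1) ^ 2 * weightMoment N 2) := by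
    simp [Xx_Xy_sigmaK_self (hx a)]
  rw [mulVec_Kmat_succ, ← Finset.add_sum_erase _ _ (Finset.mem_univ a), hdiag] at hrow
  simp only [Xy_sigmaK_self (hx _), mul_zero, zero_add, rhsVec, Fin.succ_ne_zero,
    if_false] at hrow
  have hmoment := (weightMoment_two_mem_Icc hN).1
  have hpos : (0 : ℝ) < N + 1 := by positivity
  refine le_of_mul_le_mul_left ?_ hpos
  calc ((N : ℝ) + 1) * (0.0555 * ((N + 1) * |α (i.succ, a)|))
      = |α (i.succ, a)| * ((N + 1) ^ 2 * 0.0555) := by ring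
    _ ≤ |α (i.succ, a)| * |(N + 1) ^ 2 * weightMoment N 2| := by
        gcongr
        exact (mul_le_mul_of_nonneg_left hmoment (by positivity)).trans (le_abs_self _)
    _ ≤ _ := by
        rw [← abs_mul, eq_neg_of_add_eq_zero_left hrow, abs_neg]
        exact sum_offDiag_succ_le hN hx hsep hA hB hA0 hB0 i a

/-- The system is diagonally dominant, so the largest coefficients satisfy a small linear system of
inequalities. -/
lemma coeff_bounds (hN : 20 ≤ N) (hx : ∀ a, IsSO3 (x a))
    (hsep : AngleSeparated (36 / ((N : ℝ) + 1)) x) {u : Fin M → ℝ} (hu : ∀ i, |u i| ≤ 1)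
    (hα : (Kmat 8 N x).mulVec α = rhsVec u) :
    (∀ j, |α (0, j)| ≤ 1.004) ∧ ∀ j (k : Fin 3), |α (k.succ, j)| ≤ 0.14 / (N + 1) := by
  rcases isEmpty_or_nonempty (Fin M) with hM | hM
  · exact ⟨isEmptyElim, isEmptyElim⟩
  obtain ⟨j₀, hA⟩ := Finite.exists_max fun j => |α (0, j)|
  obtain ⟨⟨j₁, k₁⟩, hB⟩ := Finite.exists_max fun p : Fin M × Fin 3 => |α (p.2.succ, p.1)|
  simp only [Prod.forall] at hB
  have h0 := abs_coeff_zero_le hN hx hsep hu hα hA hB (abs_nonneg _) (abs_nonneg _) j₀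
  have h1 := mul_abs_coeff_succ_le hN hx hsep hα hA hB (abs_nonneg _) (abs_nonneg _) k₁ j₁
  refine ⟨fun j => (hA j).trans ?_, fun j k => (hB j k).trans ?_⟩
  · linarith
  · rw [le_div_iff₀' (by positivity)]
    linarith

end Coefficients

section Certificate

variable {N M : ℕ} {x : Fin M → Mat3} {z : Mat3}

lemma abs_kernel_near_le (hN : 20 ≤ N) {t : ℝ} (h1 : π / 2 ≤ (N + 1) * t)
    (h2 : (N + 1) * t ≤ 8) :
    1.004 * |kernel N t| + 0.245 / (N + 1) * |kernelDeriv N t| ≤ 0.98 := by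
  obtain ⟨hm0, hm1⟩ := weightMoment_two_mem_Icc hN
  have hupper := kernel_le hN t
  have hlower := le_kernel hN t
  have hderiv := abs_kernelDeriv_le hN t
  set τ : ℝ := (N + 1) * t
  have hτ : 1.57 ≤ τ := by linarith [Real.pi_gt_d2]
  have hτ1 : 1.57 ^ 2 ≤ τ ^ 2 := by gcongr
  have hτ2 : τ ^ 2 ≤ 8 ^ 2 := by gcongr
  have hupper' : kernel N t ≤ 0.941 - 0.0025 * τ ^ 2 := by
    have hquad : τ ^ 4 ≤ (1.57 ^ 2 + 8 ^ 2) * τ ^ 2 - 1.57 ^ 2 * 8 ^ 2 := by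
      linarith [mul_nonneg (sub_nonneg.2 hτ1) (sub_nonneg.2 hτ2)]
    linarith [mul_le_mul_of_nonneg_right hm0 (sq_nonneg τ)]
  have hlower' : -0.78 ≤ kernel N t := by
    linarith [mul_le_mul_of_nonneg_right hm1 (sq_nonneg τ)]
  have hderiv' : 0.245 / ((N : ℝ) + 1) * |kernelDeriv N t| ≤ 0.0137 * τ := by
    rw [abs_of_nonneg (by linarith : 0 ≤ τ)] at hderiv
    calc 0.245 / ((N : ℝ) + 1) * |kernelDeriv N t|
        ≤ 0.245 / (N + 1) * ((N + 1) * (0.0556 * τ)) := by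
          gcongr
          exact hderiv.trans (by gcongr)
      _ = 0.245 * 0.0556 * τ := by field_simp
      _ ≤ 0.0137 * τ := by
          gcongr
          norm_num
  rcases abs_cases (kernel N t) with ⟨h, -⟩ | ⟨h, -⟩ <;> rw [h]
  · linarith [sq_nonneg (τ - 2.7)]
  · linarith

lemma le_two_mul_abs_sin_half (hN : 20 ≤ N) {t : ℝ} (h1 : 8 ≤ (N + 1) * t) (h2 : t ≤ π) :
    7.9 ≤ 2 * (N + 1) * |Real.sin (t / 2)| := by
  have hN' : (21 : ℝ) ≤ N + 1 := by
    have : (20 : ℝ) ≤ N := by exact_mod_cast hN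
    linarith
  have hpos : 0 ≤ 4 / ((N : ℝ) + 1) := by positivity
  have ht : 4 / ((N : ℝ) + 1) ≤ t / 2 := by
    rw [div_le_iff₀ (by positivity)]
    linarith
  calc (7.9 : ℝ) ≤ 8 - 64 / 3 / 21 ^ 2 := by norm_num
    _ ≤ 8 - 64 / 3 / (N + 1) ^ 2 := by gcongr
    _ = 2 * (N + 1) * (4 / (N + 1) - (4 / (N + 1)) ^ 3 / 6) := by
        field_simp
        ring
    _ ≤ 2 * (N + 1) * |Real.sin (t / 2)| := by
        gcongr
        exact (Real.sin_ge_sub_cube hpos).trans <| (Real.sin_le_sin_of_le_of_le_pi_div_two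
          (by linarith [Real.pi_pos]) (by linarith) ht).trans (le_abs_self _)

lemma abs_kernel_far_le (hN : 20 ≤ N) {t : ℝ} (h1 : 8 ≤ (N + 1) * t) (h2 : t ≤ π) :
    1.004 * |kernel N t| + 0.245 / (N + 1) * |kernelDeriv N t| ≤ 0.6 := by
  have hpos : (0 : ℝ) < N + 1 := by positivity
  have hbase : (7.9 : ℝ) ^ 8 ≤ (2 * (N + 1) * |Real.sin (t / 2)|) ^ 8 := by
    gcongr
    exact le_two_mul_abs_sin_half hN h1 h2
  have hkernel := (mul_le_mul_of_nonneg_right hbase (abs_nonneg _)).trans (kernel_decay hN t)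
  have hderiv := (mul_le_mul_of_nonneg_right hbase (abs_nonneg _)).trans (kernelDeriv_decay hN t)
  rw [← div_le_iff₀ hpos, mul_div_assoc] at hderiv
  rw [div_mul_eq_mul_div, mul_div_assoc]
  norm_num at hkernel hderiv ⊢
  linarith

lemma certificate_le (hN : 20 ≤ N) (hx : ∀ a, IsSO3 (x a))
    (hsep : AngleSeparated (36 / ((N : ℝ) + 1)) x) {α : Fin 4 × Fin M → ℝ}
    (hα0 : ∀ j, |α (0, j)| ≤ 1.004) (hα1 : ∀ j (k : Fin 3), |α (k.succ, j)| ≤ 0.14 / (N + 1))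
    (hz : IsSO3 z) (j₀ : Fin M) {v D : ℝ} (hv : 0 < v)
    (hfar : ∀ j, j ≠ j₀ → v * sepRadius N ≤ quatDist z (x j)) (hD : 5168000 * decayConst v ≤ D) :
    |∑ j, (α (0, j) * sigmaK 8 N z (x j) + ∑ k : Fin 3, α (k.succ, j) * Xy k (sigmaK 8 N) z (x j))|
      ≤ 1.004 * |kernel N (rotAngle ((x j₀)⁻¹ * z))| +
        0.245 / (N + 1) * |kernelDeriv N (rotAngle ((x j₀)⁻¹ * z))| + 1.494 * D := by
  have hB : (0 : ℝ) ≤ 0.14 / (N + 1) := by positivity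
  have hothers := sum_mul_abs_kernel_add_le hN (Finset.univ.erase j₀) hx hsep (A := 1.004)
    (by norm_num) hB hz hv (fun j hj => hfar j (Finset.ne_of_mem_erase hj)) hD
  have hterm (j : Fin M) : |α (0, j) * sigmaK 8 N z (x j) +
      ∑ k : Fin 3, α (k.succ, j) * Xy k (sigmaK 8 N) z (x j)| ≤
      1.004 * |kernel N (rotAngle ((x j)⁻¹ * z))| +
        0.14 / (N + 1) * (7 / 4 * |kernelDeriv N (rotAngle ((x j)⁻¹ * z))|) := by
    rw [← sigmaK_eq_kernel]
    exact (abs_mul_add_sum_mul_le (hα0 j) (hα1 j)).trans (add_le_add_right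
      (mul_le_mul_of_nonneg_left (sum_abs_Xy_le hz (hx j)) hB) _)
  rw [mul_div_cancel₀ _ (by positivity)] at hothers
  refine (Finset.abs_sum_le_sum_abs _ _).trans ((Finset.sum_le_sum fun j _ => hterm j).trans ?_)
  rw [← Finset.add_sum_erase _ _ (Finset.mem_univ j₀)]
  linear_combination hothers

lemma three_halves_mul_sepRadius_le_quatDist (hN : 20 ≤ N) {x₀ x₁ : Mat3} (h₀ : IsSO3 x₀)
    (h₁ : IsSO3 x₁) (hz : IsSO3 z) (hsep : 36 / ((N : ℝ) + 1) ≤ rotAngle (x₀⁻¹ * x₁))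
    (hnear : (N + 1) * rotAngle (x₀⁻¹ * z) ≤ 8) : 3 / 2 * sepRadius N ≤ quatDist z x₁ := by
  have hpos : (0 : ℝ) < N + 1 := by positivity
  have hangle : rotAngle (x₀⁻¹ * z) ≤ sepRadius N :=
    le_of_mul_le_mul_left (by linarith [le_mul_sepRadius hN]) hpos
  have hdist : quatDist z x₀ ≤ 2 * (rotAngle (x₀⁻¹ * z) / 4) :=
    mul_le_mul_of_nonneg_left (Real.sin_le (by linarith [rotAngle_nonneg (x₀⁻¹ * z)])) zero_le_two
  linarith [two_mul_sepRadius_le_quatDist hsep, quatDist_triangle h₁ h₀ hz]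

lemma sepRadius_le_quatDist {x₀ x₁ : Mat3} (h₀ : IsSO3 x₀) (h₁ : IsSO3 x₁) (hz : IsSO3 z)
    (hsep : 36 / ((N : ℝ) + 1) ≤ rotAngle (x₀⁻¹ * x₁))
    (hle : rotAngle (x₀⁻¹ * z) ≤ rotAngle (x₁⁻¹ * z)) : sepRadius N ≤ quatDist z x₁ := by
  have hdist : quatDist z x₀ ≤ quatDist z x₁ := two_mul_sin_le_quatDist (rotAngle_nonneg _) hle
  linarith [two_mul_sepRadius_le_quatDist hsep, quatDist_triangle h₁ h₀ hz]

end Certificate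

end DualCertificate

open DualCertificate

theorem dual_certificate_bound_away_from_interpolation_points_general {N : ℕ} (hN : 20 ≤ N)
    {M : ℕ} {x : Fin M → Mat3} (hx : ∀ a, IsSO3 (x a))
    (hsep : AngleSeparated (36 / ((N : ℝ) + 1)) x) {u : Fin M → ℝ} (hu : ∀ i, |u i| ≤ 1)
    {α : Fin 4 × Fin M → ℝ} (hα : (Kmat 8 N x).mulVec α = rhsVec u) {z : Mat3} (hz : IsSO3 z)
    (hfar : ∀ m, π / (2 * ((N : ℝ) + 1)) ≤ rotAngle ((x m)⁻¹ * z)) :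
    |∑ j, (α (0, j) * sigmaK 8 N z (x j)
        + ∑ k : Fin 3, α (k.succ, j) * Xy k (sigmaK 8 N) z (x j))| < 1 := by
  rcases isEmpty_or_nonempty (Fin M) with hM | hM
  · simp
  obtain ⟨hα0, hα1⟩ := coeff_bounds hN hx hsep hu hα
  obtain ⟨j₀, hj₀⟩ := Finite.exists_min fun j => rotAngle ((x j)⁻¹ * z)
  rcases le_total ((N + 1) * rotAngle ((x j₀)⁻¹ * z)) 8 with hnear | haway
  · have hcert := certificate_le hN hx hsep hα0 hα1 hz j₀ (v := 3 / 2) (by norm_num)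
      (fun j hj => three_halves_mul_sepRadius_le_quatDist hN (hx j₀) (hx j) hz (hsep j j₀ hj) hnear)
      decayConst_three_halves_le
    have hlow : π / 2 ≤ (N + 1) * rotAngle ((x j₀)⁻¹ * z) := by
      rw [← div_le_iff₀' (by positivity), div_div]
      exact hfar j₀
    linarith [abs_kernel_near_le hN hlow hnear]
  · have hcert := certificate_le hN hx hsep hα0 hα1 hz j₀ one_pos
      (fun j hj => by simpa using sepRadius_le_quatDist (hx j₀) (hx j) hz (hsep j j₀ hj) (hj₀ j))
      decayConst_one_le
    linarith [abs_kernel_far_le hN haway (rotAngle_le_pi _)]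

theorem dual_certificate_bound_away_from_interpolation_points
    (N : ℕ) (hN : 20 ≤ N)
    (M : ℕ) (x : Fin M → Mat3) (hx : ∀ a, IsSO3 (x a)) (hinj : Function.Injective x)
    (hsep : ∀ a b, a ≠ b → 36 / ((N : ℝ) + 1) ≤ rotAngle ((x b)⁻¹ * (x a)))
    (u : Fin M → ℝ) (hu : ∀ i, u i = 1 ∨ u i = -1)
    (α : Fin 4 × Fin M → ℝ) (hα : (Kmat 8 N x).mulVec α = rhsVec u)
    (z : Mat3) (hz : IsSO3 z) 
    (hfar : ∀ m : Fin M, π / (2 * ((N : ℝ) + 1)) ≤ rotAngle ((x m)⁻¹ * z)) :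
    |∑ j, (α (0, j) * sigmaK 8 N z (x j)
        + ∑ k : Fin 3, α (k.succ, j) * Xy k (sigmaK 8 N) z (x j))| < 1 :=
  dual_certificate_bound_away_from_interpolation_points_general hN hx hsep
    (fun i => ((abs_eq zero_le_one).2 (hu i)).le) hα hz hfar
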